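/- arXiv:1004.5239 — 6 statements merged into one kernel-verified Lean document; each statement's English description precedes it below -/
import Mathlib

section
/- There exists a uniquely divisible group G with the following property: for every finite word w in the alphabet {X,A}, if for all but finitely many primes p the equation P_w(x^2,y^2) = 0 has a solution (x_p, y_p) with both coordinates nonzero elements of Z/pZ, then there exist elements A, B, B' in G such that the word equation w(X,A) = B has no solution X in G, and the word equation w(X,A) = B' has at least two distinct solutions X in G. -/
/-- A group is *uniquely divisible* if every element has a unique `m`-th root
for each positive integer `m`. -/
def UniquelyDivisible (G : Type*) [Group G] : Prop :=
  ∀ (b : G) (m : ℕ), 0 < m → ∃! x : G, x ^ m = b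

/-- Evaluation of a word in the alphabet `{X, A}` (encoded as a `List Bool`,
with `true` standing for the letter `X` and `false` for the letter `A`)
at elements `x` (for `X`) and `a` (for `A`) of a monoid. -/
def wordEval {M : Type*} [Monoid M] (w : List Bool) (x a : M) : M :=
  (w.map fun c => if c then x else a).prod

/-- The word polynomial `P_w ∈ ℤ[x,y]`: for
`w = A^{a_0} X A^{a_1} X ⋯ A^{a_{n-1}} X A^{a_n}` it is
`∑_{k=0}^{n-1} x^k y^{a_0 + ⋯ + a_k}`, where `x = X 0`, `y = X 1`. -/
noncomputable def wordPoly : List Bool → MvPolynomial (Fin 2) ℤ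
  | [] => 0
  | true :: w => MvPolynomial.X 0 * wordPoly w + 1
  | false :: w => MvPolynomial.X 1 * wordPoly w

/-!
Let `F` be a finite field, and let `S` be the group of affine maps `z ↦ u z + t` of `F` with `u` a
nonzero square. The word map `X ↦ w(X, A)` for `A = (z ↦ v z)` sends `z ↦ u z + t` to a map with
translation part `t * P_w(u, v)`. So a zero `(u, v) = (x², y²)` of `P_w` makes it non-injective,
hence non-surjective because `S` is finite. For `F = ZMod p` the order of `S` is `p (p - 1) / 2`,
which is coprime to `m` as soon as `2 m ∣ p + 1`. In a reduced product of these groups along a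
filter on the primes that tends to `-1` in the profinite integers, `m`-th powers are therefore
bijective for every `m > 0`, while the failures of injectivity and surjectivity of the word maps
persist.
-/

open Filter Function

section WordEval

variable {M N : Type*} [Monoid M] [Monoid N]

theorem wordEval_cons (b : Bool) (w : List Bool) (x a : M) :
    wordEval (b :: w) x a = (if b then x else a) * wordEval w x a := by
  simp [wordEval]

theorem map_wordEval (f : M →* N) (w : List Bool) (x a : M) :
    f (wordEval w x a) = wordEval w (f x) (f a) := by
  simp only [wordEval, map_list_prod, List.map_map, comp_def, apply_ite f]

theorem wordEval_pi_apply {ι : Type*} {G : ι → Type*} [∀ i, Monoid (G i)] (w : List Bool)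
    (x a : ∀ i, G i) (i : ι) : wordEval w x a i = wordEval w (x i) (a i) :=
  map_wordEval (Pi.evalMonoidHom G i) w x a

end WordEval

theorem uniquelyDivisible_iff_bijective_pow {G : Type*} [Group G] :
    UniquelyDivisible G ↔ ∀ m : ℕ, 0 < m → Bijective fun x : G ↦ x ^ m := by
  simp only [UniquelyDivisible, bijective_iff_existsUnique]
  exact ⟨fun h m hm b ↦ h b m hm, fun h b m hm ↦ h m hm b⟩

section ReducedProduct

variable {ι : Type*} {l : Filter ι} {G : ι → Type*} [∀ i, Group (G i)]

variable (l G) in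
/-- The subgroup of families that are trivial along the filter `l`, by which the product is divided
to form a reduced product. -/
def eventuallyOneSubgroup : Subgroup (∀ i, G i) where
  carrier := {f | ∀ᶠ i in l, f i = 1}
  one_mem' := .of_forall fun _ ↦ rfl
  mul_mem' hf hg := by
    filter_upwards [hf, hg] with i hfi hgi
    rw [Pi.mul_apply, hfi, hgi, one_mul]
  inv_mem' hf := by
    filter_upwards [hf] with i hfi
    rw [Pi.inv_apply, hfi, inv_one]

instance eventuallyOneSubgroup_normal : (eventuallyOneSubgroup l G).Normal where
  conj_mem f hf g := by
    filter_upwards [hf] with i hfi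
    simp only [Pi.mul_apply, Pi.inv_apply, hfi, mul_one, mul_inv_cancel]

variable (l G) in
/-- The reduced product of the groups `G i` along the filter `l`. It is a group quotient because
`Filter.Product` carries no group structure. -/
abbrev ReducedProduct : Type _ := (∀ i, G i) ⧸ eventuallyOneSubgroup l G

namespace ReducedProduct

theorem mk_eq_mk_iff {x y : ∀ i, G i} :
    (x : ReducedProduct l G) = y ↔ ∀ᶠ i in l, x i = y i := by
  rw [QuotientGroup.eq]
  exact eventually_congr (.of_forall fun _ ↦ inv_mul_eq_one)

theorem wordEval_mk (w : List Bool) (x a : ∀ i, G i) :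
    wordEval w (x : ReducedProduct l G) a =
      ((fun i ↦ wordEval w (x i) (a i) : ∀ i, G i) : ReducedProduct l G) := by
  rw [← funext (wordEval_pi_apply w x a)]
  exact (map_wordEval (QuotientGroup.mk' _) w x a).symm

section CoordinatewiseMap

variable {f : ∀ i, G i → G i} {F : ReducedProduct l G → ReducedProduct l G}

theorem injective_iff_eventually
    (hF : ∀ x : ∀ i, G i, F x = ((fun i ↦ f i (x i) : ∀ i, G i) : ReducedProduct l G)) :
    Injective F ↔ ∀ᶠ i in l, Injective (f i) := by
  constructor
  · intro hinj
    have collision (i : ι) : ∃ x y, f i x = f i y ∧ (x = y → Injective (f i)) := by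
      by_cases hi : Injective (f i)
      · exact ⟨1, 1, rfl, fun _ ↦ hi⟩
      · obtain ⟨x, y, hxy, hne⟩ := not_injective_iff.mp hi
        exact ⟨x, y, hxy, fun h ↦ absurd h hne⟩
    choose x y hxy hinj_of_eq using collision
    have hmk : (x : ReducedProduct l G) = y :=
      hinj (by rw [hF, hF, funext hxy])
    exact (mk_eq_mk_iff.mp hmk).mono hinj_of_eq
  · intro hf x y hxy
    obtain ⟨x, rfl⟩ := QuotientGroup.mk_surjective x
    obtain ⟨y, rfl⟩ := QuotientGroup.mk_surjective y
    rw [hF, hF, mk_eq_mk_iff] at hxy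
    rw [mk_eq_mk_iff]
    filter_upwards [hf, hxy] with i hfi hi using hfi hi

theorem surjective_iff_eventually
    (hF : ∀ x : ∀ i, G i, F x = ((fun i ↦ f i (x i) : ∀ i, G i) : ReducedProduct l G)) :
    Surjective F ↔ ∀ᶠ i in l, Surjective (f i) := by
  constructor
  · intro hsurj
    have witness (i : ι) : ∃ b, (∃ x, f i x = b) → Surjective (f i) := by
      by_cases hi : Surjective (f i)
      · exact ⟨1, fun _ ↦ hi⟩
      · obtain ⟨b, hb⟩ := not_forall.mp hi
        exact ⟨b, fun h ↦ absurd h hb⟩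
    choose b hb using witness
    obtain ⟨x, hx⟩ := hsurj b
    obtain ⟨x, rfl⟩ := QuotientGroup.mk_surjective x
    rw [hF, mk_eq_mk_iff] at hx
    exact hx.mono fun i hi ↦ hb i ⟨x i, hi⟩
  · intro hf b
    obtain ⟨b, rfl⟩ := QuotientGroup.mk_surjective b
    refine ⟨((fun i ↦ invFun (f i) (b i) : ∀ i, G i) : ReducedProduct l G), ?_⟩
    rw [hF, mk_eq_mk_iff]
    filter_upwards [hf] with i hfi using invFun_eq (hfi (b i))

end CoordinatewiseMap

theorem uniquelyDivisible
    (h : ∀ m : ℕ, 0 < m → ∀ᶠ i in l, Bijective fun x : G i ↦ x ^ m) :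
    UniquelyDivisible (ReducedProduct l G) := by
  refine uniquelyDivisible_iff_bijective_pow.mpr fun m hm ↦ ⟨?_, ?_⟩
  · exact (injective_iff_eventually fun _ ↦ rfl).mpr ((h m hm).mono fun _ hi ↦ hi.injective)
  · exact (surjective_iff_eventually fun _ ↦ rfl).mpr ((h m hm).mono fun _ hi ↦ hi.surjective)

theorem exists_not_injective_not_surjective_wordEval [∀ i, Finite (G i)] {w : List Bool}
    (h : ∃ᶠ i in l, ∃ a : G i, ¬ Injective fun x ↦ wordEval w x a) :
    ∃ a : ReducedProduct l G, (¬ Injective fun x ↦ wordEval w x a) ∧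
      ¬ Surjective fun x ↦ wordEval w x a := by
  let a (i : ι) : G i := Classical.epsilon fun a ↦ ¬ Injective fun x ↦ wordEval w x a
  have ha : ∃ᶠ i in l, ¬ Injective fun x ↦ wordEval w x (a i) :=
    h.mono fun _ hi ↦ Classical.epsilon_spec hi
  refine ⟨a, fun hinj ↦ ha ?_, fun hsurj ↦ ha ?_⟩
  · simpa only [not_not] using
      (injective_iff_eventually (f := fun i x ↦ wordEval w x (a i)) (wordEval_mk w · a)).mp hinj
  · simpa only [not_not, Finite.injective_iff_surjective] using
      (surjective_iff_eventually (f := fun i x ↦ wordEval w x (a i)) (wordEval_mk w · a)).mp hsurj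

end ReducedProduct

end ReducedProduct

section AffineGroup

variable {R : Type*} [CommRing R]

/-- The group of affine maps `z ↦ u z + t` of `R` with `u` in the group of units `H`, encoded as the
pair `⟨t, u⟩`. -/
abbrev AffineGroup (H : Subgroup Rˣ) : Type _ :=
  Multiplicative R ⋊[(MulAutMultiplicative R).symm.toMonoidHom.comp
    (AddAut.mulLeft.comp H.subtype)] H

namespace AffineGroup

open Multiplicative MvPolynomial

variable {H : Subgroup Rˣ}

instance [Finite R] : Finite (AffineGroup H) :=
  Finite.of_equiv (Multiplicative R × H) SemidirectProduct.equivProd.symm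

theorem mk_ofAdd_mul_mk_ofAdd (s t : R) (u v : H) :
    (⟨ofAdd s, u⟩ * ⟨ofAdd t, v⟩ : AffineGroup H) = ⟨ofAdd (s + ((u : Rˣ) : R) * t), u * v⟩ :=
  rfl

theorem wordEval_mk (w : List Bool) (t : R) (u v : H) :
    wordEval w (⟨ofAdd t, u⟩ : AffineGroup H) ⟨ofAdd 0, v⟩ =
      ⟨ofAdd (t * aeval ![((u : Rˣ) : R), ((v : Rˣ) : R)] (wordPoly w)), wordEval w u v⟩ := by
  induction w with
  | nil =>
    rw [wordPoly, map_zero (aeval _), mul_zero]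
    rfl
  | cons b w ih =>
    rw [wordEval_cons, wordEval_cons, ih]
    cases b <;>
      simp only [Bool.false_eq_true, ite_true, ite_false, mk_ofAdd_mul_mk_ofAdd, wordPoly, map_add,
        map_mul, map_one, aeval_X, Matrix.cons_val_zero, Matrix.cons_val_one] <;>
      ring_nf

theorem not_injective_wordEval [Nontrivial R] {w : List Bool} {u v : H}
    (h : aeval ![((u : Rˣ) : R), ((v : Rˣ) : R)] (wordPoly w) = 0) :
    ¬ Injective fun X : AffineGroup H ↦ wordEval w X ⟨ofAdd 0, v⟩ := by
  intro hinj
  have heq : (⟨ofAdd 0, u⟩ : AffineGroup H) = ⟨ofAdd 1, u⟩ :=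
    hinj (by simp only [wordEval_mk, h, mul_zero])
  exact zero_ne_one (congrArg (fun g ↦ g.left.toAdd) heq)

end AffineGroup

end AffineGroup

section Squares

theorem card_square_of_isCyclic {C : Type*} [CommGroup C] [IsCyclic C] [Finite C] :
    Nat.card (Subgroup.square C) = Nat.card C / (Nat.card C).gcd 2 := by
  have hrange : Subgroup.square C = (powMonoidHom 2 : C →* C).range := by
    ext c
    simp [isSquare_iff_exists_sq, eq_comm]
  rw [hrange, IsCyclic.card_powMonoidHom_range]

variable {F : Type*} [Field F]

theorem exists_not_injective_wordEval_affineGroup_square {w : List Bool}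
    (h : ∃ x y : F, x ≠ 0 ∧ y ≠ 0 ∧ MvPolynomial.aeval ![x ^ 2, y ^ 2] (wordPoly w) = 0) :
    ∃ A, ¬ Injective fun X : AffineGroup (Subgroup.square Fˣ) ↦ wordEval w X A := by
  obtain ⟨x, y, hx, hy, hxy⟩ := h
  let u : Subgroup.square Fˣ := ⟨Units.mk0 x hx ^ 2, .sq _⟩
  let v : Subgroup.square Fˣ := ⟨Units.mk0 y hy ^ 2, .sq _⟩
  exact ⟨⟨.ofAdd 0, v⟩, AffineGroup.not_injective_wordEval (u := u) hxy⟩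

theorem coprime_card_affineGroup_square [Finite F] {m : ℕ} (hm : 2 * m ∣ Nat.card F + 1) :
    (Nat.card (AffineGroup (Subgroup.square Fˣ))).Coprime m := by
  have coprime_of_dvd_succ {a : ℕ} (ha : m ∣ a + 1) : a.Coprime m :=
    (Nat.coprime_self_add_right.mpr (Nat.coprime_one_right a)).coprime_dvd_right ha
  obtain ⟨k, hk⟩ := hm
  rw [mul_assoc] at hk
  have hgcd : (Nat.card F - 1).gcd 2 = 2 := Nat.gcd_eq_right (by omega)
  rw [SemidirectProduct.card, card_square_of_isCyclic, Nat.card_units, hgcd]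
  refine .mul_left (coprime_of_dvd_succ ?_) (coprime_of_dvd_succ ?_)
  · exact hk ▸ (Nat.dvd_mul_right m k).mul_left 2
  · have : 1 < Nat.card F := Finite.one_lt_card
    exact (show (Nat.card F - 1) / 2 + 1 = m * k by omega) ▸ Nat.dvd_mul_right m k

end Squares

section Primes

/-- The filter of primes tending to `-1` in the profinite integers, with basis the sets of primes
congruent to `-1` modulo `m`, for `m > 0`. -/
def primesNearNegOne : Filter Nat.Primes :=
  ⨅ (m : ℕ) (_ : 0 < m), 𝓟 {p : Nat.Primes | m ∣ p + 1}

theorem hasBasis_primesNearNegOne :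
    primesNearNegOne.HasBasis (fun m : ℕ ↦ 0 < m) fun m ↦ {p : Nat.Primes | m ∣ p + 1} := by
  refine hasBasis_biInf_principal' (fun m hm n hn ↦ ⟨m * n, Nat.mul_pos hm hn, ?_, ?_⟩) ⟨1, one_pos⟩
  · exact fun p hp ↦ (Nat.dvd_mul_right m n).trans hp
  · exact fun p hp ↦ (Nat.dvd_mul_left n m).trans hp

theorem exists_prime_dvd_add_one_of_finite {P : ℕ → Prop} (hP : {p : ℕ | p.Prime ∧ ¬ P p}.Finite)
    {m : ℕ} (hm : 0 < m) : ∃ p : ℕ, p.Prime ∧ m ∣ p + 1 ∧ P p := by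
  have : NeZero m := ⟨hm.ne'⟩
  have hinf : {p : ℕ | p.Prime ∧ (p : ZMod m) = -1}.Infinite :=
    Nat.infinite_setOfPred_prime_and_eq_mod isUnit_one.neg
  obtain ⟨p, ⟨hp, hpm⟩, hPp⟩ := (hinf.sdiff hP).nonempty
  refine ⟨p, hp, ?_, by_contra fun h ↦ hPp ⟨hp, h⟩⟩
  rw [← ZMod.natCast_eq_zero_iff, Nat.cast_succ, hpm, neg_add_cancel]

end Primes

theorem stmt0_general :
    ∃ (G : Type) (_ : Group G), UniquelyDivisible G ∧
      ∀ w : List Bool,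
        (∀ m : ℕ, 0 < m → ∃ p : ℕ, p.Prime ∧ m ∣ p + 1 ∧ ∃ x y : ZMod p, x ≠ 0 ∧ y ≠ 0 ∧
            MvPolynomial.aeval ![x ^ 2, y ^ 2] (wordPoly w) = 0) →
        ∃ A B B' : G,
          (¬ ∃ X : G, wordEval w X A = B) ∧
          (∃ X Y : G, X ≠ Y ∧ wordEval w X A = B' ∧ wordEval w Y A = B') := by
  have (p : Nat.Primes) : Fact (p : ℕ).Prime := ⟨p.2⟩
  refine ⟨ReducedProduct primesNearNegOne fun p ↦ AffineGroup (Subgroup.square (ZMod p)ˣ),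
    inferInstance, ReducedProduct.uniquelyDivisible fun m hm ↦ ?_, fun w hw ↦ ?_⟩
  · filter_upwards [hasBasis_primesNearNegOne.mem_of_mem (i := 2 * m) (by positivity)] with p hp
    exact (coprime_card_affineGroup_square (by rwa [Nat.card_zmod])).pow_left_bijective
  · have hfreq : ∃ᶠ p : Nat.Primes in primesNearNegOne,
        ∃ A, ¬ Injective fun X : AffineGroup (Subgroup.square (ZMod p)ˣ) ↦ wordEval w X A := by
      refine hasBasis_primesNearNegOne.frequently_iff.mpr fun m hm ↦ ?_
      obtain ⟨p, hp, hmp, hroot⟩ := hw m hm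
      have := Fact.mk hp
      exact ⟨⟨p, hp⟩, hmp, exists_not_injective_wordEval_affineGroup_square hroot⟩
    obtain ⟨A, hinj, hsurj⟩ :=
      ReducedProduct.exists_not_injective_not_surjective_wordEval hfreq
    obtain ⟨B, hB⟩ := not_forall.mp hsurj
    obtain ⟨X, Y, hXY, hne⟩ := not_injective_iff.mp hinj
    exact ⟨A, B, wordEval w Y A, hB, X, Y, hne, hXY, rfl⟩

theorem stmt0 :
    ∃ (G : Type) (_ : Group G), UniquelyDivisible G ∧
      ∀ w : List Bool,
        {p : ℕ | p.Prime ∧ ¬ ∃ x y : ZMod p, x ≠ 0 ∧ y ≠ 0 ∧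
            MvPolynomial.aeval ![x ^ 2, y ^ 2] (wordPoly w) = 0}.Finite →
        ∃ A B B' : G,
          (¬ ∃ X : G, wordEval w X A = B) ∧
          (∃ X Y : G, X ≠ Y ∧ wordEval w X A = B' ∧ wordEval w Y A = B') := by
  obtain ⟨G, _, hG, h⟩ := stmt0_general
  exact ⟨G, _, hG, fun w hw ↦ h w fun _ ↦ exists_prime_dvd_add_one_of_finite hw⟩
end

section
/- Let G be a uniquely divisible group and let w be a totally decomposable word in the alphabet {X,A}. Then for all a, b in G, the equation w(x,a) = b has a unique solution x in G, and this solution lies in the radical subgroup of G generated by {a,b}. -/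
/-- A word is *totally decomposable* if it is the image of the letter `X`
under a composition of the maps `π_{m,k} : v ↦ (v A^k)^m v` (for `m ≥ 1`, `k ≥ 0`),
`r : v ↦ v A`, and `l : v ↦ A v`. -/
inductive TotallyDecomposable : List Bool → Prop
  | base : TotallyDecomposable [true]
  | pi (m k : ℕ) (hm : 1 ≤ m) {v : List Bool} (hv : TotallyDecomposable v) :
      TotallyDecomposable ((List.replicate m (v ++ List.replicate k false)).flatten ++ v)
  | r {v : List Bool} (hv : TotallyDecomposable v) : TotallyDecomposable (v ++ [false])
  | l {v : List Bool} (hv : TotallyDecomposable v) : TotallyDecomposable (false :: v)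

/-- A subgroup `R` of `G` is *radical* if `x ^ m ∈ R` implies `x ∈ R`
for every `x ∈ G` and every positive integer `m`. -/
def IsRadicalSubgroup {G : Type*} [Group G] (R : Subgroup G) : Prop :=
  ∀ (x : G) (m : ℕ), 0 < m → x ^ m ∈ R → x ∈ R

/-!
Right multiplication by `a ^ k` turns the operation `π_{m,k}` into a power: the word
`w = (v A^k)^m v` satisfies `w A^k = (v A^k)^(m+1)`. Thus each of `π_{m,k}`, `r` and `l` changes
the evaluation map `x ↦ w(x, a)` only by composition with translations by powers of `a` and
with power maps. All of these are bijections of a uniquely divisible group, and a radical subgroup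
containing `a` contains a point as soon as it contains its image under one of them.
-/

section Evaluation

variable {M : Type*} [Monoid M]

theorem wordEval_singleton_true (x a : M) : wordEval [true] x a = x := by
  simp [wordEval]

theorem wordEval_cons_false (w : List Bool) (x a : M) :
    wordEval (false :: w) x a = a * wordEval w x a := by
  simp [wordEval]

theorem wordEval_append (u v : List Bool) (x a : M) :
    wordEval (u ++ v) x a = wordEval u x a * wordEval v x a := by
  simp [wordEval]

theorem wordEval_replicate_false (k : ℕ) (x a : M) :
    wordEval (List.replicate k false) x a = a ^ k := by
  simp [wordEval]

theorem wordEval_append_false (w : List Bool) (x a : M) :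
    wordEval (w ++ [false]) x a = wordEval w x a * a := by
  simp [wordEval]

theorem wordEval_flatten_replicate (m : ℕ) (w : List Bool) (x a : M) :
    wordEval (List.replicate m w).flatten x a = wordEval w x a ^ m := by
  simp [wordEval, List.map_flatten, List.prod_flatten]

theorem wordEval_pi_mul_pow (m k : ℕ) (v : List Bool) (x a : M) :
    wordEval ((List.replicate m (v ++ List.replicate k false)).flatten ++ v) x a * a ^ k =
      (wordEval v x a * a ^ k) ^ (m + 1) := by
  rw [wordEval_append, wordEval_flatten_replicate, wordEval_append, wordEval_replicate_false,
    mul_assoc, ← pow_succ]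

end Evaluation

section Group

variable {G : Type*} [Group G]

theorem UniquelyDivisible.pow_bijective (hG : UniquelyDivisible G) {m : ℕ} (hm : 0 < m) :
    Function.Bijective fun x : G => x ^ m :=
  (Function.bijective_iff_existsUnique _).2 fun b => hG b m hm

namespace TotallyDecomposable

variable {w : List Bool}

theorem wordEval_bijective (hw : TotallyDecomposable w) (hG : UniquelyDivisible G) (a : G) :
    Function.Bijective fun x : G => wordEval w x a := by
  induction hw with
  | base =>
    simp only [wordEval_singleton_true]
    exact Function.bijective_id
  | pi m k _ _ ih =>
    rw [← (Group.mulRight_bijective (a ^ k)).of_comp_iff']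
    simpa only [Function.comp_def, wordEval_pi_mul_pow] using
      (hG.pow_bijective m.succ_pos).comp ((Group.mulRight_bijective (a ^ k)).comp ih)
  | r _ ih =>
    simpa only [Function.comp_def, wordEval_append_false] using
      (Group.mulRight_bijective a).comp ih
  | l _ ih =>
    simpa only [Function.comp_def, wordEval_cons_false] using
      (Group.mulLeft_bijective a).comp ih

theorem mem_of_wordEval_mem (hw : TotallyDecomposable w) {R : Subgroup G}
    (hR : IsRadicalSubgroup R) {x a : G} (ha : a ∈ R) (hx : wordEval w x a ∈ R) : x ∈ R := by
  induction hw with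
  | base => rwa [wordEval_singleton_true] at hx
  | @pi m k _ v _ ih =>
    have hak : a ^ k ∈ R := R.pow_mem ha k
    have h_pow : (wordEval v x a * a ^ k) ^ (m + 1) ∈ R :=
      wordEval_pi_mul_pow m k v x a ▸ R.mul_mem hx hak
    exact ih ((R.mul_mem_cancel_right hak).1 (hR _ _ m.succ_pos h_pow))
  | r _ ih =>
    rw [wordEval_append_false, R.mul_mem_cancel_right ha] at hx
    exact ih hx
  | l _ ih =>
    rw [wordEval_cons_false, R.mul_mem_cancel_left ha] at hx
    exact ih hx

end TotallyDecomposable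

end Group

theorem stmt1 {G : Type*} [Group G] (hG : UniquelyDivisible G)
    (w : List Bool) (hw : TotallyDecomposable w) (a b : G) :
    (∃! x : G, wordEval w x a = b) ∧
      ∀ x : G, wordEval w x a = b →
        ∀ R : Subgroup G, a ∈ R → b ∈ R → IsRadicalSubgroup R → x ∈ R := by
  constructor
  · exact (hw.wordEval_bijective hG a).existsUnique b
  · intro x hx R ha hb hR
    exact hw.mem_of_wordEval_mem hR ha (hx ▸ hb)
end

section
/- Suppose F in Z[x,y] satisfies F(0,0) != 0, and F has a factor f in Z[x,y] which is irreducible as an element of C[x,y]. Then for all but finitely many primes p, the equation F(x,y) = 0 has a solution (x_p, y_p) with both coordinates nonzero elements of Z/pZ. -/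
/-!
Let `d` be the degree of `f`. The factorizations of `f` into two polynomials of degree less than `d`
are the solutions of a system of polynomial equations over `ℤ`. It has no solution in characteristic
zero, so by the Nullstellensatz some nonzero integer is a combination of the equations, and `f`
remains absolutely irreducible modulo every prime `p` that does not divide this integer. It then
suffices to show that the number of points of the curve `C : f = 0` over the field with `p` elements
tends to infinity with `p`, because each coordinate axis contains a bounded number of them.

The points are counted by Stepanov's method. After a linear change of coordinates `f` is monic of
degree `d` in `y`, so that, ramified points aside, `d` points of `C` over the algebraic closure lie
above each rational value of `x`, and one has to show that a definite proportion of these is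
rational. If `P` is one of the others, the Frobenius morphism `φ` sends `P` to a different point
with the same `x`-coordinate, so that `(P, φ(P))` lies on the off-diagonal part
`{(P, Q) : x(P) = x(Q), P ≠ Q}` of `C × C`, which has degree only `d - 1` over `C`. By linear
algebra there is a nonzero function `G` on `C × C`, of small degree in the first factor, whose
derivatives of order less than `M` along the first factor vanish on the off-diagonal part. Since the
derivative of `φ` is zero, `P ↦ G(P, φ(P))` vanishes to order `M` at each of the nonrational points.
It is not identically zero, as the degree of `G` in the first factor is small compared with `p`, and
comparing the number of its zeros with its degree bounds the number of nonrational points.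
-/

open MvPolynomial
open scoped TensorProduct

section Specialization

theorem exists_C_mem_of_no_common_zero {ι : Type*} [Finite ι] (K : Type*) [Field K]
    [IsAlgClosed K] [CharZero K] (I : Ideal (MvPolynomial ι ℤ))
    (hI : ∀ x : ι → K, ∃ P ∈ I, aeval x P ≠ 0) : ∃ N : ℤ, N ≠ 0 ∧ C N ∈ I := by
  let _ : Algebra (MvPolynomial ι ℤ) (MvPolynomial ι ℚ) := algebraMvPolynomial
  let Iℚ := I.map (algebraMap (MvPolynomial ι ℤ) (MvPolynomial ι ℚ))
  have hzero : zeroLocus K Iℚ = ∅ := by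
    rw [Set.eq_empty_iff_forall_notMem]
    intro x hx
    obtain ⟨P, hP, hPx⟩ := hI x
    refine hPx ?_
    simpa only [algebraMap_def, aeval_map_algebraMap] using
      mem_zeroLocus_iff.1 hx _ (Ideal.mem_map_of_mem _ hP)
  have htop : Iℚ = ⊤ := by
    rw [← Ideal.radical_eq_top, ← vanishingIdeal_zeroLocus_eq_radical (K := K), hzero,
      vanishingIdeal_empty]
  obtain ⟨⟨⟨P, hP⟩, ⟨_, N, hN, rfl⟩⟩, hPN⟩ := (IsLocalization.mem_map_algebraMap_iff
    ((nonZeroDivisors ℤ).map C) (MvPolynomial ι ℚ)).1 ((Ideal.eq_top_iff_one _).1 htop)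
  refine ⟨N, nonZeroDivisors.ne_zero hN, ?_⟩
  rw [one_mul] at hPN
  rwa [show C N = P from map_injective _ Int.cast_injective hPN]

variable {σ : Type*}

theorem totalDegree_map_le {R R' : Type*} [CommSemiring R] [CommSemiring R'] (φ : R →+* R')
    (f : MvPolynomial σ R) : (map φ f).totalDegree ≤ f.totalDegree :=
  Finset.sup_mono (support_map_subset φ f)

theorem isUnit_of_totalDegree_eq_zero {K : Type*} [Field K] {g : MvPolynomial σ K} (h0 : g ≠ 0)
    (hg : g.totalDegree = 0) : IsUnit g := by
  refine isUnit_iff_totalDegree_of_isReduced.2 ⟨IsUnit.mk0 _ fun h => h0 ?_, hg⟩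
  rw [totalDegree_eq_zero_iff_eq_C.1 hg, h, C_0]

theorem totalDegree_pos_of_irreducible {K : Type*} [Field K] {g : MvPolynomial σ K}
    (hg : Irreducible g) : 0 < g.totalDegree :=
  Nat.pos_of_ne_zero fun h => hg.not_isUnit (isUnit_of_totalDegree_eq_zero hg.ne_zero h)

/-- The polynomial with prescribed coefficients at a finite set of exponents; it is a generic
polynomial when these coefficients are independent variables. -/
noncomputable def ofCoeffs {R : Type*} [CommSemiring R] {S : Finset (σ →₀ ℕ)}
    (u : {m // m ∈ S} → R) : MvPolynomial σ R :=
  ∑ m, monomial m.1 (u m)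

theorem map_ofCoeffs {R R' : Type*} [CommSemiring R] [CommSemiring R'] (φ : R →+* R')
    {S : Finset (σ →₀ ℕ)} (u : {m // m ∈ S} → R) : map φ (ofCoeffs u) = ofCoeffs (φ ∘ u) := by
  simp only [ofCoeffs, map_sum, map_monomial, Function.comp_apply]

theorem totalDegree_ofCoeffs_le {R : Type*} [CommSemiring R] {S : Finset (σ →₀ ℕ)} {n : ℕ}
    (hS : ∀ m ∈ S, m.degree ≤ n) (u : {m // m ∈ S} → R) : (ofCoeffs u).totalDegree ≤ n :=
  totalDegree_finsetSum_le fun m _ => (totalDegree_monomial_le m.1 _).trans (hS m.1 m.2)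

theorem ofCoeffs_coeff {R : Type*} [CommSemiring R] {S : Finset (σ →₀ ℕ)} {n : ℕ}
    (hS : ∀ m : σ →₀ ℕ, m.degree ≤ n → m ∈ S) {g : MvPolynomial σ R} (hg : g.totalDegree ≤ n) :
    ofCoeffs (fun m : {m // m ∈ S} => g.coeff m.1) = g := by
  have hsupp : g.support ⊆ S := fun m hm => hS m ((le_totalDegree hm).trans hg)
  conv_rhs => rw [← support_sum_monomial_coeff g]
  rw [ofCoeffs, Finset.sum_coe_sort S fun m => monomial m (g.coeff m)]
  exact (Finset.sum_subset hsupp fun m _ hm => by rw [notMem_support_iff.1 hm, monomial_zero]).symm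

/-- The equations, in the coefficients of two unknown polynomials with exponents in `S`, which say
that the product of these polynomials is `f`. -/
noncomputable def factorizationIdeal (S : Finset (σ →₀ ℕ)) (f : MvPolynomial σ ℤ) :
    Ideal (MvPolynomial ({m // m ∈ S} ⊕ {m // m ∈ S}) ℤ) :=
  Ideal.span (Set.range fun m => coeff m
    (ofCoeffs (X ∘ Sum.inl) * ofCoeffs (X ∘ Sum.inr) - map (Int.castRingHom _) f))

theorem factorizationIdeal_le_ker_aeval_iff {S : Finset (σ →₀ ℕ)} {f : MvPolynomial σ ℤ}
    {L : Type*} [CommRing L] (x : {m // m ∈ S} ⊕ {m // m ∈ S} → L) :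
    factorizationIdeal S f ≤ RingHom.ker (aeval x : _ →ₐ[ℤ] L) ↔
      ofCoeffs (x ∘ Sum.inl) * ofCoeffs (x ∘ Sum.inr) = map (Int.castRingHom L) f := by
  have hmap : map (aeval x : _ →ₐ[ℤ] L).toRingHom (ofCoeffs (S := S) (X ∘ Sum.inl) *
      ofCoeffs (S := S) (X ∘ Sum.inr) - map (Int.castRingHom _) f) =
      ofCoeffs (x ∘ Sum.inl) * ofCoeffs (x ∘ Sum.inr) - map (Int.castRingHom L) f := by
    rw [map_sub, map_mul, map_ofCoeffs, map_ofCoeffs, map_map,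
      RingHom.ext_int (RingHom.comp _ _) (Int.castRingHom L)]
    congr 3 <;> funext m <;> exact aeval_X x _
  rw [factorizationIdeal, Ideal.span_le, Set.range_subset_iff, ← sub_eq_zero, ← hmap,
    MvPolynomial.ext_iff]
  exact forall_congr' fun m => by rw [coeff_map, coeff_zero]; rfl

theorem exists_intCast_eq_zero_of_eq_mul [Finite σ] {K : Type*} [Field K] [IsAlgClosed K]
    [CharZero K] {f : MvPolynomial σ ℤ} (hf : Irreducible (map (Int.castRingHom K) f)) {n : ℕ}
    (hn : n < (map (Int.castRingHom K) f).totalDegree) :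
    ∃ N : ℤ, N ≠ 0 ∧ ∀ (L : Type*) [CommRing L] (g h : MvPolynomial σ L),
      g.totalDegree ≤ n → h.totalDegree ≤ n → map (Int.castRingHom L) f = g * h → (N : L) = 0 := by
  let S := (Finsupp.finite_of_degree_le (σ := σ) n).toFinset
  have hS : ∀ m : σ →₀ ℕ, m ∈ S ↔ m.degree ≤ n := fun m => by simp [S]
  obtain ⟨N, hN0, hN⟩ := exists_C_mem_of_no_common_zero K (factorizationIdeal S f) fun x => by
    by_contra! hx
    have hfac := (factorizationIdeal_le_ker_aeval_iff x).1 hx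
    have hmul {g h : MvPolynomial σ K} (hg : IsUnit g) (hh : h.totalDegree ≤ n) :
        (g * h).totalDegree ≤ n := by
      refine (totalDegree_mul g h).trans ?_
      rwa [(isUnit_iff_totalDegree_of_isReduced.1 hg).2, zero_add]
    have hdeg := totalDegree_ofCoeffs_le (R := K) fun m => (hS m).1
    rw [← hfac] at hn
    rcases hf.isUnit_or_isUnit hfac.symm with hu | hu
    · exact hn.not_ge (hmul hu (hdeg _))
    · exact hn.not_ge ((congrArg totalDegree (mul_comm _ _)).trans_le (hmul hu (hdeg _)))
  refine ⟨N, hN0, fun L _ g h hg hh hfac => ?_⟩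
  have hker := (factorizationIdeal_le_ker_aeval_iff (S := S) (f := f)
    (Sum.elim (fun m => g.coeff m.1) fun m => h.coeff m.1)).2 (by
      rw [Sum.elim_comp_inl, Sum.elim_comp_inr, ofCoeffs_coeff (fun m => (hS m).2) hg,
        ofCoeffs_coeff (fun m => (hS m).2) hh, hfac])
  simpa using hker hN

theorem irreducible_of_forall_totalDegree_lt {L : Type*} [Field L] {F : MvPolynomial σ L}
    (hpos : 0 < F.totalDegree) (h : ∀ g h : MvPolynomial σ L, F = g * h →
      g.totalDegree < F.totalDegree → ¬ h.totalDegree < F.totalDegree) : Irreducible F := by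
  have hF : F ≠ 0 := by rintro rfl; simp at hpos
  refine ⟨fun hu => hpos.ne' (isUnit_iff_totalDegree_of_isReduced.1 hu).2, fun a b hab => ?_⟩
  have ha := left_ne_zero_of_mul (hab ▸ hF)
  have hb := right_ne_zero_of_mul (hab ▸ hF)
  have hadd : F.totalDegree = a.totalDegree + b.totalDegree :=
    hab ▸ totalDegree_mul_of_isDomain ha hb
  by_contra! hnot
  have ha0 : a.totalDegree ≠ 0 := fun h0 => hnot.1 (isUnit_of_totalDegree_eq_zero ha h0)
  have hb0 : b.totalDegree ≠ 0 := fun h0 => hnot.2 (isUnit_of_totalDegree_eq_zero hb h0)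
  exact h a b hab (by lia) (by lia)

theorem exists_forall_irreducible_map_intCast [Finite σ] {K : Type*} [Field K] [IsAlgClosed K]
    [CharZero K] {f : MvPolynomial σ ℤ} (hf : Irreducible (map (Int.castRingHom K) f)) :
    ∃ N : ℤ, N ≠ 0 ∧ ∀ (L : Type*) [Field L], (N : L) ≠ 0 →
      Irreducible (map (Int.castRingHom L) f) := by
  have hpos := totalDegree_pos_of_irreducible hf
  obtain ⟨N, hN0, hN⟩ := exists_intCast_eq_zero_of_eq_mul hf (Nat.sub_one_lt hpos.ne')
  obtain ⟨m, hm, hmdeg⟩ := Finset.exists_mem_eq_sup _ (support_nonempty.2 hf.ne_zero)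
    fun m : σ →₀ ℕ => m.sum fun _ e => e
  rw [mem_support_iff, coeff_map, eq_intCast, Int.cast_ne_zero] at hm
  refine ⟨f.coeff m * N, mul_ne_zero hm hN0, fun L _ hL => ?_⟩
  rw [Int.cast_mul, mul_ne_zero_iff] at hL
  have hdeg : (map (Int.castRingHom K) f).totalDegree ≤ (map (Int.castRingHom L) f).totalDegree :=
    hmdeg.trans_le (le_totalDegree (mem_support_iff.2
      (by simpa only [coeff_map, eq_intCast] using hL.1)))
  have hdeg' : (map (Int.castRingHom L) f).totalDegree ≤
      (map (Int.castRingHom K) f).totalDegree := by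
    refine (totalDegree_map_le _ f).trans_eq ?_
    rw [totalDegree, totalDegree, support_map_of_injective _ Int.cast_injective]
  exact irreducible_of_forall_totalDegree_lt (hpos.trans_le hdeg) fun g h hgh hg hh =>
    hL.2 (hN L g h (by lia) (by lia) hgh)

end Specialization

section TensorProductOfDomains

variable {K A B : Type*} [Field K] [CommRing A] [Algebra K A] [CommRing B] [Algebra K B]

theorem exists_algHom_apply_ne_zero [IsAlgClosed K] [IsDomain A] [Algebra.FiniteType K A] {a : A}
    (ha : a ≠ 0) : ∃ χ : A →ₐ[K] K, χ a ≠ 0 := by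
  have : IsJacobsonRing A := isJacobsonRing_of_finiteType (A := K)
  have ha' : a ∉ (⊥ : Ideal A).jacobson := by
    rwa [IsJacobsonRing.out ‹_› Ideal.isPrime_bot.isRadical, Ideal.mem_bot]
  simp only [Ideal.jacobson, Submodule.mem_sInf, not_forall] at ha'
  obtain ⟨m, ⟨-, hm⟩, ham⟩ := ha'
  let _ : Field (A ⧸ m) := Ideal.Quotient.field m
  have : Module.Finite K (A ⧸ m) := finite_of_finite_type_of_isJacobsonRing _ _
  let e : (A ⧸ m) →ₐ[K] K := IsAlgClosed.lift
  refine ⟨e.comp (Ideal.Quotient.mkₐ K m), fun h => ham (Ideal.Quotient.eq_zero_iff_mem.1 ?_)⟩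
  exact e.toRingHom.injective (h.trans (map_zero e).symm)

theorem repr_lid_map_eq {ι : Type*} (b : Module.Basis ι K B) (χ : A →ₐ[K] K) (w : A ⊗[K] B)
    (i : ι) : b.repr (Algebra.TensorProduct.lid K B (Algebra.TensorProduct.map χ (.id K B) w)) i =
      χ ((b.baseChange A).repr w i) := by
  induction w with
  | zero => simp
  | add w₁ w₂ h₁ h₂ => simp only [map_add, Finsupp.add_apply, h₁, h₂]
  | tmul a c => simp [mul_comm]

theorem isDomain_tensorProduct [IsAlgClosed K] [IsDomain A] [Algebra.FiniteType K A]
    [IsDomain B] : IsDomain (A ⊗[K] B) := by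
  let b := Module.Basis.ofVectorSpace K B
  have : Nontrivial (A ⊗[K] B) :=
    Algebra.TensorProduct.nontrivial_of_algebraMap_injective_of_flat_left K A B
      (algebraMap K B).injective
  have : NoZeroDivisors (A ⊗[K] B) := ⟨fun {u v} huv => by
    by_contra! h
    have hcoord {w : A ⊗[K] B} (hw : w ≠ 0) : ∃ i, (b.baseChange A).repr w i ≠ 0 := by
      by_contra! h0
      exact hw ((b.baseChange A).repr.map_eq_zero_iff.1 (Finsupp.ext h0))
    obtain ⟨i, hi⟩ := hcoord h.1
    obtain ⟨j, hj⟩ := hcoord h.2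
    obtain ⟨χ, hχ⟩ := exists_algHom_apply_ne_zero (K := K) (mul_ne_zero hi hj)
    rw [map_mul, ← repr_lid_map_eq, ← repr_lid_map_eq] at hχ
    obtain h0 | h0 : Algebra.TensorProduct.lid K B (Algebra.TensorProduct.map χ (.id K B) u) = 0 ∨
        Algebra.TensorProduct.lid K B (Algebra.TensorProduct.map χ (.id K B) v) = 0 := by
      rw [← mul_eq_zero, ← map_mul, ← map_mul, huv, map_zero, map_zero]
    · exact left_ne_zero_of_mul hχ (by rw [h0, map_zero, Finsupp.zero_apply])
    · exact right_ne_zero_of_mul hχ (by rw [h0, map_zero, Finsupp.zero_apply])⟩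
  exact NoZeroDivisors.to_isDomain _

end TensorProductOfDomains

section Filtration

theorem finrank_add_finrank_map_le_of_mul {K B N : Type*} [Field K] [CommRing B] [IsDomain B]
    [Algebra K B] [AddCommGroup N] [Module K N] {V W : Submodule K B} [FiniteDimensional K W]
    {g : B} (hg : g ≠ 0) (hgV : ∀ v ∈ V, g * v ∈ W) (L : B →ₗ[K] N)
    (hL : ∀ v ∈ V, L (g * v) = 0) :
    Module.finrank K V + Module.finrank K (W.map L) ≤ Module.finrank K W := by
  let mulg : V →ₗ[K] LinearMap.ker (L.domRestrict W) :=
    (((LinearMap.mulLeft K g).domRestrict V).codRestrict W fun v => hgV v v.2).codRestrict _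
      fun v => hL v v.2
  have hinj : Function.Injective mulg := fun v v' h =>
    Subtype.ext (mul_left_cancel₀ hg (congrArg (fun z => (z.1 : B)) h))
  rw [← LinearMap.finrank_range_add_finrank_ker (L.domRestrict W), LinearMap.range_domRestrict,
    add_comm]
  exact Nat.add_le_add_left (LinearMap.finrank_le_finrank_of_injective hinj) _

variable {K B : Type*} [Field K] [CommRing B] [Algebra K B]

/-- The powers of `E` filter `B` with the growth of the filtration by degree on the coordinate ring
of an affine plane curve of degree `d`. -/
structure IsCurveFiltration (E : Submodule K B) (d : ℕ) : Prop where
  one_mem : (1 : B) ∈ E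
  fg : E.FG
  exists_mem_pow : ∀ b, ∃ n, b ∈ E ^ n
  finrank_pow_le : ∀ n, Module.finrank K ↥(E ^ n) ≤ d * (n + 1)
  le_finrank_pow : ∀ n, d * (n + 1) ≤ Module.finrank K ↥(E ^ (n + d))

theorem pow_mono_of_one_mem {E : Submodule K B} (h1 : (1 : B) ∈ E) : Monotone (E ^ ·) :=
  fun _ _ hmn => pow_le_pow_right₀ (Submodule.one_le.2 h1) hmn

namespace IsCurveFiltration

variable {E : Submodule K B} {d : ℕ} (hE : IsCurveFiltration E d)
include hE

theorem finiteDimensional_pow (n : ℕ) : FiniteDimensional K ↥(E ^ n) :=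
  Module.Finite.iff_fg.2 (hE.fg.pow n)

theorem exists_map_pow_eq_top {V : Type*} [AddCommGroup V] [Module K V] [FiniteDimensional K V]
    {L : B →ₗ[K] V} (hL : Function.Surjective L) : ∃ n, ∀ m ≥ n, (E ^ m).map L = ⊤ := by
  choose b hb using fun i => hL (Module.finBasis K V i)
  choose n hn using fun i => hE.exists_mem_pow (b i)
  refine ⟨Finset.univ.sup n, fun m hm => ?_⟩
  rw [eq_top_iff, ← (Module.finBasis K V).span_eq, Submodule.span_le]
  rintro _ ⟨i, rfl⟩
  exact ⟨b i, pow_mono_of_one_mem hE.one_mem ((Finset.le_sup (Finset.mem_univ i)).trans hm) (hn i),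
    hb i⟩

theorem finrank_le_of_forall_map_mul_eq_zero [IsDomain B] {Φ : B} {δ : ℕ} (hΦ0 : Φ ≠ 0)
    (hΦ : Φ ∈ E ^ δ) {V : Type*} [AddCommGroup V] [Module K V] [FiniteDimensional K V]
    {L : B →ₗ[K] V} (hL : Function.Surjective L) (hLΦ : ∀ b, L (Φ * b) = 0) :
    Module.finrank K V ≤ d * δ + d * d := by
  obtain ⟨n, hn⟩ := hE.exists_map_pow_eq_top hL
  have := hE.finiteDimensional_pow (δ + (n + d))
  have hrank := finrank_add_finrank_map_le_of_mul (V := E ^ (n + d)) hΦ0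
    (fun b hb => pow_add E δ (n + d) ▸ Submodule.mul_mem_mul hΦ hb) L fun b _ => hLΦ b
  rw [hn _ (by lia), finrank_top] at hrank
  have hlow := hE.le_finrank_pow n
  have hup := hE.finrank_pow_le (δ + (n + d))
  linarith

end IsCurveFiltration

end Filtration

section Jets

variable {K B : Type*} [Field K] [CommRing B] [Algebra K B] (D : Derivation K B B)

theorem derivation_mem_pow {I : Ideal B} {n : ℕ} {b : B} (hb : b ∈ I ^ (n + 1)) : D b ∈ I ^ n := by
  induction n generalizing b with
  | zero => simp
  | succ n ih =>
    rw [pow_succ] at hb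
    refine Submodule.mul_induction_on hb (fun a ha c hc => ?_) fun a c ha hc => ?_
    · rw [D.leibniz, smul_eq_mul, smul_eq_mul, mul_comm c]
      exact add_mem (Ideal.mul_mem_right _ _ ha) (pow_succ I n ▸ Ideal.mul_mem_mul (ih ha) hc)
    · rw [map_add]
      exact add_mem ha hc

theorem iterate_derivation_mem_pow {I : Ideal B} {n k : ℕ} {b : B} (hb : b ∈ I ^ (n + k)) :
    D^[k] b ∈ I ^ n := by
  induction k generalizing b with
  | zero => exact hb
  | succ k ih => exact ih (derivation_mem_pow D hb)

theorem iterate_derivation_pow_mul_sub_mem {I : Ideal B} {w : B} (hw : w ∈ I) (l : ℕ) (u : B) :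
    D^[l] (w ^ l * u) - l.factorial * D w ^ l * u ∈ I := by
  induction l generalizing u with
  | zero => simp
  | succ l ih =>
    have hD : D (w ^ (l + 1) * u) = w ^ l * ((l + 1 : ℕ) * D w * u) + w ^ (l + 1) * D u := by
      simp only [D.leibniz, D.leibniz_pow, smul_eq_mul, nsmul_eq_mul, Nat.add_sub_cancel]
      ring
    have hrest : D^[l] (w ^ (l + 1) * D u) ∈ I := by
      rw [← pow_one I]
      refine iterate_derivation_mem_pow D (Ideal.mul_mem_right _ _ ?_)
      rw [add_comm 1 l]
      exact Ideal.pow_mem_pow hw _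
    rw [Function.iterate_succ_apply, hD, iterate_map_add]
    convert add_mem (ih ((l + 1 : ℕ) * D w * u)) hrest using 1
    rw [Nat.factorial_succ]
    push_cast
    ring

/-- The values at the point `χ` of the first `M` derivatives of a function along `D`, which record
its Taylor expansion at `χ` up to order `M`. -/
def jet (χ : B →ₐ[K] K) (M : ℕ) : B →ₗ[K] Fin M → K :=
  LinearMap.pi fun l => χ.toLinearMap ∘ₗ ((D : B →ₗ[K] B) ^ (l : ℕ) : Module.End K B)

theorem jet_apply (χ : B →ₐ[K] K) (M : ℕ) (b : B) (l : Fin M) :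
    jet D χ M b l = χ (D^[l] b) := by
  simp [jet, Module.End.pow_apply]

theorem apply_iterate_derivation_eq_zero (χ : B →ₐ[K] K) {l k : ℕ} (hlk : l < k) {b : B}
    (hb : b ∈ RingHom.ker χ ^ k) : χ (D^[l] b) = 0 := by
  rw [← RingHom.mem_ker, ← pow_one (RingHom.ker χ)]
  exact iterate_derivation_mem_pow D (Ideal.pow_le_pow_right (by lia) hb)

theorem jet_mul_eq_zero {χ : B →ₐ[K] K} {M : ℕ} {Φ : B} (hΦ : jet D χ M Φ = 0) (b : B) :
    jet D χ M (Φ * b) = 0 := by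
  have key (l : ℕ) : ∀ Φ b, (∀ k ≤ l, χ (D^[k] Φ) = 0) → χ (D^[l] (Φ * b)) = 0 := by
    induction l with
    | zero =>
      intro Φ b h
      rw [Function.iterate_zero_apply, map_mul, show χ Φ = 0 from h 0 le_rfl, zero_mul]
    | succ l ih =>
      intro Φ b h
      rw [Function.iterate_succ_apply, D.leibniz, iterate_map_add, map_add, smul_eq_mul,
        smul_eq_mul, mul_comm b, ih Φ (D b) fun k hk => h k (by lia),
        ih (D Φ) b fun k hk => h (k + 1) (by lia), add_zero]
  funext l
  rw [jet_apply]
  refine key l Φ b fun k hk => ?_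
  exact (jet_apply D χ M Φ ⟨k, by lia⟩).symm.trans (congrFun hΦ _)

theorem jet_surjective {χ : B →ₐ[K] K} {x : B} {M : ℕ}
    (hx : ∀ l < M, (l.factorial : K) * χ (D x) ^ l ≠ 0) : Function.Surjective (jet D χ M) := by
  let w := x - algebraMap K B (χ x)
  have hw : w ∈ RingHom.ker χ := by simp [w, RingHom.mem_ker]
  let A : Matrix (Fin M) (Fin M) K := .of fun l k => jet D χ M (w ^ (k : ℕ)) l
  have htri : A.IsLowerTriangular := fun l k hlk =>
    (jet_apply D χ M _ l).trans <|
      apply_iterate_derivation_eq_zero D χ hlk (Ideal.pow_mem_pow hw k)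
  have hdiag (l : Fin M) : A l l ≠ 0 := by
    have hlead := iterate_derivation_pow_mul_sub_mem D hw l 1
    rw [RingHom.mem_ker, map_sub, sub_eq_zero, mul_one, mul_one] at hlead
    simpa only [A, Matrix.of_apply, jet_apply, hlead, map_mul, map_natCast, map_pow, w, map_sub,
      Derivation.map_algebraMap, sub_zero] using hx l l.2
  have hA : IsUnit A := by
    rw [Matrix.isUnit_iff_isUnit_det, Matrix.det_of_isLowerTriangular A htri, isUnit_iff_ne_zero]
    exact Finset.prod_ne_zero_iff.2 fun l _ => hdiag l
  intro y
  obtain ⟨c, rfl⟩ := Matrix.mulVec_surjective_iff_isUnit.2 hA y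
  refine ⟨∑ k, c k • w ^ (k : ℕ), funext fun l => ?_⟩
  simp [A, Matrix.mulVec, dotProduct, mul_comm]

theorem isCoprime_ker_of_ne {χ ψ : B →ₐ[K] K} (h : χ ≠ ψ) :
    IsCoprime (RingHom.ker χ) (RingHom.ker ψ) := by
  have hmax (θ : B →ₐ[K] K) : (RingHom.ker θ).IsMaximal :=
    RingHom.ker_isMaximal_of_surjective θ fun c => ⟨algebraMap K B c, θ.commutes c⟩
  have := hmax χ
  have := hmax ψ
  refine Ideal.isCoprime_of_isMaximal fun hker => h (AlgHom.ext fun b => ?_)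
  have hb : b - algebraMap K B (ψ b) ∈ RingHom.ker χ := hker ▸ by simp [RingHom.mem_ker]
  simpa [RingHom.mem_ker, sub_eq_zero] using hb

theorem pi_jet_surjective {ι : Type*} [Finite ι] {χ : ι → B →ₐ[K] K}
    (hχ : Function.Injective χ) {x : B} {M : ℕ}
    (hx : ∀ i, ∀ l < M, (l.factorial : K) * χ i (D x) ^ l ≠ 0) :
    Function.Surjective (LinearMap.pi fun i => jet D (χ i) M) := by
  intro y
  choose b hb using fun i => jet_surjective D (hx i) (y i)
  obtain ⟨r, hr⟩ := Ideal.exists_forall_sub_mem_ideal (I := fun i => RingHom.ker (χ i) ^ M)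
    (fun i j hij => (isCoprime_ker_of_ne (hχ.ne hij)).pow) b
  refine ⟨r, funext fun i => ?_⟩
  rw [LinearMap.pi_apply, ← hb i, ← sub_eq_zero, ← map_sub]
  funext l
  rw [jet_apply, Pi.zero_apply]
  exact apply_iterate_derivation_eq_zero D (χ i) l.2 (hr i)

theorem IsCurveFiltration.card_mul_le_of_jet_eq_zero [IsDomain B] {E : Submodule K B} {d : ℕ}
    (hE : IsCurveFiltration E d) {Φ : B} {δ : ℕ} (hΦ0 : Φ ≠ 0) (hΦ : Φ ∈ E ^ δ) {ι : Type*}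
    [Finite ι] {χ : ι → B →ₐ[K] K} (hχ : Function.Injective χ) {x : B} {M : ℕ}
    (hx : ∀ i, ∀ l < M, (l.factorial : K) * χ i (D x) ^ l ≠ 0)
    (hjet : ∀ i, jet D (χ i) M Φ = 0) : Nat.card ι * M ≤ d * δ + d * d := by
  have := Fintype.ofFinite ι
  have h := hE.finrank_le_of_forall_map_mul_eq_zero hΦ0 hΦ (pi_jet_surjective D hχ hx)
    fun b => funext fun i => jet_mul_eq_zero D (hjet i) b
  rwa [Module.finrank_pi_fintype, Finset.sum_const_nat fun i _ => Module.finrank_fin_fun K,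
    Finset.card_univ, ← Nat.card_eq_fintype_card] at h

end Jets

section Bidegree

variable {K B : Type*} [Field K] [CommRing B] [Algebra K B]

/-- The piece of bidegree `(a, b)` of the filtration that the powers of `E` induce on `B ⊗ B`. -/
noncomputable def biPow (E : Submodule K B) (a b : ℕ) : Submodule K (B ⊗[K] B) :=
  .map₂ (TensorProduct.mk K B B) (E ^ a) (E ^ b)

theorem tmul_mem_biPow {E : Submodule K B} {a b : ℕ} {s t : B} (hs : s ∈ E ^ a) (ht : t ∈ E ^ b) :
    s ⊗ₜ[K] t ∈ biPow E a b :=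
  Submodule.apply_mem_map₂ _ hs ht

theorem biPow_le_iff {E : Submodule K B} {a b : ℕ} {W : Submodule K (B ⊗[K] B)} :
    biPow E a b ≤ W ↔ ∀ s ∈ E ^ a, ∀ t ∈ E ^ b, s ⊗ₜ[K] t ∈ W :=
  Submodule.map₂_le

theorem mul_mem_biPow {E : Submodule K B} {a b a' b' : ℕ} {u v : B ⊗[K] B} (hu : u ∈ biPow E a b)
    (hv : v ∈ biPow E a' b') : u * v ∈ biPow E (a + a') (b + b') := by
  suffices biPow E a b ≤ (biPow E (a + a') (b + b')).comap (LinearMap.mulRight K v) from this hu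
  refine biPow_le_iff.2 fun s hs t ht => ?_
  suffices biPow E a' b' ≤ (biPow E (a + a') (b + b')).comap (LinearMap.mulLeft K (s ⊗ₜ t)) from
    this hv
  refine biPow_le_iff.2 fun s' hs' t' ht' => ?_
  rw [Submodule.mem_comap, LinearMap.mulLeft_apply, Algebra.TensorProduct.tmul_mul_tmul]
  exact tmul_mem_biPow (pow_add E a a' ▸ Submodule.mul_mem_mul hs hs')
    (pow_add E b b' ▸ Submodule.mul_mem_mul ht ht')

theorem biPow_eq_range_mapIncl (E : Submodule K B) (a b : ℕ) :
    biPow E a b = LinearMap.range (TensorProduct.mapIncl (E ^ a) (E ^ b)) :=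
  (TensorProduct.range_mapIncl _ _).symm

theorem finrank_biPow (E : Submodule K B) (a b : ℕ) :
    Module.finrank K ↥(biPow E a b) = Module.finrank K ↥(E ^ a) * Module.finrank K ↥(E ^ b) := by
  rw [biPow_eq_range_mapIncl, LinearMap.finrank_range_of_inj, Module.finrank_tensorProduct]
  exact Module.Flat.tensorProduct_mapIncl_injective_of_right _ _

variable {E : Submodule K B} {d : ℕ}

theorem IsCurveFiltration.finiteDimensional_biPow (hE : IsCurveFiltration E d) (a b : ℕ) :
    FiniteDimensional K ↥(biPow E a b) := by
  have := hE.finiteDimensional_pow a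
  have := hE.finiteDimensional_pow b
  rw [biPow_eq_range_mapIncl]
  infer_instance

theorem mul_le_finrank_map_biPow {q m n : ℕ} (h1 : (1 : B) ∈ E) {x : B} (hx : x ∈ E)
    (hxi : LinearIndependent K fun n : ℕ => x ^ n) {φ : B ⊗[K] B →ₐ[K] B}
    (hφ : ∀ i k, φ ((x ^ i) ⊗ₜ (x ^ k)) = x ^ (i + q * k)) (hqm : q ≤ m + 1)
    [FiniteDimensional K ↥((biPow E m n).map φ.toLinearMap)] :
    q * (n + 1) ≤ Module.finrank K ↥((biPow E m n).map φ.toLinearMap) := by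
  have hpow {i k : ℕ} (hik : i ≤ k) : x ^ i ∈ E ^ k :=
    pow_mono_of_one_mem h1 hik (Submodule.pow_mem_pow _ hx _)
  have hmem (ik : Fin q × Fin (n + 1)) :
      x ^ ((ik.1 : ℕ) + q * ik.2) ∈ (biPow E m n).map φ.toLinearMap :=
    ⟨(x ^ (ik.1 : ℕ)) ⊗ₜ (x ^ (ik.2 : ℕ)),
      tmul_mem_biPow (hpow (by have := ik.1.2; lia)) (hpow (by have := ik.2.2; lia)), hφ _ _⟩
  have hinj : Function.Injective fun ik : Fin q × Fin (n + 1) => (ik.1 : ℕ) + q * ik.2 := by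
    rintro ⟨i, k⟩ ⟨i', k'⟩ h
    have hi := congrArg (· % q) h
    have hk := congrArg (· / q) h
    have hq := i.pos
    simp only [Nat.add_mul_mod_self_left, Nat.mod_eq_of_lt i.2, Nat.mod_eq_of_lt i'.2] at hi
    simp only [Nat.add_mul_div_left _ _ hq, Nat.div_eq_of_lt i.2, Nat.div_eq_of_lt i'.2] at hk
    exact Prod.ext (Fin.ext hi) (Fin.ext (by lia))
  have hli : LinearIndependent K fun ik => (⟨_, hmem ik⟩ : (biPow E m n).map φ.toLinearMap) :=
    .of_comp (Submodule.subtype _) (hxi.comp _ hinj)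
  simpa using hli.fintype_card_le_finrank

/- A function `G` of small degree in the first variable cannot vanish on the graph of Frobenius: its
multiples of bidegree `(q - 1, n)` would lie in the kernel of `φ`, whose image is too large. -/
theorem IsCurveFiltration.map_ne_zero_of_mem_biPow [IsDomain (B ⊗[K] B)]
    (hE : IsCurveFiltration E d) {x : B} (hx : x ∈ E)
    (hxi : LinearIndependent K fun n : ℕ => x ^ n) {q A I : ℕ} (hq : d * d * (A + d) < q)
    (hAq : A + d < q) {φ : B ⊗[K] B →ₐ[K] B}
    (hφ : ∀ i k, φ ((x ^ i) ⊗ₜ (x ^ k)) = x ^ (i + q * k)) {G : B ⊗[K] B} (hG0 : G ≠ 0)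
    (hG : G ∈ biPow E A I) : φ G ≠ 0 := by
  intro hφG
  obtain ⟨a, rfl⟩ := Nat.exists_eq_add_of_lt hAq
  set q := A + d + a + 1
  let t := d * d * q * (I + d)
  have := hE.finiteDimensional_biPow (A + (a + d)) (I + (t + d))
  have hrank := finrank_add_finrank_map_le_of_mul hG0
    (fun v (hv : v ∈ biPow E (a + d) (t + d)) => mul_mem_biPow hG hv) φ.toLinearMap
    fun v _ => by simp [hφG]
  have himage := mul_le_finrank_map_biPow (m := A + (a + d)) (n := I + (t + d)) hE.one_mem hx hxi
    hφ (by lia)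
  rw [finrank_biPow, finrank_biPow] at hrank
  have hlow := Nat.mul_le_mul (hE.le_finrank_pow a) (hE.le_finrank_pow t)
  have hup := Nat.mul_le_mul (hE.finrank_pow_le (A + (a + d))) (hE.finrank_pow_le (I + (t + d)))
  have hcount : q * (I + (t + d) + 1) + d * (a + 1) * (d * (t + 1)) ≤
      d * q * (d * (I + (t + d) + 1)) := by
    rw [show q = A + (a + d) + 1 by lia] at himage ⊢
    lia
  have ha : (a : ℤ) + 1 = q - A - d := by lia
  have ht : (t : ℤ) = d * d * q * (I + d) := by simp only [t]; push_cast; rfl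
  have hq' : (d : ℤ) * d * (A + d) + 1 ≤ q := by exact_mod_cast hq
  zify at hcount
  rw [ha] at hcount
  have ht0 : (0 : ℤ) ≤ t + 1 := by positivity
  have hqI : (0 : ℤ) ≤ q * (I + d) := by positivity
  nlinarith [mul_le_mul_of_nonneg_right hq' ht0]

end Bidegree

section Stepanov

variable {K B : Type*} [Field K] [CommRing B] [Algebra K B] (D : Derivation K B B)
  {E : Submodule K B} {d : ℕ}

theorem derivation_apply_mem_pow (h1 : (1 : B) ∈ E) (hD : ∀ b ∈ E, D b ∈ E ^ d) {n : ℕ} {b : B}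
    (hb : b ∈ E ^ n) : D b ∈ E ^ (n + d) := by
  induction n generalizing b with
  | zero =>
    obtain ⟨c, rfl⟩ := Submodule.mem_one.1 (pow_zero E ▸ hb)
    simp
  | succ n ih =>
    rw [pow_succ] at hb
    refine Submodule.mul_induction_on hb (fun a ha c hc => ?_) fun a c ha hc => ?_
    · rw [D.leibniz, smul_eq_mul, smul_eq_mul]
      refine add_mem (pow_mono_of_one_mem h1 (by lia : n + d ≤ n + 1 + d) ?_) ?_
      · simp only [pow_add]
        exact Submodule.mul_mem_mul ha (hD c hc)
      · rw [show n + 1 + d = 1 + (n + d) by lia, pow_add, pow_one]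
        exact Submodule.mul_mem_mul hc (ih ha)
    · rw [map_add]
      exact add_mem ha hc

theorem iterate_derivation_apply_mem_pow (h1 : (1 : B) ∈ E) (hD : ∀ b ∈ E, D b ∈ E ^ d) {n : ℕ}
    {b : B} (hb : b ∈ E ^ n) (l : ℕ) : D^[l] b ∈ E ^ (n + l * d) := by
  induction l with
  | zero => simpa using hb
  | succ l ih =>
    rw [Function.iterate_succ_apply', Nat.succ_mul, ← add_assoc]
    exact derivation_apply_mem_pow D h1 hD ih

/-- The derivation `D ⊗ 1` of `B ⊗ B`, iterated `l` times. -/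
noncomputable def leftDerivative (l : ℕ) : B ⊗[K] B →ₗ[K] B ⊗[K] B :=
  ((D : B →ₗ[K] B) ^ l : Module.End K B).rTensor B

theorem leftDerivative_tmul (l : ℕ) (s t : B) :
    leftDerivative D l (s ⊗ₜ t) = (D^[l] s) ⊗ₜ t := by
  simp [leftDerivative, Module.End.pow_apply]

theorem leftDerivative_mem_biPow (h1 : (1 : B) ∈ E) (hD : ∀ b ∈ E, D b ∈ E ^ d) {a b l M : ℕ}
    (hl : l ≤ M) {G : B ⊗[K] B} (hG : G ∈ biPow E a b) :
    leftDerivative D l G ∈ biPow E (a + M * d) b := by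
  suffices biPow E a b ≤ (biPow E (a + M * d) b).comap (leftDerivative D l) from this hG
  refine biPow_le_iff.2 fun s hs t ht => ?_
  rw [Submodule.mem_comap, leftDerivative_tmul]
  refine tmul_mem_biPow
    (pow_mono_of_one_mem h1 ?_ (iterate_derivation_apply_mem_pow D h1 hD hs l)) ht
  gcongr

theorem IsCurveFiltration.exists_leftDerivative_mem (hE : IsCurveFiltration E d)
    (hD : ∀ b ∈ E, D b ∈ E ^ d) {J : Ideal (B ⊗[K] B)} {c : ℕ}
    (hJ : ∀ a b, Module.finrank K ↥((biPow E a b).map (Ideal.Quotient.mkₐ K J).toLinearMap) ≤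
      c * (a + b + 1)) {A I M : ℕ}
    (hcount : M * (c * (A + d + M * d + (I + d) + 1)) < d * (A + 1) * (d * (I + 1))) :
    ∃ G ∈ biPow E (A + d) (I + d), G ≠ 0 ∧ ∀ l < M, leftDerivative D l G ∈ J := by
  let U := (biPow E (A + d + M * d) (I + d)).map (Ideal.Quotient.mkₐ K J).toLinearMap
  have := hE.finiteDimensional_biPow (A + d) (I + d)
  have := hE.finiteDimensional_biPow (A + d + M * d) (I + d)
  let Θ : biPow E (A + d) (I + d) →ₗ[K] Fin M → U := LinearMap.pi fun l =>
    ((Ideal.Quotient.mkₐ K J).toLinearMap ∘ₗ leftDerivative D l ∘ₗ Submodule.subtype _).codRestrict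
      _ fun G => ⟨_, leftDerivative_mem_biPow D hE.one_mem hD l.2.le G.2, rfl⟩
  have hlt : Module.finrank K (Fin M → U) < Module.finrank K ↥(biPow E (A + d) (I + d)) := by
    rw [Module.finrank_pi_fintype, Finset.sum_const, Finset.card_univ, Fintype.card_fin,
      smul_eq_mul, finrank_biPow]
    exact ((Nat.mul_le_mul_left _ (hJ _ _)).trans_lt hcount).trans_le
      (Nat.mul_le_mul (hE.le_finrank_pow A) (hE.le_finrank_pow I))
  obtain ⟨G, hG, hG0⟩ := Submodule.exists_mem_ne_zero_of_ne_bot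
    (LinearMap.ker_ne_bot_of_finrank_lt hlt)
  refine ⟨G, G.2, fun h => hG0 (Subtype.ext h), fun l hl => Ideal.Quotient.eq_zero_iff_mem.1 ?_⟩
  have hΘ : Θ G ⟨l, hl⟩ = 0 := congrFun (LinearMap.mem_ker.1 hG) ⟨l, hl⟩
  exact congrArg Subtype.val hΘ

/-- Evaluation of a function on `C × C` at the points `(P, F(P))` of the graph of `F : C → C`. -/
def restrictGraph (F : B →ₐ[K] B) : B ⊗[K] B →ₐ[K] B :=
  Algebra.TensorProduct.lift (AlgHom.id K B) F fun _ _ => Commute.all _ _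

theorem restrictGraph_tmul (F : B →ₐ[K] B) (s t : B) : restrictGraph F (s ⊗ₜ t) = s * F t := by
  simp [restrictGraph]

theorem restrictGraph_mem_pow {F : B →ₐ[K] B} {q : ℕ} (hF : ∀ b ∈ E, F b ∈ E ^ q) {a b : ℕ}
    {G : B ⊗[K] B} (hG : G ∈ biPow E a b) : restrictGraph F G ∈ E ^ (a + q * b) := by
  suffices biPow E a b ≤ (E ^ (a + q * b)).comap (restrictGraph F).toLinearMap from this hG
  have hFpow : (E ^ b).map F.toLinearMap ≤ E ^ (q * b) := by
    rw [Submodule.map_pow, pow_mul]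
    exact pow_left_mono b (Submodule.map_le_iff_le_comap.2 hF)
  refine biPow_le_iff.2 fun s hs t ht => ?_
  rw [Submodule.mem_comap, AlgHom.toLinearMap_apply, restrictGraph_tmul, pow_add]
  exact Submodule.mul_mem_mul hs (hFpow (Submodule.mem_map_of_mem ht))

theorem iterate_derivation_restrictGraph {F : B →ₐ[K] B} (hF : ∀ b, D (F b) = 0) (l : ℕ)
    (G : B ⊗[K] B) : D^[l] (restrictGraph F G) = restrictGraph F (leftDerivative D l G) := by
  induction G with
  | zero => simp [iterate_map_zero]
  | add G H hG hH => rw [map_add, iterate_map_add, hG, hH, map_add, map_add]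
  | tmul s t =>
    rw [leftDerivative_tmul, restrictGraph_tmul, restrictGraph_tmul]
    induction l generalizing s with
    | zero => rfl
    | succ l ih =>
      rw [Function.iterate_succ_apply, Function.iterate_succ_apply, D.leibniz, hF, smul_zero,
        zero_add, smul_eq_mul, mul_comm, ih]

theorem IsCurveFiltration.card_mul_le_of_restrictGraph [IsDomain B] [IsDomain (B ⊗[K] B)]
    (hE : IsCurveFiltration E d) (hD : ∀ b ∈ E, D b ∈ E ^ d) {J : Ideal (B ⊗[K] B)} {c : ℕ}
    (hJ : ∀ a b, Module.finrank K ↥((biPow E a b).map (Ideal.Quotient.mkₐ K J).toLinearMap) ≤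
      c * (a + b + 1)) {A I M q : ℕ}
    (hcount : M * (c * (A + d + M * d + (I + d) + 1)) < d * (A + 1) * (d * (I + 1)))
    (hq : d * d * (A + d + d) < q) {x : B} (hx : x ∈ E)
    (hxi : LinearIndependent K fun n : ℕ => x ^ n) {F : B →ₐ[K] B} (hFx : F x = x ^ q)
    (hFE : ∀ b ∈ E, F b ∈ E ^ q) (hDF : ∀ b, D (F b) = 0) {ι : Type*} [Finite ι]
    {χ : ι → B →ₐ[K] K} (hχ : Function.Injective χ)
    (hχD : ∀ i, ∀ l < M, (l.factorial : K) * χ i (D x) ^ l ≠ 0)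
    (hχJ : ∀ i, ∀ j ∈ J, χ i (restrictGraph F j) = 0) :
    Nat.card ι * M ≤ d * (A + d + q * (I + d)) + d * d := by
  obtain ⟨G, hG, hG0, hGJ⟩ := hE.exists_leftDerivative_mem D hD hJ hcount
  have hd : 0 < d * d := Nat.pos_of_ne_zero fun h => by
    rw [mul_mul_mul_comm, h] at hcount
    lia
  have hΦ0 : restrictGraph F G ≠ 0 := by
    refine hE.map_ne_zero_of_mem_biPow hx hxi hq ?_ (fun i k => ?_) hG0 hG
    · exact (Nat.le_mul_of_pos_left _ hd).trans_lt hq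
    · rw [restrictGraph_tmul, map_pow, hFx, pow_add, pow_mul]
  refine hE.card_mul_le_of_jet_eq_zero D hΦ0 (restrictGraph_mem_pow hFE hG) hχ hχD fun i => ?_
  funext l
  rw [jet_apply, iterate_derivation_restrictGraph D hDF]
  exact hχJ i _ (hGJ l l.2)

end Stepanov

section Adjunction

/-- In a filtered algebra with pieces `F ^ n`, the span of the elements `z ^ k * a` of degree `n`
with `k < e` and `a ∈ F ^ m`, where `Z` is the line through `z` and `z` has degree `1`. -/
def adjoinPow {S : Type*} [Semiring S] (F Z : S) (e n : ℕ) : S :=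
  ∑ p ∈ Finset.HasAntidiagonal.antidiagonal n with p.1 < e, Z ^ p.1 * F ^ p.2

section IdemCommSemiring

variable {S : Type*} [IdemCommSemiring S] {F Z : S} {e : ℕ}

theorem pow_mul_pow_le_adjoinPow {k m n : ℕ} (hk : k < e) (hn : k + m = n) :
    Z ^ k * F ^ m ≤ adjoinPow F Z e n :=
  Finset.single_le_sum (f := fun p : ℕ × ℕ => Z ^ p.1 * F ^ p.2) (fun _ _ => zero_le)
    (show (k, m) ∈ _ by simp [hk, hn])

theorem adjoinPow_mul_le {n : ℕ} {W U : S}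
    (h : ∀ k m, k < e → k + m = n → Z ^ k * F ^ m * W ≤ U) : adjoinPow F Z e n * W ≤ U := by
  rw [adjoinPow, Finset.sum_mul]
  refine Finset.sum_induction _ (· ≤ U) (fun _ _ => add_le) zero_le fun p hp => ?_
  obtain ⟨hp, hpe⟩ := Finset.mem_filter.1 hp
  exact h p.1 p.2 hpe (Finset.HasAntidiagonal.mem_antidiagonal.1 hp)

theorem adjoinPow_mul_pow_le (n m : ℕ) :
    adjoinPow F Z e n * F ^ m ≤ adjoinPow F Z e (n + m) :=
  adjoinPow_mul_le fun k l hk hl => by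
    rw [mul_assoc, ← pow_add]
    exact pow_mul_pow_le_adjoinPow hk (by lia)

theorem add_pow_le_adjoinPow (hZ : Z ^ e ≤ adjoinPow F Z e e) (n : ℕ) :
    (F + Z) ^ n ≤ adjoinPow F Z e n := by
  induction n with
  | zero =>
    obtain rfl | he := e.eq_zero_or_pos
    · simpa using hZ
    · simpa using pow_mul_pow_le_adjoinPow (F := F) (Z := Z) he (add_zero 0)
  | succ n ih =>
    rw [pow_succ]
    refine (mul_le_mul_left ih _).trans ?_
    rw [mul_add]
    refine add_le (by simpa using adjoinPow_mul_pow_le n 1) (adjoinPow_mul_le fun k m hk hm => ?_)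
    rw [mul_right_comm, ← pow_succ]
    obtain hlt | heq := Nat.lt_or_eq_of_le (Nat.succ_le_of_lt hk)
    · exact pow_mul_pow_le_adjoinPow hlt (by lia)
    · rw [← Nat.succ_eq_add_one, heq, show n + 1 = e + m by lia]
      exact (mul_le_mul_left hZ _).trans (adjoinPow_mul_pow_le e m)

theorem one_add_pow_le_sum (n : ℕ) : (1 + Z) ^ n ≤ ∑ k ∈ Finset.range (n + 1), Z ^ k := by
  induction n with
  | zero => simp
  | succ n ih =>
    rw [pow_succ]
    refine (mul_le_mul_left ih _).trans ?_
    rw [mul_add, mul_one, Finset.sum_mul]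
    refine add_le (Finset.sum_le_sum_of_subset (Finset.range_mono (Nat.le_succ _))) ?_
    simp only [← pow_succ]
    rw [Finset.sum_range_succ' _ (n + 1)]
    exact le_self_add

end IdemCommSemiring

variable {K B : Type*} [Field K] [CommRing B] [Algebra K B]

theorem fg_finsetSum {ι : Type*} {P : ι → Submodule K B} {s : Finset ι}
    (hP : ∀ i ∈ s, (P i).FG) : (∑ i ∈ s, P i).FG :=
  Finset.sum_induction _ Submodule.FG (fun _ _ hQ hR => hQ.sup hR) Submodule.fg_bot hP

theorem finrank_finsetSum_le {ι : Type*} {P : ι → Submodule K B} {s : Finset ι}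
    (hP : ∀ i ∈ s, (P i).FG) :
    Module.finrank K ↥(∑ i ∈ s, P i) ≤ ∑ i ∈ s, Module.finrank K (P i) := by
  refine Finset.le_sum_of_subadditive_on_pred (fun Q : Submodule K B => Module.finrank K Q)
    Submodule.FG (finrank_bot K B).le (fun Q R hQ hR => ?_) (fun Q R hQ hR => hQ.sup hR) P hP
  have := Module.Finite.iff_fg.2 hQ
  have := Module.Finite.iff_fg.2 hR
  exact Submodule.finrank_add_le_finrank_add_finrank Q R

theorem finrank_span_singleton_mul_le {P : Submodule K B} (hP : P.FG) (b : B) :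
    Module.finrank K ↥(Submodule.span K {b} * P) ≤ Module.finrank K P := by
  have := Module.Finite.iff_fg.2 hP
  rw [Submodule.mul_eq_map₂, Submodule.map₂_span_singleton_eq_map]
  exact Submodule.finrank_map_le _ _

theorem finrank_sup_span_singleton_pow_le {F : Submodule K B} (hF : F.FG) {z : B} {e c : ℕ}
    (hz : Submodule.span K {z} ^ e ≤ adjoinPow F (.span K {z}) e e)
    (hc : ∀ n, Module.finrank K ↥(F ^ n) ≤ c * (n + 1)) (n : ℕ) :
    Module.finrank K ↥((F ⊔ Submodule.span K {z}) ^ n) ≤ e * (c * (n + 1)) := by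
  let s : Finset (ℕ × ℕ) := {p ∈ Finset.HasAntidiagonal.antidiagonal n | p.1 < e}
  have hfg (p : ℕ × ℕ) : (Submodule.span K {z} ^ p.1 * F ^ p.2).FG :=
    ((Submodule.fg_span_singleton z).pow _).mul (hF.pow _)
  have hterm : ∀ p ∈ s, Module.finrank K ↥(Submodule.span K {z} ^ p.1 * F ^ p.2) ≤ c * (n + 1) := by
    intro p hp
    rw [Submodule.span_pow, Set.singleton_pow]
    refine (finrank_span_singleton_mul_le (hF.pow _) _).trans ((hc _).trans ?_)
    gcongr
    have := Finset.HasAntidiagonal.mem_antidiagonal.1 (Finset.mem_filter.1 hp).1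
    lia
  have hs : s.card ≤ e := by
    rw [← Finset.card_range e]
    refine Finset.card_le_card_of_injOn Prod.fst (fun p hp => ?_) fun p hp q hq hpq => ?_
    · simpa using (Finset.mem_filter.1 hp).2
    · have hp' := Finset.HasAntidiagonal.mem_antidiagonal.1 (Finset.mem_filter.1 hp).1
      have hq' := Finset.HasAntidiagonal.mem_antidiagonal.1 (Finset.mem_filter.1 hq).1
      exact Prod.ext hpq (by lia)
  have : Module.Finite K ↥(adjoinPow F (Submodule.span K {z}) e n) :=
    Module.Finite.iff_fg.2 (fg_finsetSum fun p _ => hfg p)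
  calc Module.finrank K ↥((F ⊔ Submodule.span K {z}) ^ n)
      ≤ Module.finrank K ↥(adjoinPow F (.span K {z}) e n) :=
        Submodule.finrank_mono (add_pow_le_adjoinPow hz n)
    _ ≤ ∑ p ∈ s, c * (n + 1) := (finrank_finsetSum_le fun p _ => hfg p).trans
        (Finset.sum_le_sum hterm)
    _ ≤ e * (c * (n + 1)) := by
        rw [Finset.sum_const, smul_eq_mul]
        exact Nat.mul_le_mul_right _ hs

theorem finrank_span_one_pair_pow_le (x : B) (n : ℕ) :
    Module.finrank K ↥(Submodule.span K {1, x} ^ n) ≤ n + 1 := by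
  have hspan (k : ℕ) : (Submodule.span K {x ^ k}).FG := Submodule.fg_span_singleton _
  have hle : Submodule.span K {1, x} ^ n ≤
      ∑ k ∈ Finset.range (n + 1), Submodule.span K {x ^ k} := by
    simp only [← Set.singleton_pow, ← Submodule.span_pow]
    rw [Submodule.span_insert, ← Submodule.one_eq_span, ← Submodule.add_eq_sup]
    exact one_add_pow_le_sum n
  have := Module.Finite.iff_fg.2 (fg_finsetSum (s := Finset.range (n + 1)) fun k _ => hspan k)
  calc Module.finrank K ↥(Submodule.span K {1, x} ^ n)
      ≤ ∑ k ∈ Finset.range (n + 1), Module.finrank K ↥(Submodule.span K {x ^ k}) :=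
        (Submodule.finrank_mono hle).trans (finrank_finsetSum_le fun k _ => hspan k)
    _ ≤ ∑ k ∈ Finset.range (n + 1), 1 := Finset.sum_le_sum fun k _ =>
        (finrank_span_le_card _).trans (by simp)
    _ = n + 1 := by simp

end Adjunction

section RegularInY

theorem aeval_fin_two {R S : Type*} [CommSemiring R] [CommSemiring S] [Algebra R S] (v : Fin 2 → S)
    (f : MvPolynomial (Fin 2) R) :
    aeval v f = ∑ m ∈ f.support, coeff m f • (v 0 ^ m 0 * v 1 ^ m 1) := by
  simp only [aeval_def, eval₂_eq', Fin.prod_univ_two, Algebra.smul_def]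

theorem add_le_totalDegree {R : Type*} [CommSemiring R] {f : MvPolynomial (Fin 2) R}
    {m : Fin 2 →₀ ℕ} (hm : m ∈ f.support) : m 0 + m 1 ≤ f.totalDegree := by
  rw [← Fin.sum_univ_two, ← Finsupp.sum_fintype m (fun _ k => k) fun _ => rfl]
  exact le_totalDegree hm

/-- A polynomial of total degree at most `d` in which `y ^ d` occurs, so that up to a constant it is
monic of degree `d` in `y`: the curve `f = 0` does not meet the line at infinity in the direction of
the `y`-axis. -/
structure IsRegularInY {R : Type*} [CommSemiring R] (f : MvPolynomial (Fin 2) R) (d : ℕ) :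
    Prop where
  totalDegree_le : f.totalDegree ≤ d
  coeff_ne_zero : coeff (Finsupp.single 1 d) f ≠ 0

namespace IsRegularInY

theorem lt_of_ne {R : Type*} [CommSemiring R] {f : MvPolynomial (Fin 2) R} {d : ℕ}
    (hf : IsRegularInY f d) {m : Fin 2 →₀ ℕ} (hm : m ∈ f.support) (hne : m ≠ Finsupp.single 1 d) :
    m 1 < d := by
  have hmd := (add_le_totalDegree hm).trans hf.totalDegree_le
  refine lt_of_not_ge fun h => hne (Finsupp.ext fun i => ?_)
  fin_cases i
  · simpa using (by lia : m 0 = 0)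
  · simpa using (by lia : m 1 = d)

theorem mem_of_sum_smul_eq_zero {K V : Type*} [Field K] [AddCommGroup V] [Module K V]
    {f : MvPolynomial (Fin 2) K} {d : ℕ} (hf : IsRegularInY f d) {N : Submodule K V}
    {φ : (Fin 2 →₀ ℕ) → V} (h : ∑ m ∈ f.support, coeff m f • φ m = 0)
    (hφ : ∀ m : Fin 2 →₀ ℕ, m 0 + m 1 ≤ d → m 1 < d → φ m ∈ N) :
    φ (Finsupp.single 1 d) ∈ N := by
  rw [← Finset.add_sum_erase _ _ (mem_support_iff.2 hf.coeff_ne_zero)] at h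
  rw [← N.smul_mem_iff hf.coeff_ne_zero, eq_neg_of_add_eq_zero_left h]
  refine neg_mem (sum_mem fun m hm => N.smul_mem _ (hφ m ?_ ?_))
  · exact (add_le_totalDegree (Finset.mem_of_mem_erase hm)).trans hf.totalDegree_le
  · exact hf.lt_of_ne (Finset.mem_of_mem_erase hm) (Finset.ne_of_mem_erase hm)

end IsRegularInY

variable {K S : Type*} [Field K] [CommRing S] [Algebra K S] {f : MvPolynomial (Fin 2) K}
  {F : Submodule K S}

theorem mul_pow_mem_adjoinPow (h1 : (1 : S) ∈ F) {k m n e : ℕ} {a z : S} (ha : a ∈ F ^ m)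
    (hk : k < e) (hn : m + k ≤ n) : a * z ^ k ∈ adjoinPow F (Submodule.span K {z}) e n := by
  rw [mul_comm]
  have hle : Submodule.span K {z} ^ k * F ^ (n - k) ≤ adjoinPow F (Submodule.span K {z}) e n :=
    pow_mul_pow_le_adjoinPow hk (by lia)
  refine hle (Submodule.mul_mem_mul ?_ ?_)
  · exact Submodule.pow_mem_pow _ (Submodule.mem_span_singleton_self z) k
  · exact pow_mono_of_one_mem h1 (by lia) ha

theorem IsRegularInY.span_pow_le_adjoinPow {d : ℕ} (hf : IsRegularInY f d) {v : Fin 2 → S}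
    (hv : aeval v f = 0) (h1 : (1 : S) ∈ F) (hx : v 0 ∈ F) :
    Submodule.span K {v 1} ^ d ≤ adjoinPow F (Submodule.span K {v 1}) d d := by
  rw [Submodule.span_pow, Set.singleton_pow, Submodule.span_singleton_le_iff_mem]
  rw [aeval_fin_two] at hv
  simpa using hf.mem_of_sum_smul_eq_zero hv fun m hm hlt =>
    mul_pow_mem_adjoinPow h1 (Submodule.pow_mem_pow _ hx _) hlt hm

/-- The divided difference `(f(x, y) - f(x, z)) / (y - z)` at `(x, y) = v`. -/
noncomputable def dividedDifference (f : MvPolynomial (Fin 2) K) (v : Fin 2 → S) (z : S) : S :=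
  ∑ m ∈ f.support, coeff m f •
    (v 0 ^ m 0 * ∑ i ∈ Finset.range (m 1), v 1 ^ i * z ^ (m 1 - 1 - i))

theorem dividedDifference_mul_sub (f : MvPolynomial (Fin 2) K) (v : Fin 2 → S) (z : S) :
    dividedDifference f v z * (v 1 - z) = aeval v f - aeval ![v 0, z] f := by
  rw [aeval_fin_two, aeval_fin_two, dividedDifference, Finset.sum_mul, ← Finset.sum_sub_distrib]
  refine Finset.sum_congr rfl fun m _ => ?_
  rw [smul_mul_assoc, mul_assoc, (Commute.all _ z).geom_sum₂_mul, mul_sub, smul_sub]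
  rfl

theorem map_dividedDifference {T : Type*} [CommRing T] [Algebra K T] (φ : S →ₐ[K] T)
    (f : MvPolynomial (Fin 2) K) (v : Fin 2 → S) (z : S) :
    φ (dividedDifference f v z) = dividedDifference f (φ ∘ v) (φ z) := by
  simp [dividedDifference]

theorem IsRegularInY.span_pow_le_adjoinPow_of_dividedDifference {e : ℕ}
    (hf : IsRegularInY f (e + 1)) {v : Fin 2 → S} {z : S} (hz : dividedDifference f v z = 0)
    (h1 : (1 : S) ∈ F) (hv : ∀ i, v i ∈ F) :
    Submodule.span K {z} ^ e ≤ adjoinPow F (Submodule.span K {z}) e e := by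
  rw [Submodule.span_pow, Set.singleton_pow, Submodule.span_singleton_le_iff_mem]
  have hpow (i j : ℕ) : v 0 ^ i * v 1 ^ j ∈ F ^ (i + j) := by
    rw [pow_add]
    exact Submodule.mul_mem_mul (Submodule.pow_mem_pow _ (hv 0) i)
      (Submodule.pow_mem_pow _ (hv 1) j)
  have hlead := hf.mem_of_sum_smul_eq_zero (N := adjoinPow F (Submodule.span K {z}) e e) hz
    fun m hm hlt => by
      rw [Finset.mul_sum]
      refine sum_mem fun i hi => ?_
      have hi := Finset.mem_range.1 hi
      rw [← mul_assoc]
      exact mul_pow_mem_adjoinPow h1 (hpow _ i) (by lia) (by lia)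
  rw [Finsupp.single_eq_same, Finsupp.single_eq_of_ne zero_ne_one, pow_zero, one_mul,
    Finset.sum_range_succ'] at hlead
  refine (Submodule.add_mem_iff_right _ (sum_mem fun i hi => ?_)).1 (by simpa using hlead)
  have hi := Finset.mem_range.1 hi
  exact mul_pow_mem_adjoinPow h1 (Submodule.pow_mem_pow _ (hv 1) _) (by lia) (by lia)

end RegularInY

/-- The coordinate ring `K[x, y] / (f)` of the affine plane curve `f = 0`. -/
def CoordRing {K : Type*} [Field K] (f : MvPolynomial (Fin 2) K) : Type _ :=
  MvPolynomial (Fin 2) K ⧸ Ideal.span {f}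

namespace CoordRing

variable {K S : Type*} [Field K] [CommRing S] [Algebra K S] (f : MvPolynomial (Fin 2) K) {d : ℕ}

noncomputable instance : CommRing (CoordRing f) :=
  inferInstanceAs (CommRing (_ ⧸ Ideal.span {f}))

noncomputable instance : Algebra K (CoordRing f) :=
  inferInstanceAs (Algebra K (_ ⧸ Ideal.span {f}))

/-- The function on the curve `f = 0` defined by a polynomial. -/
noncomputable def mk : MvPolynomial (Fin 2) K →ₐ[K] CoordRing f :=
  Ideal.Quotient.mkₐ K _

/-- The coordinate functions on the curve `f = 0`: `x` for `i = 0` and `y` for `i = 1`. -/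
noncomputable def coord (i : Fin 2) : CoordRing f :=
  mk f (X i)

/-- The functions `a + b x + c y`, whose powers filter the coordinate ring by degree. -/
noncomputable def affineForms : Submodule K (CoordRing f) :=
  .span K {1, coord f 0, coord f 1}

theorem isDomain {f : MvPolynomial (Fin 2) K} (hf : Irreducible f) : IsDomain (CoordRing f) :=
  have := (Ideal.span_singleton_prime hf.ne_zero).2 hf.prime
  inferInstanceAs (IsDomain (_ ⧸ Ideal.span {f}))

theorem mk_surjective : Function.Surjective (mk f) :=
  Ideal.Quotient.mkₐ_surjective K _

variable {f} in
theorem mk_eq_zero {P : MvPolynomial (Fin 2) K} : mk f P = 0 ↔ f ∣ P :=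
  Ideal.Quotient.eq_zero_iff_mem.trans Ideal.mem_span_singleton

theorem mk_eq_aeval : mk f = aeval (coord f) :=
  MvPolynomial.algHom_ext fun i => (aeval_X (coord f) i).symm

/-- The point with coordinates `v` of the curve `f = 0`, as a homomorphism on functions. -/
noncomputable def evalAt {v : Fin 2 → S} (hv : aeval v f = 0) : CoordRing f →ₐ[K] S :=
  Ideal.Quotient.liftₐ _ (aeval v) fun P hP => by
    obtain ⟨Q, rfl⟩ := Ideal.mem_span_singleton.1 hP
    rw [map_mul, hv, zero_mul]

variable {f} in
theorem evalAt_mk {v : Fin 2 → S} (hv : aeval v f = 0) (P : MvPolynomial (Fin 2) K) :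
    evalAt f hv (mk f P) = aeval v P :=
  rfl

variable {f} in
theorem evalAt_coord {v : Fin 2 → S} (hv : aeval v f = 0) (i : Fin 2) :
    evalAt f hv (coord f i) = v i := by
  rw [coord, evalAt_mk, aeval_X]

theorem one_mem_affineForms : (1 : CoordRing f) ∈ affineForms f :=
  Submodule.subset_span (by simp)

theorem coord_mem_affineForms (i : Fin 2) : coord f i ∈ affineForms f :=
  Submodule.subset_span (by fin_cases i <;> simp)

variable {f} in
theorem affineForms_le {N : Submodule K (CoordRing f)} (h1 : 1 ∈ N) (h : ∀ i, coord f i ∈ N) :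
    affineForms f ≤ N :=
  Submodule.span_le.2 (Set.insert_subset h1 (Set.pair_subset (h 0) (h 1)))

theorem coord_pow_mul_coord_pow_mem (i j : ℕ) :
    coord f 0 ^ i * coord f 1 ^ j ∈ affineForms f ^ (i + j) := by
  rw [pow_add]
  exact Submodule.mul_mem_mul (Submodule.pow_mem_pow _ (coord_mem_affineForms f 0) i)
    (Submodule.pow_mem_pow _ (coord_mem_affineForms f 1) j)

theorem mk_mem_affineForms_pow {P : MvPolynomial (Fin 2) K} {n : ℕ} (hP : P.totalDegree ≤ n) :
    mk f P ∈ affineForms f ^ n := by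
  rw [mk_eq_aeval, aeval_fin_two]
  exact sum_mem fun m hm => Submodule.smul_mem _ _ <|
    pow_mono_of_one_mem (one_mem_affineForms f) ((add_le_totalDegree hm).trans hP)
      (coord_pow_mul_coord_pow_mem f _ _)

variable {f}

theorem disjoint_restrictSupport_ker_mk (hf : IsRegularInY f d) :
    Disjoint (restrictSupport K {m | m 1 < d}) (LinearMap.ker (mk f).toLinearMap) := by
  rw [Submodule.disjoint_def]
  intro P hP hP0
  obtain ⟨Q, rfl⟩ := mk_eq_zero.1 (LinearMap.mem_ker.1 hP0)
  by_contra hne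
  have hfd := monomial_le_degreeOf 1 (mem_support_iff.2 hf.coeff_ne_zero)
  rw [Finsupp.single_eq_same] at hfd
  have hd : 0 < d := by
    obtain ⟨m, hm⟩ := support_nonempty.2 hne
    exact (Nat.zero_le _).trans_lt (hP hm)
  have hlt : degreeOf 1 (f * Q) < d := (degreeOf_lt_iff hd).2 hP
  rw [degreeOf_mul_eq (left_ne_zero_of_mul hne) (right_ne_zero_of_mul hne)] at hlt
  lia

theorem linearIndependent_coord_pow_mul_coord_pow (hf : IsRegularInY f d) :
    LinearIndependent K fun p : ℕ × Fin d => coord f 0 ^ p.1 * coord f 1 ^ (p.2 : ℕ) := by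
  let m (p : ℕ × Fin d) : Fin 2 →₀ ℕ := Finsupp.single 0 p.1 + Finsupp.single 1 (p.2 : ℕ)
  have hm : Function.Injective m := fun p q h =>
    Prod.ext (by simpa [m] using DFunLike.congr_fun h 0)
      (Fin.ext (by simpa [m] using DFunLike.congr_fun h 1))
  have hspan : Submodule.span K (Set.range (basisMonomials (Fin 2) K ∘ m)) ≤
      restrictSupport K {m | m 1 < d} := by
    rw [Submodule.span_le, Set.range_subset_iff]
    intro p
    rw [Function.comp_apply, coe_basisMonomials, SetLike.mem_coe, monomial_mem_restrictSupport]
    exact .inl (by simp [m])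
  have hmk (p : ℕ × Fin d) : mk f (basisMonomials (Fin 2) K (m p)) =
      coord f 0 ^ p.1 * coord f 1 ^ (p.2 : ℕ) := by
    simp [m, mk_eq_aeval, aeval_monomial, Finsupp.prod_add_index', pow_add]
  simpa only [Function.comp_def, AlgHom.toLinearMap_apply, hmk] using
    ((basisMonomials (Fin 2) K).linearIndependent.comp m hm).map
      ((disjoint_restrictSupport_ker_mk hf).mono_left hspan)

theorem linearIndependent_coord_pow (hf : IsRegularInY f d) (hd : 0 < d) :
    LinearIndependent K fun n : ℕ => coord f 0 ^ n := by
  simpa [Function.comp_def] using (linearIndependent_coord_pow_mul_coord_pow hf).comp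
    (fun n : ℕ => (n, ⟨0, hd⟩)) fun _ _ h => (Prod.mk.inj h).1

theorem aeval_coord_self : aeval (coord f) f = 0 := by
  rw [← mk_eq_aeval, mk_eq_zero]

theorem finrank_affineForms_pow_le (hf : IsRegularInY f d) (n : ℕ) :
    Module.finrank K ↥(affineForms f ^ n) ≤ d * (n + 1) := by
  have hsup : affineForms f = Submodule.span K {1, coord f 0} ⊔ Submodule.span K {coord f 1} := by
    rw [← Submodule.span_union, affineForms, Set.insert_union, Set.singleton_union]
  rw [hsup, ← one_mul (n + 1)]
  refine finrank_sup_span_singleton_pow_le (Submodule.fg_span (Set.toFinite _)) ?_ (fun n => ?_) n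
  · exact hf.span_pow_le_adjoinPow aeval_coord_self (Submodule.subset_span (by simp))
      (Submodule.subset_span (by simp))
  · rw [one_mul]
    exact finrank_span_one_pair_pow_le _ n

theorem le_finrank_affineForms_pow (hf : IsRegularInY f d) (n : ℕ) :
    d * (n + 1) ≤ Module.finrank K ↥(affineForms f ^ (n + d)) := by
  have hli := (linearIndependent_coord_pow_mul_coord_pow hf).comp
    (Prod.map (Fin.val : Fin (n + 1) → ℕ) id) (Fin.val_injective.prodMap Function.injective_id)
  have hle : Submodule.span K (Set.range _) ≤ affineForms f ^ (n + d) :=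
    Submodule.span_le.2 (Set.range_subset_iff.2 fun p : Fin (n + 1) × Fin d =>
      pow_mono_of_one_mem (one_mem_affineForms f) (by have := p.1.2; have := p.2.2; lia)
        (coord_pow_mul_coord_pow_mem f p.1 p.2))
  have : Module.Finite K ↥(affineForms f ^ (n + d)) :=
    Module.Finite.iff_fg.2 ((Submodule.fg_span (Set.toFinite _)).pow _)
  have hcard := (finrank_span_eq_card hli).symm.trans_le (Submodule.finrank_mono hle)
  simpa [mul_comm] using hcard

theorem isCurveFiltration_affineForms (hf : IsRegularInY f d) :
    IsCurveFiltration (affineForms f) d where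
  one_mem := one_mem_affineForms f
  fg := Submodule.fg_span (Set.toFinite _)
  exists_mem_pow b := by
    obtain ⟨P, rfl⟩ := mk_surjective f b
    exact ⟨P.totalDegree, mk_mem_affineForms_pow f le_rfl⟩
  finrank_pow_le := finrank_affineForms_pow_le hf
  le_finrank_pow := le_finrank_affineForms_pow hf

end CoordRing

theorem add_single_mem_support_of_mem_support_pderiv {σ R : Type*} [CommSemiring R]
    {f : MvPolynomial σ R} {i : σ} {m : σ →₀ ℕ} (hm : m ∈ (pderiv i f).support) :
    m + Finsupp.single i 1 ∈ f.support := by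
  rw [mem_support_iff, coeff_pderiv] at hm
  exact mem_support_iff.2 (left_ne_zero_of_mul hm)

theorem totalDegree_pderiv_le {σ R : Type*} [CommSemiring R] (f : MvPolynomial σ R) (i : σ) :
    (pderiv i f).totalDegree ≤ f.totalDegree := by
  refine Finset.sup_le fun m hm => ?_
  refine le_trans ?_ (le_totalDegree (add_single_mem_support_of_mem_support_pderiv hm))
  rw [Finsupp.sum_add_index' (fun _ => rfl) fun _ _ _ => rfl]
  exact Nat.le_add_right _ _

theorem IsRegularInY.pderiv_ne_zero {R : Type*} [CommSemiring R] [NoZeroDivisors R]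
    {f : MvPolynomial (Fin 2) R} {d : ℕ} (hf : IsRegularInY f d) (hd : (d : R) ≠ 0) :
    pderiv 1 f ≠ 0 := by
  obtain _ | e := d
  · simp at hd
  refine ne_zero_iff.2 ⟨Finsupp.single 1 e, ?_⟩
  rw [coeff_pderiv, ← Finsupp.single_add]
  exact mul_ne_zero hf.coeff_ne_zero (by simpa using hd)

namespace CoordRing

variable {K : Type*} [Field K] (f : MvPolynomial (Fin 2) K) {d e : ℕ}

/-- The derivation `f_y ∂/∂x - f_x ∂/∂y` of the coordinate ring of `f = 0`. -/
noncomputable def derivation : Derivation K (CoordRing f) (CoordRing f) :=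
  Derivation.liftOfSurjective (mk_surjective f)
    (d := pderiv 1 f • pderiv 0 - pderiv 0 f • pderiv 1) fun P hP => by
      obtain ⟨Q, rfl⟩ := mk_eq_zero.1 hP
      have hf : mk f f = 0 := mk_eq_zero.2 dvd_rfl
      simp only [Derivation.sub_apply, Derivation.smul_apply, Derivation.leibniz, smul_eq_mul,
        map_sub, map_add, map_mul, hf]
      ring

theorem derivation_mk (P : MvPolynomial (Fin 2) K) :
    derivation f (mk f P) = mk f (pderiv 1 f * pderiv 0 P - pderiv 0 f * pderiv 1 P) := by
  rw [derivation, Derivation.liftOfSurjective_apply, Derivation.sub_apply, Derivation.smul_apply,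
    Derivation.smul_apply, smul_eq_mul, smul_eq_mul]

theorem derivation_coord_zero : derivation f (coord f 0) = mk f (pderiv 1 f) := by
  simp [coord, derivation_mk, pderiv_X]

theorem derivation_coord_one : derivation f (coord f 1) = -mk f (pderiv 0 f) := by
  simp [coord, derivation_mk, pderiv_X]

variable {f}

theorem derivation_mem_affineForms_pow (hf : f.totalDegree ≤ d) {b : CoordRing f}
    (hb : b ∈ affineForms f) : derivation f b ∈ affineForms f ^ d := by
  have hmk (i : Fin 2) : mk f (pderiv i f) ∈ affineForms f ^ d :=
    mk_mem_affineForms_pow f ((totalDegree_pderiv_le f i).trans hf)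
  suffices affineForms f ≤ (affineForms f ^ d).comap (derivation f : CoordRing f →ₗ[K] CoordRing f)
    from this hb
  refine affineForms_le (by simp) fun i => ?_
  rw [Submodule.mem_comap, Derivation.coeFn_coe]
  fin_cases i
  · exact (derivation_coord_zero f).symm ▸ hmk 1
  · exact (derivation_coord_one f).symm ▸ neg_mem (hmk 0)

theorem mk_pderiv_ne_zero (hf : IsRegularInY f d) (hd : (d : K) ≠ 0) : mk f (pderiv 1 f) ≠ 0 := by
  refine fun h => hf.pderiv_ne_zero hd
    (Submodule.disjoint_def.1 (disjoint_restrictSupport_ker_mk hf) _ (fun m hm => ?_) h)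
  have hle := add_le_totalDegree (add_single_mem_support_of_mem_support_pderiv hm)
  have := hf.totalDegree_le
  simp only [Finsupp.add_apply, Finsupp.single_eq_same] at hle
  exact (by lia : m 1 < d)

theorem evalAt_injective {ι : Type*} {v : ι → Fin 2 → K} (hv : ∀ i, aeval (v i) f = 0)
    (hinj : Function.Injective v) : Function.Injective fun i => evalAt f (hv i) :=
  fun i j hij => hinj <| funext fun l => by
    simpa only [evalAt_coord] using DFunLike.congr_fun hij (coord f l)

theorem card_le_of_pderiv_eq_zero (hirr : Irreducible f) (hf : IsRegularInY f d) (hd : (d : K) ≠ 0)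
    {ι : Type*} [Finite ι] {v : ι → Fin 2 → K} (hv : ∀ i, aeval (v i) f = 0)
    (hinj : Function.Injective v) (hfy : ∀ i, aeval (v i) (pderiv 1 f) = 0) :
    Nat.card ι ≤ d * d + d * d := by
  have := isDomain hirr
  have hΦ : mk f (pderiv 1 f) ∈ affineForms f ^ d :=
    mk_mem_affineForms_pow f ((totalDegree_pderiv_le f 1).trans hf.totalDegree_le)
  simpa using (isCurveFiltration_affineForms hf).card_mul_le_of_jet_eq_zero 0
    (mk_pderiv_ne_zero hf hd) hΦ (evalAt_injective hv hinj) (x := 0) (M := 1)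
    (fun i l hl => by simp [Nat.lt_one_iff.1 hl])
    fun i => funext fun l => by
      simpa [jet_apply, evalAt_mk] using hfy i

variable (f) in
/-- The ideal of the curve `{(P, Q) : x(P) = x(Q), (f(x, y(P)) - f(x, y(Q))) / (y(P) - y(Q)) = 0}`
in the square of the curve `f = 0`. That curve contains the pairs of distinct points with the same
`x`-coordinate. -/
noncomputable def offDiagonal : Ideal (CoordRing f ⊗[K] CoordRing f) :=
  Ideal.span {coord f 0 ⊗ₜ 1 - 1 ⊗ₜ coord f 0,
    dividedDifference f (fun i => coord f i ⊗ₜ 1) (1 ⊗ₜ coord f 1)}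

variable (f) in
/-- The first projection of the curve `offDiagonal f`, as a homomorphism on functions. -/
noncomputable def offDiagonalLeft :
    CoordRing f →ₐ[K] (CoordRing f ⊗[K] CoordRing f) ⧸ offDiagonal f :=
  (Ideal.Quotient.mkₐ K (offDiagonal f)).comp Algebra.TensorProduct.includeLeft

variable (f) in
/-- The second projection of the curve `offDiagonal f`, as a homomorphism on functions. -/
noncomputable def offDiagonalRight :
    CoordRing f →ₐ[K] (CoordRing f ⊗[K] CoordRing f) ⧸ offDiagonal f :=
  (Ideal.Quotient.mkₐ K (offDiagonal f)).comp Algebra.TensorProduct.includeRight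

theorem offDiagonalLeft_coord_zero :
    offDiagonalLeft f (coord f 0) = offDiagonalRight f (coord f 0) :=
  Ideal.Quotient.eq.2 (Ideal.subset_span (by simp))

theorem dividedDifference_offDiagonal :
    dividedDifference f (offDiagonalLeft f ∘ coord f) (offDiagonalRight f (coord f 1)) = 0 :=
  (map_dividedDifference (Ideal.Quotient.mkₐ K (offDiagonal f)) f (fun i => coord f i ⊗ₜ 1)
    (1 ⊗ₜ coord f 1)).symm.trans
      (Ideal.Quotient.eq_zero_iff_mem.2 (Ideal.subset_span (by simp)))

theorem map_biPow_offDiagonal_le (a b : ℕ) :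
    (biPow (affineForms f) a b).map (Ideal.Quotient.mkₐ K (offDiagonal f)).toLinearMap ≤
      ((affineForms f).map (offDiagonalLeft f).toLinearMap ⊔
        Submodule.span K {offDiagonalRight f (coord f 1)}) ^ (a + b) := by
  set F := (affineForms f).map (offDiagonalLeft f).toLinearMap
  set F' := F ⊔ Submodule.span K {offDiagonalRight f (coord f 1)}
  have hleft : F ^ a ≤ F' ^ a := pow_left_mono a le_sup_left
  have hcoord : (affineForms f).map (offDiagonalRight f).toLinearMap ≤ F' := by
    refine Submodule.map_le_iff_le_comap.2 (affineForms_le ?_ fun i => ?_)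
    · exact Submodule.mem_sup_left ⟨1, one_mem_affineForms f, by simp⟩
    · fin_cases i
      · exact Submodule.mem_sup_left
          ⟨coord f 0, coord_mem_affineForms f 0, offDiagonalLeft_coord_zero⟩
      · exact Submodule.mem_sup_right (Submodule.mem_span_singleton_self _)
  have hright : (affineForms f).map (offDiagonalRight f).toLinearMap ^ b ≤ F' ^ b :=
    pow_left_mono b hcoord
  refine Submodule.map_le_iff_le_comap.2 (biPow_le_iff.2 fun s hs t ht => ?_)
  have hst : Ideal.Quotient.mkₐ K (offDiagonal f) (s ⊗ₜ t) =
      offDiagonalLeft f s * offDiagonalRight f t := by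
    simp [offDiagonalLeft, offDiagonalRight, ← map_mul]
  rw [Submodule.mem_comap, AlgHom.toLinearMap_apply, hst, pow_add]
  refine Submodule.mul_mem_mul (hleft ?_) (hright ?_)
  · rw [← Submodule.map_pow]
    exact Submodule.mem_map_of_mem hs
  · rw [← Submodule.map_pow]
    exact Submodule.mem_map_of_mem ht

theorem finrank_map_biPow_offDiagonal_le (hf : IsRegularInY f (e + 1)) (a b : ℕ) :
    Module.finrank K ↥((biPow (affineForms f) a b).map
      (Ideal.Quotient.mkₐ K (offDiagonal f)).toLinearMap) ≤ e * (e + 1) * (a + b + 1) := by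
  have hfg := (isCurveFiltration_affineForms hf).fg.map (offDiagonalLeft f).toLinearMap
  have := Module.Finite.iff_fg.2 ((hfg.sup (Submodule.fg_span_singleton
    (offDiagonalRight f (coord f 1)))).pow (a + b))
  refine (Submodule.finrank_mono (map_biPow_offDiagonal_le a b)).trans ?_
  rw [mul_assoc]
  refine finrank_sup_span_singleton_pow_le hfg
    (hf.span_pow_le_adjoinPow_of_dividedDifference dividedDifference_offDiagonal
      ⟨1, one_mem_affineForms f, by simp⟩ fun i => ⟨_, coord_mem_affineForms f i, rfl⟩)
    (fun n => ?_) _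
  have := (isCurveFiltration_affineForms hf).finiteDimensional_pow n
  rw [← Submodule.map_pow]
  exact (Submodule.finrank_map_le _ _).trans (finrank_affineForms_pow_le hf n)

end CoordRing

theorem aeval_pow_card_eq_zero {σ k K S : Type*} [Field k] [Fintype k] [Field K] [Algebra k K]
    [CommRing S] [Algebra K S] {g : MvPolynomial σ k} {v : σ → S}
    (hv : aeval v (map (algebraMap k K) g) = 0) :
    aeval (fun i => v i ^ Fintype.card k) (map (algebraMap k K) g) = 0 := by
  let : Algebra k S := ((algebraMap K S).comp (algebraMap k K)).toAlgebra
  have : IsScalarTower k K S := .of_algebraMap_eq fun _ => rfl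
  rw [aeval_map_algebraMap] at hv ⊢
  have h := comp_aeval_apply v (FiniteField.frobeniusAlgHom k S) g
  rwa [hv, map_zero, eq_comm] at h

namespace CoordRing

variable {k K : Type*} [Field k] [Fintype k] [Field K] [Algebra k K] (g : MvPolynomial (Fin 2) k)

/-- The Frobenius morphism `(x, y) ↦ (x ^ q, y ^ q)` of a curve defined over a field with `q`
elements, after base change to `K`. -/
noncomputable def frobenius :
    CoordRing (map (algebraMap k K) g) →ₐ[K] CoordRing (map (algebraMap k K) g) :=
  evalAt _ (aeval_pow_card_eq_zero aeval_coord_self)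

theorem frobenius_coord (i : Fin 2) :
    frobenius g (coord (map (algebraMap k K) g) i) = coord _ i ^ Fintype.card k :=
  evalAt_coord _ i

theorem frobenius_mem_affineForms_pow {b : CoordRing (map (algebraMap k K) g)}
    (hb : b ∈ affineForms _) : frobenius g b ∈ affineForms _ ^ Fintype.card k := by
  suffices affineForms _ ≤ (affineForms _ ^ Fintype.card k).comap (frobenius g).toLinearMap
    from this hb
  refine affineForms_le ?_ fun i => ?_
  · simpa using Submodule.pow_mem_pow _ (one_mem_affineForms _) (Fintype.card k)
  · simpa [frobenius_coord] using
      Submodule.pow_mem_pow _ (coord_mem_affineForms _ i) (Fintype.card k)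

theorem derivation_frobenius
    (D : Derivation K (CoordRing (map (algebraMap k K) g)) (CoordRing (map (algebraMap k K) g)))
    (b : CoordRing (map (algebraMap k K) g)) : D (frobenius g b) = 0 := by
  have hq : (Fintype.card k : K) = 0 := by
    rw [← map_natCast (algebraMap k K), FiniteField.cast_card_eq_zero, map_zero]
  have hD (i : Fin 2) : D (coord _ i ^ Fintype.card k) = 0 := by
    rw [D.leibniz_pow, ← Nat.cast_smul_eq_nsmul K, hq, zero_smul]
  obtain ⟨P, rfl⟩ := mk_surjective _ b
  rw [mk_eq_aeval, comp_aeval_apply]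
  simp only [frobenius_coord]
  rw [aeval_fin_two, map_sum]
  refine Finset.sum_eq_zero fun m _ => ?_
  rw [D.map_smul, D.leibniz, D.leibniz_pow _ (m 0), D.leibniz_pow _ (m 1), hD, hD]
  simp

end CoordRing

/-- The number of coefficients allotted to the first factor in the auxiliary polynomial for curves
of degree `e + 1` and vanishing order `(e + 1) * m`. -/
def stepanovDegree (e m : ℕ) : ℕ :=
  m * e * (m * e + 2 * (e + 1) + (e + 1) * m * (e + 1))

theorem stepanovDegree_count (e m : ℕ) :
    (e + 1) * m * (e * (e + 1) * (stepanovDegree e m + (e + 1) + (e + 1) * m * (e + 1) +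
      (m * e + (e + 1)) + 1)) <
    (e + 1) * (stepanovDegree e m + 1) * ((e + 1) * (m * e + 1)) := by
  set A := stepanovDegree e m with hA
  rw [stepanovDegree] at hA
  calc _ = (e + 1) * (e + 1) * (m * e * (A + 1) + A) := by
        rw [hA]; ring
    _ < (e + 1) * (e + 1) * (m * e * (A + 1) + (A + 1)) := by gcongr; lia
    _ = _ := by ring

namespace CoordRing

variable {k K : Type*} [Field k] [Fintype k] [Field K] [Algebra k K] {g : MvPolynomial (Fin 2) k}

theorem evalAt_restrictGraph_frobenius_eq_zero {v : Fin 2 → K}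
    (hv : aeval v (map (algebraMap k K) g) = 0) (h0 : v 0 ^ Fintype.card k = v 0)
    (h1 : v 1 ^ Fintype.card k ≠ v 1) {j} (hj : j ∈ offDiagonal (map (algebraMap k K) g)) :
    evalAt _ hv (restrictGraph (frobenius g) j) = 0 := by
  let φ := (evalAt _ hv).comp (restrictGraph (frobenius g))
  have hleft (i : Fin 2) : φ (coord _ i ⊗ₜ 1) = v i := by simp [φ, restrictGraph_tmul, evalAt_coord]
  have hright (i : Fin 2) : φ (1 ⊗ₜ coord _ i) = v i ^ Fintype.card k := by
    simp [φ, restrictGraph_tmul, frobenius_coord, evalAt_coord]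
  suffices offDiagonal _ ≤ RingHom.ker φ from this hj
  refine Ideal.span_le.2 (Set.pair_subset ?_ ?_)
  · simp [hleft, hright, h0]
  · have hq : ![v 0, v 1 ^ Fintype.card k] = fun i => v i ^ Fintype.card k := by
      ext i
      fin_cases i <;> simp [h0]
    have hmul := dividedDifference_mul_sub (map (algebraMap k K) g) v (v 1 ^ Fintype.card k)
    rw [hv, hq, aeval_pow_card_eq_zero hv, sub_zero] at hmul
    rw [SetLike.mem_coe, RingHom.mem_ker, map_dividedDifference, hright,
      show φ ∘ (fun i => coord _ i ⊗ₜ 1) = v from funext hleft]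
    exact (mul_eq_zero.1 hmul).resolve_right (sub_ne_zero.2 h1.symm)

theorem card_mul_le_of_pow_card_ne [IsAlgClosed K] (hirr : Irreducible (map (algebraMap k K) g))
    {e m : ℕ} (hg : IsRegularInY (map (algebraMap k K) g) (e + 1))
    (hq : (e + 1) * (e + 1) * (stepanovDegree e m + (e + 1) + (e + 1)) < Fintype.card k)
    (hfact : ∀ l < (e + 1) * m, (l.factorial : K) ≠ 0)
    {ι : Type*} [Finite ι] {v : ι → Fin 2 → K} (hinj : Function.Injective v)
    (hv : ∀ i, aeval (v i) (map (algebraMap k K) g) = 0)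
    (h0 : ∀ i, v i 0 ^ Fintype.card k = v i 0) (h1 : ∀ i, v i 1 ^ Fintype.card k ≠ v i 1)
    (hy : ∀ i, aeval (v i) (pderiv 1 (map (algebraMap k K) g)) ≠ 0) :
    Nat.card ι * ((e + 1) * m) ≤ (e + 1) * (stepanovDegree e m + (e + 1) +
      Fintype.card k * (m * e + (e + 1))) + (e + 1) * (e + 1) := by
  have := isDomain hirr
  have := Algebra.FiniteType.of_surjective _ (mk_surjective (map (algebraMap k K) g))
  have := isDomain_tensorProduct (K := K) (A := CoordRing (map (algebraMap k K) g))
    (B := CoordRing (map (algebraMap k K) g))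
  refine (isCurveFiltration_affineForms hg).card_mul_le_of_restrictGraph (derivation _)
    (fun b => derivation_mem_affineForms_pow hg.totalDegree_le)
    (finrank_map_biPow_offDiagonal_le hg) (stepanovDegree_count e m) hq
    (coord_mem_affineForms _ 0) (linearIndependent_coord_pow hg e.succ_pos)
    (frobenius_coord g 0) (fun b => frobenius_mem_affineForms_pow g)
    (derivation_frobenius g _) (evalAt_injective hv hinj) (fun i l hl => ?_)
    fun i j => evalAt_restrictGraph_frobenius_eq_zero (hv i) (h0 i) (h1 i)
  rw [derivation_coord_zero, evalAt_mk]
  exact mul_ne_zero (hfact l hl) (pow_ne_zero l (hy i))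

end CoordRing

section Fiber

variable {K : Type*} [Field K] {f : MvPolynomial (Fin 2) K} {d : ℕ}

theorem eval_aeval_C_X (f : MvPolynomial (Fin 2) K) (a b : K) :
    (aeval ![Polynomial.C a, Polynomial.X] f).eval b = aeval ![a, b] f := by
  rw [← Polynomial.coe_aeval_eq_eval, ← AlgHom.coe_restrictScalars' K, comp_aeval_apply]
  congr 2
  ext i
  fin_cases i <;> simp

theorem derivative_aeval_C_X (f : MvPolynomial (Fin 2) K) (a : K) :
    Polynomial.derivative (aeval ![Polynomial.C a, Polynomial.X] f) =
      aeval ![Polynomial.C a, Polynomial.X] (pderiv 1 f) := by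
  induction f using MvPolynomial.induction_on with
  | C c => simp
  | add P Q hP hQ => simp only [map_add, hP, hQ]
  | mul_X P i hP =>
    rw [map_mul, Polynomial.derivative_mul, hP, pderiv_mul, map_add, map_mul, map_mul]
    fin_cases i <;> simp [pderiv_X]

theorem IsRegularInY.degree_aeval_C_X (hf : IsRegularInY f d) (a : K) :
    (aeval ![Polynomial.C a, Polynomial.X] f).degree = d := by
  have hlead : (coeff (Finsupp.single 1 d) f • (Polynomial.X : Polynomial K) ^ d).degree = d := by
    rw [Polynomial.smul_eq_C_mul, Polynomial.degree_C_mul_X_pow _ hf.coeff_ne_zero]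
  have hrest : ∑ m ∈ f.support.erase (Finsupp.single 1 d),
      coeff m f • ((Polynomial.C a) ^ m 0 * Polynomial.X ^ m 1) ∈ Polynomial.degreeLT K d := by
    refine sum_mem fun m hm => Submodule.smul_mem _ _ (Polynomial.mem_degreeLT.2 ?_)
    rw [Finset.mem_erase] at hm
    rw [← Polynomial.C_pow]
    exact (Polynomial.degree_C_mul_X_pow_le _ _).trans_lt
      (WithBot.coe_lt_coe.2 (hf.lt_of_ne hm.2 hm.1))
  rw [aeval_fin_two, ← Finset.add_sum_erase _ _ (mem_support_iff.2 hf.coeff_ne_zero)]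
  simpa [hlead] using Polynomial.degree_add_eq_left_of_degree_lt
    ((Polynomial.mem_degreeLT.1 hrest).trans_eq hlead.symm)

theorem IsRegularInY.setOf_fiber_eq (hf : IsRegularInY f d) (a : K) :
    {v : Fin 2 → K | aeval v f = 0 ∧ v 0 = a} =
      (fun b => ![a, b]) '' (aeval ![Polynomial.C a, Polynomial.X] f).rootSet K := by
  have h0 : aeval ![Polynomial.C a, Polynomial.X] f ≠ 0 := fun h => by
    simpa [h] using hf.degree_aeval_C_X a
  have hroot (b : K) : b ∈ (aeval ![Polynomial.C a, Polynomial.X] f).rootSet K ↔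
      aeval ![a, b] f = 0 := by
    rw [Polynomial.mem_rootSet_of_ne h0, Polynomial.coe_aeval_eq_eval, eval_aeval_C_X]
  ext v
  constructor
  · rintro ⟨hv, rfl⟩
    have hv2 : ![v 0, v 1] = v := by
      ext i
      fin_cases i <;> rfl
    exact ⟨v 1, (hroot _).2 (by rwa [hv2]), hv2⟩
  · rintro ⟨b, hb, rfl⟩
    exact ⟨(hroot b).1 hb, rfl⟩

theorem IsRegularInY.ncard_fiber [IsAlgClosed K] (hf : IsRegularInY f d) {a : K}
    (ha : ∀ v : Fin 2 → K, aeval v f = 0 → v 0 = a → aeval v (pderiv 1 f) ≠ 0) :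
    {v : Fin 2 → K | aeval v f = 0 ∧ v 0 = a}.ncard = d := by
  classical
  have hsep : (aeval ![Polynomial.C a, Polynomial.X] f).Separable := by
    refine (Polynomial.isCoprime_iff_aeval_ne_zero_of_isAlgClosed K K _ _).2 fun b => ?_
    rw [derivative_aeval_C_X, Polynomial.coe_aeval_eq_eval, eval_aeval_C_X, eval_aeval_C_X,
      or_iff_not_imp_left, not_not]
    exact fun hb => ha _ hb rfl
  have hcard := Polynomial.card_rootSet_eq_natDegree (K := K) hsep (IsAlgClosed.splits _)
  have hinj : Function.Injective fun b => ![a, b] := fun b c h => congrFun h 1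
  rw [hf.setOf_fiber_eq, Set.ncard_image_of_injective _ hinj, ← Nat.card_coe_set_eq,
    Nat.card_eq_fintype_card, hcard,
    Polynomial.natDegree_eq_of_degree_eq_some (hf.degree_aeval_C_X a)]

theorem IsRegularInY.finite_setOf_mem (hf : IsRegularInY f d) {s : Set K} (hs : s.Finite) :
    {v : Fin 2 → K | aeval v f = 0 ∧ v 0 ∈ s}.Finite := by
  have hfiber (a : K) : {v : Fin 2 → K | aeval v f = 0 ∧ v 0 = a}.Finite := by
    rw [hf.setOf_fiber_eq a]
    exact (Polynomial.rootSet_finite _ K).image _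
  exact (hs.biUnion fun a _ => hfiber a).subset fun v hv => Set.mem_biUnion hv.2 ⟨hv.1, rfl⟩

theorem IsRegularInY.mul_ncard_le [IsAlgClosed K] (hf : IsRegularInY f d) {s : Set K}
    (hs : s.Finite) : d * s.ncard ≤ {v : Fin 2 → K | aeval v f = 0 ∧ v 0 ∈ s}.ncard +
      d * {v : Fin 2 → K | aeval v f = 0 ∧ v 0 ∈ s ∧ aeval v (pderiv 1 f) = 0}.ncard := by
  classical
  set T := {v : Fin 2 → K | aeval v f = 0 ∧ v 0 ∈ s}
  set B := {v : Fin 2 → K | aeval v f = 0 ∧ v 0 ∈ s ∧ aeval v (pderiv 1 f) = 0}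
  have hT : T.Finite := hf.finite_setOf_mem hs
  have hB : B.Finite := hT.subset fun v hv => ⟨hv.1, hv.2.1⟩
  let good := s \ (fun v => v 0) '' B
  have hgood : good.Finite := hs.sdiff
  have hs_le : s.ncard ≤ good.ncard + B.ncard :=
    (Set.ncard_le_ncard_sdiff_add_ncard _ _ (hB.image _)).trans
      (Nat.add_le_add_left (Set.ncard_image_le hB) _)
  have hgood_le : d * good.ncard ≤ T.ncard := by
    rw [Set.ncard_eq_toFinset_card _ hgood, Set.ncard_eq_toFinset_card _ hT]
    refine (Finset.mul_card_image_le_card_of_maps_to (s := {v ∈ hT.toFinset | v 0 ∈ good})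
      (f := fun v => v 0) (by simp) d fun a ha => ?_).trans (Finset.card_filter_le _ _)
    rw [Set.Finite.mem_toFinset] at ha
    rw [← hf.ncard_fiber fun v hv hva hy => ha.2 ⟨v, ⟨hv, hva ▸ ha.1, hy⟩, hva⟩,
      ← Set.ncard_coe_finset]
    refine Set.ncard_le_ncard ?_ (Finset.finite_toSet _)
    rintro v ⟨hv, rfl⟩
    exact Finset.mem_coe.2 (Finset.mem_filter.2
      ⟨Finset.mem_filter.2 ⟨hT.mem_toFinset.2 ⟨hv, ha.1⟩, ha⟩, rfl⟩)
  calc d * s.ncard ≤ d * (good.ncard + B.ncard) := Nat.mul_le_mul_left d hs_le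
    _ = d * good.ncard + d * B.ncard := Nat.mul_add _ _ _
    _ ≤ _ := Nat.add_le_add_right hgood_le _

end Fiber

theorem range_algebraMap_eq_rootSet (k K : Type*) [Field k] [Fintype k] [Field K] [Algebra k K] :
    Set.range (algebraMap k K) =
      (Polynomial.X ^ Fintype.card k - Polynomial.X : Polynomial K).rootSet K := by
  have h0 := FiniteField.X_pow_card_sub_X_ne_zero K (Fintype.one_lt_card (α := k))
  refine Set.eq_of_subset_of_ncard_le ?_ ?_ (Polynomial.rootSet_finite _ K)
  · rintro _ ⟨a, rfl⟩
    simp [Polynomial.mem_rootSet_of_ne h0, ← map_pow, FiniteField.pow_card]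
  · rw [Set.ncard_range_of_injective (algebraMap k K).injective, Nat.card_eq_fintype_card]
    exact (Polynomial.ncard_rootSet_le _ K).trans_eq
      (FiniteField.X_pow_card_sub_X_natDegree_eq K Fintype.one_lt_card)

theorem mem_range_algebraMap_iff_pow_card_eq {k K : Type*} [Field k] [Fintype k] [Field K]
    [Algebra k K] {a : K} : a ∈ Set.range (algebraMap k K) ↔ a ^ Fintype.card k = a := by
  rw [range_algebraMap_eq_rootSet, Polynomial.mem_rootSet_of_ne
    (FiniteField.X_pow_card_sub_X_ne_zero K (Fintype.one_lt_card (α := k)))]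
  simp [sub_eq_zero]

theorem image_setOf_aeval_eq_zero {k K σ : Type*} [Field k] [Field K] [Algebra k K]
    (g : MvPolynomial σ k) :
    (algebraMap k K ∘ ·) '' {v : σ → k | aeval v g = 0} =
      {v : σ → K | aeval v (map (algebraMap k K) g) = 0 ∧
        ∀ i, v i ∈ Set.range (algebraMap k K)} := by
  have hzero (v : σ → k) : aeval (algebraMap k K ∘ v) (map (algebraMap k K) g) = 0 ↔
      aeval v g = 0 := by
    rw [aeval_map_algebraMap, aeval_algebraMap_eq_zero_iff]
  ext v
  constructor
  · rintro ⟨w, hw, rfl⟩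
    exact ⟨(hzero w).2 hw, fun i => ⟨w i, rfl⟩⟩
  · rintro ⟨hv, hrange⟩
    choose w hw using hrange
    obtain rfl := funext hw
    exact ⟨w, (hzero w).1 hv, rfl⟩

theorem IsRegularInY.ncard_le_of_pderiv {k K : Type*} [Field k] [Finite k] [Field K] [Algebra k K]
    {g : MvPolynomial (Fin 2) k} {d : ℕ} (hg : IsRegularInY (map (algebraMap k K) g) d) :
    {v : Fin 2 → K | aeval v (map (algebraMap k K) g) = 0 ∧
      v 0 ∈ Set.range (algebraMap k K)}.ncard ≤
      {v : Fin 2 → k | aeval v g = 0}.ncard +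
      {v : Fin 2 → K | aeval v (map (algebraMap k K) g) = 0 ∧ v 0 ∈ Set.range (algebraMap k K) ∧
        aeval v (pderiv 1 (map (algebraMap k K) g)) = 0}.ncard +
      {v : Fin 2 → K | aeval v (map (algebraMap k K) g) = 0 ∧ v 0 ∈ Set.range (algebraMap k K) ∧
        v 1 ∉ Set.range (algebraMap k K) ∧
        aeval v (pderiv 1 (map (algebraMap k K) g)) ≠ 0}.ncard := by
  have hfin := hg.finite_setOf_mem (Set.finite_range (algebraMap k K))
  rw [← Set.ncard_image_of_injective _ (algebraMap k K).injective.comp_left,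
    image_setOf_aeval_eq_zero]
  refine (Set.ncard_le_ncard ?_ ?_).trans ((Set.ncard_union_le _ _).trans
    (Nat.add_le_add_right (Set.ncard_union_le _ _) _))
  · rintro v ⟨hv, hv0⟩
    by_cases hy : aeval v (pderiv 1 (map (algebraMap k K) g)) = 0
    · exact .inl (.inr ⟨hv, hv0, hy⟩)
    by_cases hv1 : v 1 ∈ Set.range (algebraMap k K)
    · exact .inl (.inl ⟨hv, Fin.forall_fin_two.2 ⟨hv0, hv1⟩⟩)
    · exact .inr ⟨hv, hv0, hv1, hy⟩
  · refine hfin.subset ?_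
    rintro v ((hv | hv) | hv)
    · exact ⟨hv.1, hv.2 0⟩
    · exact ⟨hv.1, hv.2.1⟩
    · exact ⟨hv.1, hv.2.1⟩

-- Here `T` is the number of points of the curve over the `q` rational values of `x`; of these, `R`
-- are rational, `B` are ramification points of `x`, and `N` are neither. As `T` is about
-- `(e + 1) * q`, vanishing order `(e + 1) * m` with `m = 2 * (e + 1)` in the bound on `N` makes
-- `N` less than `T` by about `q / 2`.
theorem mul_le_of_count {e q A T R B N : ℕ} (hq : (e + 1) * q ≤ T + (e + 1) * B)
    (hT : T ≤ R + B + N) (hB : B ≤ (e + 1) * (e + 1) + (e + 1) * (e + 1))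
    (hN : N * ((e + 1) * (2 * (e + 1))) ≤
      (e + 1) * (A + (e + 1) + q * (2 * (e + 1) * e + (e + 1))) + (e + 1) * (e + 1)) :
    (e + 1) * q ≤ A + 2 * (e + 1) * (R + (e + 2) * (2 * (e + 1) * (e + 1)) + 1) := by
  have hN' : 2 * (e + 1) * N ≤ A + 2 * (e + 1) + q * (2 * (e + 1) * e + (e + 1)) :=
    Nat.le_of_mul_le_mul_left (by linarith) e.succ_pos
  have hB' := Nat.mul_le_mul_left (2 * (e + 1) * (e + 2)) hB
  have hq' := Nat.mul_le_mul_left (2 * (e + 1)) (hq.trans (Nat.add_le_add_right hT _))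
  linarith

namespace CoordRing

variable {k K : Type*} [Field k] [Fintype k] [Field K] [IsAlgClosed K] [Algebra k K]
  {g : MvPolynomial (Fin 2) k} {e : ℕ}

theorem mul_card_le_ncard_zeros (hirr : Irreducible (map (algebraMap k K) g))
    (hg : IsRegularInY (map (algebraMap k K) g) (e + 1))
    (hq : (e + 1) * (e + 1) * (stepanovDegree e (2 * (e + 1)) + (e + 1) + (e + 1)) < Fintype.card k)
    (hfact : ∀ l < (e + 1) * (2 * (e + 1)), (l.factorial : K) ≠ 0) :
    (e + 1) * Fintype.card k ≤ stepanovDegree e (2 * (e + 1)) + 2 * (e + 1) *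
      ({v : Fin 2 → k | aeval v g = 0}.ncard + (e + 2) * (2 * (e + 1) * (e + 1)) + 1) := by
  have hd : ((e + 1 : ℕ) : K) ≠ 0 := by
    have h := hfact (e + 1) (by nlinarith)
    rw [Nat.factorial_succ, Nat.cast_mul] at h
    exact left_ne_zero_of_mul h
  have hrange := Set.finite_range (algebraMap k K)
  have hmul := hg.mul_ncard_le hrange
  rw [Set.ncard_range_of_injective (algebraMap k K).injective, Nat.card_eq_fintype_card] at hmul
  have hfin (p : (Fin 2 → K) → Prop) : Finite {v : Fin 2 → K |
      aeval v (map (algebraMap k K) g) = 0 ∧ v 0 ∈ Set.range (algebraMap k K) ∧ p v} :=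
    ((hg.finite_setOf_mem hrange).subset fun v hv => ⟨hv.1, hv.2.1⟩).to_subtype
  refine mul_le_of_count hmul hg.ncard_le_of_pderiv ?_ ?_ <;> rw [← Nat.card_coe_set_eq]
  · have := hfin fun v => aeval v (pderiv 1 (map (algebraMap k K) g)) = 0
    exact card_le_of_pderiv_eq_zero hirr hg hd (fun v => v.2.1) Subtype.val_injective
      fun v => v.2.2.2
  · have := hfin fun v => v 1 ∉ Set.range (algebraMap k K) ∧
      aeval v (pderiv 1 (map (algebraMap k K) g)) ≠ 0
    exact card_mul_le_of_pow_card_ne hirr hg hq hfact Subtype.val_injective (fun v => v.2.1)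
      (fun v => mem_range_algebraMap_iff_pow_card_eq.1 v.2.2.1)
      (fun v => mt mem_range_algebraMap_iff_pow_card_eq.2 v.2.2.2.1) fun v => v.2.2.2.2

end CoordRing

section Shear

variable {R : Type*} [CommRing R]

/-- The automorphism `f(x, y) ↦ f(x + t y, y)`, a linear change of coordinates used to make a
polynomial regular in `y`. -/
noncomputable def shear (t : R) : MvPolynomial (Fin 2) R ≃ₐ[R] MvPolynomial (Fin 2) R :=
  AlgEquiv.ofAlgHom (aeval ![X 0 + C t * X 1, X 1]) (aeval ![X 0 - C t * X 1, X 1])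
    (algHom_ext fun i => by fin_cases i <;> simp [algHom_C])
    (algHom_ext fun i => by fin_cases i <;> simp [algHom_C])

theorem shear_apply (t : R) (f : MvPolynomial (Fin 2) R) :
    shear t f = aeval ![X 0 + C t * X 1, X 1] f := rfl

theorem aeval_shear {S : Type*} [CommRing S] [Algebra R S] (t : R) (f : MvPolynomial (Fin 2) R)
    (v : Fin 2 → S) : aeval v (shear t f) = aeval ![v 0 + algebraMap R S t * v 1, v 1] f := by
  rw [shear_apply, ← AlgHom.comp_apply, comp_aeval]
  congr 2
  ext i
  fin_cases i <;> simp [algHom_C]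

theorem map_shear {S : Type*} [CommRing S] (φ : R →+* S) (t : R) (f : MvPolynomial (Fin 2) R) :
    map φ (shear t f) = shear (φ t) (map φ f) := by
  rw [shear_apply, shear_apply, aeval_fin_two, aeval_def, eval₂_map, eval₂_eq', map_sum]
  refine Finset.sum_congr rfl fun m _ => ?_
  simp [Algebra.smul_def, Fin.prod_univ_two]

theorem totalDegree_shear_le (t : R) (f : MvPolynomial (Fin 2) R) :
    (shear t f).totalDegree ≤ f.totalDegree := by
  obtain _ | _ := subsingleton_or_nontrivial R
  · rw [Subsingleton.elim (shear t f) f]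
  rw [shear_apply, aeval_fin_two]
  refine totalDegree_finsetSum_le fun m hm => (totalDegree_smul_le _ _).trans ?_
  have h0 : (X 0 + C t * X 1 : MvPolynomial (Fin 2) R).totalDegree ≤ 1 :=
    (totalDegree_add _ _).trans (max_le (totalDegree_X _).le
      ((totalDegree_mul _ _).trans (by simp)))
  refine (totalDegree_mul _ _).trans (le_trans ?_ (add_le_totalDegree hm))
  refine Nat.add_le_add ((totalDegree_pow _ _).trans ?_) ((totalDegree_pow _ _).trans ?_)
  · exact (Nat.mul_le_mul_left _ h0).trans_eq (mul_one _)
  · exact (Nat.mul_le_mul_left _ (totalDegree_X _).le).trans_eq (mul_one _)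

theorem coeff_single_one_eq_coeff_aeval (f : MvPolynomial (Fin 2) R) (n : ℕ) :
    coeff (Finsupp.single 1 n) f = (aeval ![0, Polynomial.X] f : Polynomial R).coeff n := by
  induction f using MvPolynomial.induction_on' with
  | add p q hp hq => rw [coeff_add, hp, hq, map_add, Polynomial.coeff_add]
  | monomial m a =>
    have hm : m = Finsupp.single 1 n ↔ m 0 = 0 ∧ n = m 1 := by
      rw [Finsupp.ext_iff, Fin.forall_fin_two]
      simp [eq_comm]
    rw [coeff_monomial, aeval_monomial, Finsupp.prod_fintype _ _ (by simp), Fin.prod_univ_two]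
    by_cases h0 : m 0 = 0 <;>
      simp [hm, h0, Polynomial.coeff_C_mul, Polynomial.coeff_X_pow]

theorem coeff_single_one_shear (t : R) (f : MvPolynomial (Fin 2) R) (n : ℕ) :
    coeff (Finsupp.single 1 n) (shear t f) =
      ∑ m ∈ f.support with m 0 + m 1 = n, coeff m f * t ^ m 0 := by
  rw [coeff_single_one_eq_coeff_aeval, aeval_shear, aeval_fin_two, Polynomial.finsetSum_coeff,
    Finset.sum_filter]
  refine Finset.sum_congr rfl fun m _ => ?_
  simp only [Matrix.cons_val_zero, Matrix.cons_val_one, zero_add, mul_pow, ← map_pow, mul_assoc,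
    ← pow_add, ← Polynomial.C_eq_algebraMap, Polynomial.coeff_smul, Polynomial.coeff_C_mul_X_pow,
    smul_eq_mul, mul_ite, mul_zero, eq_comm (a := n)]

theorem exists_isRegularInY_shear [IsDomain R] [Infinite R] {f : MvPolynomial (Fin 2) R}
    (hf : f ≠ 0) : ∃ t : R, IsRegularInY (shear t f) f.totalDegree := by
  let Q : Polynomial R := ∑ m ∈ f.support with m 0 + m 1 = f.totalDegree,
    Polynomial.C (coeff m f) * Polynomial.X ^ m 0
  have hQ : Q ≠ 0 := by
    obtain ⟨m, hm, hmd⟩ := Finset.exists_mem_eq_sup f.support (support_nonempty.2 hf)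
      (fun s => s.sum fun _ k => k)
    rw [Finsupp.sum_fintype _ _ fun _ => rfl, Fin.sum_univ_two] at hmd
    have hcoeff : Q.coeff (m 0) = coeff m f := by
      simp only [Q, Polynomial.finsetSum_coeff, Polynomial.coeff_C_mul_X_pow]
      rw [Finset.sum_eq_single_of_mem m (Finset.mem_filter.2 ⟨hm, hmd.symm⟩), if_pos rfl]
      intro m' hm' hne
      refine if_neg fun h0 => hne (Finsupp.ext (Fin.forall_fin_two.2 ⟨h0.symm, ?_⟩))
      have := (Finset.mem_filter.1 hm').2.trans hmd
      lia
    intro h0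
    rw [h0, Polynomial.coeff_zero] at hcoeff
    exact mem_support_iff.1 hm hcoeff.symm
  obtain ⟨t, ht⟩ : ∃ t, Q.eval t ≠ 0 := by
    by_contra! h
    exact hQ (Polynomial.funext fun t => by rw [h t, Polynomial.eval_zero])
  refine ⟨t, totalDegree_shear_le t f, ?_⟩
  rw [coeff_single_one_shear]
  simpa [Q, Polynomial.eval_finsetSum] using ht

theorem ncard_zeros_shear_le {S : Type*} [CommRing S] [Finite S] [Algebra R S] (t : R)
    (f : MvPolynomial (Fin 2) R) :
    {v : Fin 2 → S | aeval v (shear t f) = 0}.ncard ≤ {v : Fin 2 → S | aeval v f = 0}.ncard := by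
  refine Set.ncard_le_ncard_of_injOn (fun v => ![v 0 + algebraMap R S t * v 1, v 1])
    (fun v hv => (aeval_shear t f v).symm.trans hv) (fun v _ w _ h => ?_)
  have h1 : v 1 = w 1 := congrFun h 1
  have h0 : v 0 + algebraMap R S t * v 1 = w 0 + algebraMap R S t * w 1 := congrFun h 0
  exact funext (Fin.forall_fin_two.2 ⟨add_right_cancel (h1 ▸ h0), h1⟩)

end Shear

section Axis

variable {R : Type*} [CommRing R]

theorem fin_two_eq_add_one_of_ne {i j : Fin 2} (h : j ≠ i) : j = i + 1 := by
  revert i j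
  decide

/-- The restriction of a polynomial in two variables to the axis where the `i`-th coordinate
vanishes, as a polynomial in the other coordinate. -/
noncomputable def restrictAxis (i : Fin 2) : MvPolynomial (Fin 2) R →ₐ[R] Polynomial R :=
  aeval (Function.update (fun _ => Polynomial.X) i 0)

theorem X_dvd_of_restrictAxis_eq_zero {i : Fin 2} {f : MvPolynomial (Fin 2) R}
    (hf : restrictAxis i f = 0) : X i ∣ f := by
  have hmk : (Ideal.Quotient.mkₐ R (Ideal.span {X i})).comp
      ((Polynomial.aeval (X (i + 1))).comp (restrictAxis i)) =
      Ideal.Quotient.mkₐ R (Ideal.span {(X i : MvPolynomial (Fin 2) R)}) := by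
    refine algHom_ext fun j => ?_
    obtain rfl | hji := eq_or_ne j i
    · simp [restrictAxis]
    · obtain rfl : j = i + 1 := fin_two_eq_add_one_of_ne hji
      simp [restrictAxis, hji]
  have hmkf := DFunLike.congr_fun hmk f
  rw [AlgHom.comp_apply, AlgHom.comp_apply, hf, map_zero, map_zero] at hmkf
  exact Ideal.mem_span_singleton.1 (Ideal.Quotient.eq_zero_iff_mem.1 hmkf.symm)

theorem aeval_restrictAxis {S : Type*} [CommRing S] [Algebra R S] {i : Fin 2} {v : Fin 2 → S}
    (hv : v i = 0) (f : MvPolynomial (Fin 2) R) :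
    Polynomial.aeval (v (i + 1)) (restrictAxis i f) = aeval v f := by
  rw [restrictAxis, ← AlgHom.comp_apply, comp_aeval]
  congr 2
  ext j
  obtain rfl | hji := eq_or_ne j i
  · simp [hv]
  · obtain rfl : j = i + 1 := fin_two_eq_add_one_of_ne hji
    simp [hji]

theorem ncard_zeros_axis_le {S : Type*} [CommRing S] [IsDomain S] [Algebra R S] {i : Fin 2}
    {f : MvPolynomial (Fin 2) R} (hf : (restrictAxis i f).map (algebraMap R S) ≠ 0) :
    {v : Fin 2 → S | aeval v f = 0 ∧ v i = 0}.ncard ≤ (restrictAxis i f).natDegree := by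
  refine (Set.ncard_le_ncard_of_injOn (· (i + 1)) ?_ ?_ (Polynomial.rootSet_finite _ S)).trans
    (Polynomial.ncard_rootSet_le _ S)
  · rintro v ⟨hv, hi⟩
    exact Polynomial.mem_rootSet'.2 ⟨hf, (aeval_restrictAxis hi f).trans hv⟩
  · rintro v ⟨-, hv⟩ w ⟨-, hw⟩ h
    ext j
    obtain rfl | hji := eq_or_ne j i
    · rw [hv, hw]
    · obtain rfl : j = i + 1 := fin_two_eq_add_one_of_ne hji
      exact h

end Axis

section Reduction

theorem eventually_intCast_zmod_ne_zero {n : ℤ} (hn : n ≠ 0) :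
    ∀ᶠ p : ℕ in Filter.atTop, (n : ZMod p) ≠ 0 := by
  filter_upwards [Filter.eventually_gt_atTop n.natAbs] with p hp h
  rw [ZMod.intCast_zmod_eq_zero_iff_dvd, Int.natCast_dvd] at h
  exact hp.not_ge (Nat.le_of_dvd (Int.natAbs_pos.2 hn) h)

theorem factorial_natCast_ne_zero {R : Type*} [CommSemiring R] {p : ℕ} [CharP R p] (hp : p.Prime)
    {l : ℕ} (hl : l < p) : (l.factorial : R) ≠ 0 := by
  rwa [Ne, CharP.cast_eq_zero_iff R p, hp.dvd_factorial, not_le]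

theorem IsRegularInY.map_of_ne_zero {R R' : Type*} [CommSemiring R] [CommSemiring R']
    {f : MvPolynomial (Fin 2) R} {d : ℕ} (hf : IsRegularInY f d) {φ : R →+* R'}
    (hφ : φ (coeff (Finsupp.single 1 d) f) ≠ 0) : IsRegularInY (map φ f) d :=
  ⟨(totalDegree_map_le φ f).trans hf.totalDegree_le, by rwa [coeff_map]⟩

variable {K : Type*} [Field K] [IsAlgClosed K] [CharZero K] {f : MvPolynomial (Fin 2) ℤ}

theorem IsRegularInY.eventually_lt_ncard_zeros {e : ℕ} (hf : IsRegularInY f (e + 1))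
    (hirr : Irreducible (map (Int.castRingHom K) f)) (N : ℕ) :
    ∀ᶠ p in Filter.atTop, p.Prime → N < {v : Fin 2 → ZMod p | aeval v f = 0}.ncard := by
  obtain ⟨M, hM0, hM⟩ := exists_forall_irreducible_map_intCast hirr
  filter_upwards [eventually_intCast_zmod_ne_zero hM0,
    eventually_intCast_zmod_ne_zero hf.coeff_ne_zero,
    Filter.eventually_gt_atTop
      ((e + 1) * (e + 1) * (stepanovDegree e (2 * (e + 1)) + (e + 1) + (e + 1))),
    Filter.eventually_ge_atTop ((e + 1) * (2 * (e + 1))),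
    Filter.eventually_gt_atTop (stepanovDegree e (2 * (e + 1)) + 2 * (e + 1) *
      (N + (e + 2) * (2 * (e + 1) * (e + 1)) + 1))] with p hMp hcoeff hpq hpfact hpN hp
  have : Fact p.Prime := ⟨hp⟩
  let L := AlgebraicClosure (ZMod p)
  let g := map (Int.castRingHom (ZMod p)) f
  have hg : map (algebraMap (ZMod p) L) g = map (Int.castRingHom L) f := by
    rw [map_map, RingHom.ext_int ((algebraMap (ZMod p) L).comp _) (Int.castRingHom L)]
  have hcast (n : ℤ) (hn : (n : ZMod p) ≠ 0) : (n : L) ≠ 0 := by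
    rwa [← map_intCast (algebraMap (ZMod p) L), Ne, map_eq_zero]
  have : CharP L p := charP_of_injective_algebraMap (algebraMap (ZMod p) L).injective p
  have hcount := CoordRing.mul_card_le_ncard_zeros (k := ZMod p) (K := L) (g := g) (e := e)
    (hg ▸ hM L (hcast M hMp)) (hg ▸ hf.map_of_ne_zero (hcast _ hcoeff)) (by rwa [ZMod.card])
    fun l hl => factorial_natCast_ne_zero hp (hl.trans_le hpfact)
  have hzeros (v : Fin 2 → ZMod p) : aeval v g = aeval v f := aeval_map_algebraMap (ZMod p) v f
  simp only [ZMod.card, hzeros] at hcount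
  by_contra! hle
  have := Nat.mul_le_mul_left (2 * (e + 1)) hle
  nlinarith

theorem eventually_lt_ncard_zeros (hirr : Irreducible (map (Int.castRingHom K) f)) (N : ℕ) :
    ∀ᶠ p in Filter.atTop, p.Prime → N < {v : Fin 2 → ZMod p | aeval v f = 0}.ncard := by
  have hf0 : f ≠ 0 := by
    rintro rfl
    exact hirr.ne_zero (map_zero _)
  obtain ⟨t, ht⟩ := exists_isRegularInY_shear hf0
  obtain ⟨e, he⟩ := Nat.exists_eq_add_one.2
    ((totalDegree_pos_of_irreducible hirr).trans_le (totalDegree_map_le _ f))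
  have hshear : Irreducible (map (Int.castRingHom K) (shear t f)) := by
    rwa [map_shear, MulEquiv.irreducible_iff]
  rw [he] at ht
  filter_upwards [ht.eventually_lt_ncard_zeros hshear N] with p hcount hp
  have : Fact p.Prime := ⟨hp⟩
  exact (hcount hp).trans_le (ncard_zeros_shear_le t f)

theorem eventually_ncard_zeros_axis_le {i : Fin 2} (hf : ¬ X i ∣ f) :
    ∀ᶠ p in Filter.atTop, p.Prime →
      {v : Fin 2 → ZMod p | aeval v f = 0 ∧ v i = 0}.ncard ≤ (restrictAxis i f).natDegree := by
  have hlead : (restrictAxis i f).leadingCoeff ≠ 0 :=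
    Polynomial.leadingCoeff_ne_zero.2 (mt X_dvd_of_restrictAxis_eq_zero hf)
  filter_upwards [eventually_intCast_zmod_ne_zero hlead] with p hlead hp
  have : Fact p.Prime := ⟨hp⟩
  refine ncard_zeros_axis_le fun h => hlead ?_
  simpa using congrArg (Polynomial.coeff · (restrictAxis i f).natDegree) h

end Reduction

theorem stmt2_general {K : Type*} [Field K] [IsAlgClosed K] [CharZero K]
    {F f : MvPolynomial (Fin 2) ℤ} (hX : ∀ i, ¬ X i ∣ f) (hdvd : f ∣ F)
    (hirr : Irreducible (map (Int.castRingHom K) f)) :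
    {p : ℕ | p.Prime ∧ ¬ ∃ x y : ZMod p, x ≠ 0 ∧ y ≠ 0 ∧ aeval ![x, y] F = 0}.Finite := by
  suffices ∀ᶠ p : ℕ in Filter.atTop, p.Prime →
      ∃ x y : ZMod p, x ≠ 0 ∧ y ≠ 0 ∧ aeval ![x, y] F = 0 by
    simpa [← Nat.cofinite_eq_atTop, Filter.eventually_cofinite] using this
  filter_upwards [eventually_lt_ncard_zeros hirr
      ((restrictAxis 0 f).natDegree + (restrictAxis 1 f).natDegree),
    eventually_ncard_zeros_axis_le (hX 0), eventually_ncard_zeros_axis_le (hX 1)]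
    with p hzeros haxis₀ haxis₁ hp
  have : Fact p.Prime := ⟨hp⟩
  have haxes := (Set.ncard_union_le {v : Fin 2 → ZMod p | aeval v f = 0 ∧ v 0 = 0}
    {v | aeval v f = 0 ∧ v 1 = 0}).trans (Nat.add_le_add (haxis₀ hp) (haxis₁ hp))
  obtain ⟨v, hv, hv_axes⟩ := Set.exists_mem_notMem_of_ncard_lt_ncard (haxes.trans_lt (hzeros hp))
  have hvF : aeval v F = 0 := zero_dvd_iff.1 (hv ▸ map_dvd (aeval v) hdvd)
  refine ⟨v 0, v 1, fun h0 => hv_axes (.inl ⟨hv, h0⟩), fun h1 => hv_axes (.inr ⟨hv, h1⟩), ?_⟩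
  rwa [show ![v 0, v 1] = v from FinVec.etaExpand_eq v]

theorem stmt2 (F f : MvPolynomial (Fin 2) ℤ)
    (hF0 : MvPolynomial.eval (fun _ => (0 : ℤ)) F ≠ 0)
    (hdvd : f ∣ F)
    (hirr : Irreducible (MvPolynomial.map (Int.castRingHom ℂ) f)) :
    {p : ℕ | p.Prime ∧ ¬ ∃ x y : ZMod p, x ≠ 0 ∧ y ≠ 0 ∧
        MvPolynomial.aeval ![x, y] F = 0}.Finite :=
  stmt2_general (fun i hi => hF0 (zero_dvd_iff.1
    (by simpa using map_dvd (eval fun _ => (0 : ℤ)) (hi.trans hdvd)))) hdvd hirr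
end

section
/- Let n >= 3 be an integer. Then the polynomial 1 + (x^2 + x^4 + ... + x^{2n}) y^2 + x^{2n+2} y^4, which equals P_w(x^2,y^2) for the word w = X A X^n A X, is irreducible in C[x,y]. -/
open MvPolynomial

/-!
Write `b = x² + x⁴ + ⋯ + x²ⁿ` and `c = x²ⁿ⁺²`. Comparing coefficients of `y`, any nontrivial
factorization of `1 + b y² + c y⁴` makes `b² - 4c` a square, or makes `2a - b` a square for some
square root `a = ±xⁿ⁺¹` of `c`.

If `b² - 4c = r²`, then `(b - r)(b + r) = 4c` is a monomial, so `b - r` and `b + r` are monomials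
and their sum `2b` has at most two terms, while `b` has `n ≥ 3` of them.

If `2a - b` is a square, so is its quotient `f = ±2xⁿ⁻¹ - (1 + x² + ⋯ + x²ⁿ⁻²)` by `x²`, say
`f = g²`. The coefficients of `g` are algebraic integers, `g₀ ≠ 0` and `2 g₀ g₁ = 0`, so `2 g₀ g₂`
is the coefficient of `x²` in `f`. That coefficient is an odd integer, which is absurd.
-/

open scoped Polynomial

section Biquadratic

variable {A : Type*} [CommRing A]

/-- The biquadratic polynomial `1 + b Y² + c Y⁴`, normalized to have constant term `1`, so
that the constant terms of its factors are units. -/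
noncomputable def biquadratic (b c : A) : A[X] :=
  1 + Polynomial.C b * Polynomial.X ^ 2 + Polynomial.C c * Polynomial.X ^ 4

theorem coeff_biquadratic (b c : A) (i : ℕ) :
    (biquadratic b c).coeff i =
      (if i = 0 then 1 else 0) + (if i = 2 then b else 0) + (if i = 4 then c else 0) := by
  simp [biquadratic, Polynomial.coeff_one, Polynomial.coeff_X_pow]

theorem natDegree_biquadratic (b : A) {c : A} (hc : c ≠ 0) :
    (biquadratic b c).natDegree = 4 := by
  unfold biquadratic
  compute_degree!

theorem exists_mul_eq_mul_coeff_zero_eq_one {p q : A[X]} (h : (p * q).coeff 0 = 1) :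
    ∃ p' q' : A[X], p * q = p' * q' ∧ p'.natDegree = p.natDegree ∧ q'.natDegree = q.natDegree ∧
      p'.coeff 0 = 1 ∧ q'.coeff 0 = 1 := by
  rw [Polynomial.mul_coeff_zero] at h
  have h' : q.coeff 0 * p.coeff 0 = 1 := by rwa [mul_comm]
  refine ⟨Polynomial.C (q.coeff 0) * p, Polynomial.C (p.coeff 0) * q, ?_,
    Polynomial.natDegree_C_mul_eq_of_mul_eq_one h,
    Polynomial.natDegree_C_mul_eq_of_mul_eq_one h', ?_, ?_⟩
  · have hC : Polynomial.C (p.coeff 0) * Polynomial.C (q.coeff 0) = 1 := by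
      rw [← Polynomial.C_mul, h, Polynomial.C_1]
    linear_combination -(p * q) * hC
  · rw [Polynomial.coeff_C_mul, h']
  · rw [Polynomial.coeff_C_mul, h]

variable [IsDomain A] {b c : A}

-- The hypotheses compare coefficients in
-- `1 + b Y² + c Y⁴ = (1 + u Y + v Y²) (1 - u Y + v' Y² + w Y³)`.
theorem isSquare_or_of_coeff_relations {u v v' w : A} (h₂ : v' - u ^ 2 + v = b)
    (h₃ : w + u * v' - v * u = 0) (h₄ : u * w + v * v' = c) (h₅ : v = 0 ∨ w = 0) :
    IsSquare (b ^ 2 - 4 * c) ∨ ∃ a, a ^ 2 = c ∧ IsSquare (2 * a - b) := by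
  subst h₂ h₄
  rcases h₅ with rfl | rfl
  · have hw : w = -(u * v') := by linear_combination h₃
    exact .inl ⟨v' + u ^ 2, by rw [hw]; ring⟩
  · have h_or : u = 0 ∨ v' - v = 0 := by
      rw [← mul_eq_zero]
      linear_combination h₃
    rcases h_or with rfl | h_eq
    · exact .inl ⟨v - v', by ring⟩
    · obtain rfl := sub_eq_zero.1 h_eq
      exact .inr ⟨v', by ring, u, by ring⟩

theorem isSquare_or_of_biquadratic_eq_mul {p q : A[X]} (hp : p.natDegree ≤ 2)
    (hq : q.natDegree ≤ 3) (hp₀ : p.coeff 0 = 1) (hq₀ : q.coeff 0 = 1)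
    (h : biquadratic b c = p * q) :
    IsSquare (b ^ 2 - 4 * c) ∨ ∃ a, a ^ 2 = c ∧ IsSquare (2 * a - b) := by
  have coeff_eq (i : ℕ) : (p * q).coeff i = (biquadratic b c).coeff i := by rw [h]
  simp only [coeff_biquadratic, Polynomial.coeff_mul,
    Finset.Nat.sum_antidiagonal_eq_sum_range_succ_mk] at coeff_eq
  have hp_zero (i : ℕ) (hi : 2 < i) : p.coeff i = 0 :=
    Polynomial.coeff_eq_zero_of_natDegree_lt (by lia)
  have hq_zero (i : ℕ) (hi : 3 < i) : q.coeff i = 0 :=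
    Polynomial.coeff_eq_zero_of_natDegree_lt (by lia)
  have h₁ : q.coeff 1 + p.coeff 1 = 0 := by
    simpa [Finset.sum_range_succ, hp₀, hq₀] using coeff_eq 1
  have h₂ : q.coeff 2 + p.coeff 1 * q.coeff 1 + p.coeff 2 = b := by
    simpa [Finset.sum_range_succ, hp₀, hq₀] using coeff_eq 2
  have h₃ : q.coeff 3 + p.coeff 1 * q.coeff 2 + p.coeff 2 * q.coeff 1 = 0 := by
    simpa [Finset.sum_range_succ, hp₀, hp_zero] using coeff_eq 3
  have h₄ : p.coeff 1 * q.coeff 3 + p.coeff 2 * q.coeff 2 = c := by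
    simpa [Finset.sum_range_succ, hp_zero, hq_zero] using coeff_eq 4
  have h₅ : p.coeff 2 = 0 ∨ q.coeff 3 = 0 := by
    simpa [Finset.sum_range_succ, hp_zero, hq_zero] using coeff_eq 5
  exact isSquare_or_of_coeff_relations (by linear_combination h₂ - p.coeff 1 * h₁)
    (by linear_combination h₃ - p.coeff 2 * h₁) h₄ h₅

theorem irreducible_biquadratic (hdisc : ¬ IsSquare (b ^ 2 - 4 * c))
    (hsqrt : ∀ a, a ^ 2 = c → ¬ IsSquare (2 * a - b)) : Irreducible (biquadratic b c) := by
  have hc : c ≠ 0 := by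
    rintro rfl
    exact hdisc ⟨b, by ring⟩
  have hdeg := natDegree_biquadratic b hc
  have isUnit_left {p q : A[X]} (h : biquadratic b c = p * q) (hle : p.natDegree ≤ q.natDegree) :
      IsUnit p := by
    have h_coeff : (p * q).coeff 0 = 1 := by rw [← h]; simp [coeff_biquadratic]
    have h_add : p.natDegree + q.natDegree = 4 := by
      have hpq : p * q ≠ 0 := fun h₀ ↦ by simp [h₀] at h_coeff
      rw [← Polynomial.natDegree_mul (left_ne_zero_of_mul hpq) (right_ne_zero_of_mul hpq), ← h,
        hdeg]
    by_cases hp : p.natDegree = 0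
    · rw [Polynomial.mul_coeff_zero] at h_coeff
      rw [Polynomial.eq_C_of_natDegree_eq_zero hp]
      exact (IsUnit.of_mul_eq_one _ h_coeff).map Polynomial.C
    · obtain ⟨p', q', h_mul, hp', hq', hp₀, hq₀⟩ := exists_mul_eq_mul_coeff_zero_eq_one h_coeff
      rcases isSquare_or_of_biquadratic_eq_mul (by lia) (by lia) hp₀ hq₀ (h.trans h_mul)
        with hsq | ⟨a, ha, hsq⟩
      · exact absurd hsq hdisc
      · exact absurd hsq (hsqrt a ha)
  refine ⟨fun hu ↦ ?_, fun p q h ↦ ?_⟩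
  · have := Polynomial.natDegree_eq_zero_of_isUnit hu
    lia
  · rcases le_total p.natDegree q.natDegree with hle | hle
    · exact .inl (isUnit_left h hle)
    · exact .inr (isUnit_left (h.trans (mul_comm p q)) hle)

end Biquadratic

section Integrality

variable {A B : Type*} [CommRing A] [CommRing B] [Algebra A B]

theorem dvd_of_algebraMap_mul_eq_of_isIntegral [IsDomain A] [IsIntegrallyClosed A] [IsDomain B]
    [Module.IsTorsionFree A B] {a b : A} (hb : b ≠ 0) {z : B} (hz : IsIntegral A z)
    (h : algebraMap A B b * z = algebraMap A B a) : b ∣ a := by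
  have h_deg : (Polynomial.C b * Polynomial.X - Polynomial.C a).natDegree = 1 := by
    compute_degree!
  have h_root : Polynomial.aeval z (Polynomial.C b * Polynomial.X - Polynomial.C a) = 0 := by
    simp [h]
  have h_min (q : A[X]) (hq : q.Monic) (hq_root : q.aeval z = 0) :
      (Polynomial.C b * Polynomial.X - Polynomial.C a).degree ≤ q.degree := by
    have hq_deg : 0 < q.natDegree :=
      Polynomial.natDegree_pos_of_aeval_root hq.ne_zero hq_root fun _ ↦
        (FaithfulSMul.algebraMap_eq_zero_iff A B).1
    rw [Polynomial.degree_eq_natDegree hq.ne_zero]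
    exact Polynomial.degree_le_of_natDegree_le (h_deg.trans_le hq_deg)
  have h_dvd := (minpoly.IsIntegrallyClosed.isIntegral_iff_leadingCoeff_dvd h_root
    (Polynomial.ne_zero_of_natDegree_gt (n := 0) (by rw [h_deg]; exact one_pos)) h_min).1 hz
  simpa [Polynomial.leadingCoeff, h_deg] using Polynomial.C_dvd_iff_dvd_coeff _ _ |>.1 h_dvd 0

attribute [local instance] Polynomial.algebra in
theorem isIntegral_coeff_of_map_eq_mul_self {f : A[X]} {g : B[X]}
    (h : f.map (algebraMap A B) = g * g) (i : ℕ) : IsIntegral A (g.coeff i) := by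
  have hg : IsIntegral A[X] (g ^ 2) := by
    rw [sq, ← h]
    exact isIntegral_algebraMap
  exact (hg.of_pow two_pos).coeff i

end Integrality

section Squares

theorem isSquare_of_isSquare_prime_sq_mul {M : Type*} [CommMonoidWithZero M] [IsCancelMulZero M]
    {p f : M} (hp : Prime p) (h : IsSquare (p ^ 2 * f)) : IsSquare f := by
  obtain ⟨r, hr⟩ := h
  obtain ⟨s, rfl⟩ : p ∣ r := by
    apply hp.dvd_of_dvd_pow (n := 2)
    exact ⟨p * f, by rw [sq r, ← hr, sq, mul_assoc]⟩
  refine ⟨s, mul_left_cancel₀ (pow_ne_zero 2 hp.ne_zero) ?_⟩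
  rw [hr, sq, mul_mul_mul_comm]

variable {R : Type*} [CommRing R] [IsDomain R]

theorem card_support_le_one_of_dvd_monomial {p : R[X]} {k : ℕ} {a : R} (ha : a ≠ 0)
    (h : p ∣ Polynomial.monomial k a) : p.support.card ≤ 1 := by
  obtain ⟨q, hq⟩ := h
  have hpq : p * q ≠ 0 := by rwa [← hq, Ne, Polynomial.monomial_eq_zero_iff]
  have hp := left_ne_zero_of_mul hpq
  have hq₀ := right_ne_zero_of_mul hpq
  have h_deg : p.natDegree + q.natDegree = k := by
    rw [← Polynomial.natDegree_mul hp hq₀, ← hq, Polynomial.natDegree_monomial_eq k ha]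
  have h_trailing : p.natTrailingDegree + q.natTrailingDegree = k := by
    rw [← Polynomial.natTrailingDegree_mul hp hq₀, ← hq, Polynomial.natTrailingDegree_monomial ha]
  have := q.natTrailingDegree_le_natDegree
  refine Finset.card_le_one_iff_subset_singleton.2 ⟨p.natDegree, fun i hi ↦ ?_⟩
  have := Polynomial.le_natDegree_of_mem_supp i hi
  have := Polynomial.natTrailingDegree_le_of_mem_supp i hi
  rw [Finset.mem_singleton]
  lia

theorem card_support_le_two_of_isSquare_sq_sub_monomial (h2 : (2 : R) ≠ 0) {p : R[X]} {k : ℕ}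
    {a : R} (ha : a ≠ 0) (h : IsSquare (p ^ 2 - Polynomial.monomial k a)) :
    p.support.card ≤ 2 := by
  obtain ⟨r, hr⟩ := h
  have h_mul : (p - r) * (p + r) = Polynomial.monomial k a := by linear_combination hr
  have h_sub := card_support_le_one_of_dvd_monomial ha (Dvd.intro _ h_mul)
  have h_add := card_support_le_one_of_dvd_monomial ha (Dvd.intro_left _ h_mul)
  have h_support : p.support ⊆ (p - r).support ∪ (p + r).support := by
    intro i hi
    have h_two : (p - r).coeff i + (p + r).coeff i = 2 * p.coeff i := by
      rw [Polynomial.coeff_sub, Polynomial.coeff_add]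
      ring
    have : 2 * p.coeff i ≠ 0 := mul_ne_zero h2 (Polynomial.mem_support_iff.1 hi)
    simp only [Finset.mem_union, Polynomial.mem_support_iff]
    by_contra! h_zero
    exact this (by rw [← h_two, h_zero.1, h_zero.2, add_zero])
  calc p.support.card ≤ ((p - r).support ∪ (p + r).support).card := Finset.card_le_card h_support
    _ ≤ (p - r).support.card + (p + r).support.card := Finset.card_union_le _ _
    _ ≤ 2 := by lia

theorem not_isSquare_map_of_odd_coeff_two [CharZero R] {f : ℤ[X]} (h₀ : f.coeff 0 ≠ 0)
    (h₁ : f.coeff 1 = 0) (h₂ : Odd (f.coeff 2)) : ¬ IsSquare (f.map (algebraMap ℤ R)) := by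
  rintro ⟨g, hg⟩
  have coeff_eq (i : ℕ) : (f.coeff i : R) = (g * g).coeff i := by
    simp [← hg]
  have hg₀ : g.coeff 0 ≠ 0 := by
    intro h
    simpa [h, h₀] using coeff_eq 0
  have hg₁ : g.coeff 1 = 0 := by
    have : 2 * (g.coeff 0 * g.coeff 1) = 0 := by
      have := coeff_eq 1
      rw [h₁, Int.cast_zero, Polynomial.mul_coeff_one] at this
      linear_combination -this
    simpa [hg₀] using this
  have hg₂ : 2 * (g.coeff 0 * g.coeff 2) = (f.coeff 2 : R) := by
    have := coeff_eq 2
    rw [Polynomial.coeff_mul, Finset.Nat.sum_antidiagonal_eq_sum_range_succ_mk] at this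
    simp only [Finset.sum_range_succ, Finset.sum_range_zero, Nat.reduceSub, hg₁] at this
    linear_combination -this
  have h_int := isIntegral_coeff_of_map_eq_mul_self hg
  have h_dvd : (2 : ℤ) ∣ f.coeff 2 :=
    dvd_of_algebraMap_mul_eq_of_isIntegral two_ne_zero ((h_int 0).mul (h_int 2))
      (by simpa using hg₂)
  exact Int.not_even_iff_odd.2 h₂ (even_iff_two_dvd.2 h_dvd)

end Squares

section EvenGeomSum

variable (R : Type*) [CommRing R] (n : ℕ)

/-- The polynomial `1 + X² + X⁴ + ⋯ + X²ⁿ⁻²` with `n` terms; `X²` times it is the coefficient of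
`y²` in the word polynomial. -/
noncomputable def evenGeomSum : R[X] :=
  ∑ k ∈ Finset.range n, Polynomial.X ^ (2 * k)

theorem map_evenGeomSum {S : Type*} [CommRing S] (φ : R →+* S) :
    (evenGeomSum R n).map φ = evenGeomSum S n := by
  simp [evenGeomSum, Polynomial.map_sum]

theorem coeff_evenGeomSum (i : ℕ) :
    (evenGeomSum R n).coeff i = if Even i ∧ i < 2 * n then 1 else 0 := by
  simp only [evenGeomSum, Polynomial.finsetSum_coeff, Polynomial.coeff_X_pow]
  rcases Nat.even_or_odd' i with ⟨j, rfl | rfl⟩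
  · simp
  · have h_ne (k : ℕ) : 2 * j + 1 ≠ 2 * k := by lia
    simp [h_ne]

theorem le_card_support_X_sq_mul_evenGeomSum [Nontrivial R] :
    n ≤ (Polynomial.X ^ 2 * evenGeomSum R n).support.card := by
  have h_inj : Function.Injective fun k ↦ 2 * k + 2 := fun i j h ↦ by simpa using h
  calc n = ((Finset.range n).image fun k ↦ 2 * k + 2).card := by
        rw [Finset.card_image_of_injective _ h_inj, Finset.card_range]
    _ ≤ _ := by
      refine Finset.card_le_card (Finset.image_subset_iff.2 fun k hk ↦ ?_)
      rw [Polynomial.mem_support_iff, Polynomial.coeff_X_pow_mul, coeff_evenGeomSum]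
      simpa using hk

end EvenGeomSum

section Irreducibility

variable {R : Type*} [CommRing R] [IsDomain R] [CharZero R] {n : ℕ}

theorem not_isSquare_discrim (hn : 3 ≤ n) :
    ¬ IsSquare ((Polynomial.X ^ 2 * evenGeomSum R n) ^ 2 - 4 * Polynomial.X ^ (2 * n + 2)) := by
  intro h
  have h_monomial : (4 * Polynomial.X ^ (2 * n + 2) : R[X]) = Polynomial.monomial (2 * n + 2) 4 :=
    Polynomial.C_mul_X_pow_eq_monomial
  rw [h_monomial] at h
  have := card_support_le_two_of_isSquare_sq_sub_monomial two_ne_zero (by norm_num) h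
  have := le_card_support_X_sq_mul_evenGeomSum R n
  lia

theorem not_isSquare_two_mul_X_pow_sub_evenGeomSum {ε : ℤ} {m : ℕ} (hm : 2 ≤ m) (hn : 2 ≤ n) :
    ¬ IsSquare (2 * ((ε : R[X]) * Polynomial.X ^ m) - evenGeomSum R n) := by
  set f : ℤ[X] := 2 * (Polynomial.C ε * Polynomial.X ^ m) - evenGeomSum ℤ n with hf
  have h_coeff (i : ℕ) : f.coeff i =
      2 * (if i = m then ε else 0) - if Even i ∧ i < 2 * n then 1 else 0 := by
    rw [hf, Polynomial.coeff_sub, Polynomial.coeff_ofNat_mul, Polynomial.coeff_C_mul_X_pow,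
      coeff_evenGeomSum]
  have h_map : f.map (algebraMap ℤ R) =
      2 * ((ε : R[X]) * Polynomial.X ^ m) - evenGeomSum R n := by
    simp [hf, map_evenGeomSum]
  rw [← h_map]
  apply not_isSquare_map_of_odd_coeff_two
  · rw [h_coeff, if_neg (by lia), if_pos ⟨Even.zero, by lia⟩]
    norm_num
  · rw [h_coeff, if_neg (by lia), if_neg fun h ↦ Nat.not_even_one h.1]
    norm_num
  · rw [h_coeff, if_pos (c := Even 2 ∧ _) ⟨even_two, by lia⟩]
    exact (even_two_mul _).sub_odd odd_one

theorem not_isSquare_two_mul_sqrt_sub (hn : 3 ≤ n) {a : R[X]}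
    (ha : a ^ 2 = Polynomial.X ^ (2 * n + 2)) :
    ¬ IsSquare (2 * a - Polynomial.X ^ 2 * evenGeomSum R n) := by
  obtain ⟨ε, rfl⟩ : ∃ ε : ℤ, a = (ε : R[X]) * Polynomial.X ^ (n + 1) := by
    have h_sq : a ^ 2 = (Polynomial.X ^ (n + 1)) ^ 2 := by rw [ha]; ring
    rcases sq_eq_sq_iff_eq_or_eq_neg.1 h_sq with h | h
    · exact ⟨1, by simpa using h⟩
    · exact ⟨-1, by simpa using h⟩
  intro h
  obtain ⟨m, rfl⟩ : ∃ m, n = m + 1 := ⟨n - 1, by lia⟩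
  refine not_isSquare_two_mul_X_pow_sub_evenGeomSum (R := R) (ε := ε) (m := m) (n := m + 1)
    (by lia) (by lia) ?_
  apply isSquare_of_isSquare_prime_sq_mul Polynomial.prime_X
  convert! h using 1
  ring

end Irreducibility

theorem stmt6_general (R : Type*) [CommRing R] [IsDomain R] [CharZero R] (n : ℕ) (hn : 3 ≤ n) :
    Irreducible
      ((1 : MvPolynomial (Fin 2) R) +
        (∑ k ∈ Finset.range n, (X 0 : MvPolynomial (Fin 2) R) ^ (2 * (k + 1))) * X 1 ^ 2 +
        X 0 ^ (2 * n + 2) * X 1 ^ 4) := by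
  have h_irr : Irreducible
      (biquadratic (Polynomial.X ^ 2 * evenGeomSum R n) (Polynomial.X ^ (2 * n + 2))) :=
    irreducible_biquadratic (not_isSquare_discrim hn) fun _ ↦ not_isSquare_two_mul_sqrt_sub hn
  convert! h_irr.map (Polynomial.Bivariate.equivMvPolynomial R)
  simp [biquadratic, evenGeomSum, Finset.mul_sum, ← pow_add, mul_add, add_comm]

/-- For an integer `n ≥ 3`, the polynomial
`1 + (x² + x⁴ + ⋯ + x^{2n}) y² + x^{2n+2} y⁴`, which equals `P_w(x², y²)` for
the word `w = X A Xⁿ A X`, is irreducible in `ℂ[x,y]`. -/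
theorem stmt6 (n : ℕ) (hn : 3 ≤ n) :
    Irreducible
      ((1 : MvPolynomial (Fin 2) ℂ) +
        (∑ k ∈ Finset.range n, (X 0 : MvPolynomial (Fin 2) ℂ) ^ (2 * (k + 1))) * X 1 ^ 2 +
        X 0 ^ (2 * n + 2) * X 1 ^ 4) :=
  stmt6_general ℂ n hn
end

section
/- For distinct positive integers m and n, the word X^m A X^n is not universal: there exist a uniquely divisible group G and elements a, b in G such that the equation x^m * a * x^n = b has no solution x in G. -/
/-!
In `ℂ ⋊ ℚ`, where `q : ℚ` acts as multiplication by `z ^ q`, take `a` to be the element `1` of `ℚ`.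
If the `ℚ`-coordinate of `b` is `2 * m + 1 + 2 * n`, a solution `x` of `x ^ m * a * x ^ n = b` has
`ℚ`-coordinate `2`. The `ℂ`-coordinate of the left side is then the `ℂ`-coordinate of `x` times
`(1 + z ^ 2 + ⋯ + z ^ (2 * m - 2)) + z ^ (2 * m + 1) * (1 + z ^ 2 + ⋯ + z ^ (2 * n - 2))`.
For `0 < m < n` this polynomial is `1` at `0` and `m - n < 0` at `-1`, so it has a root `z` in
`(-1, 0)`, and for that `z` no `b` with nonzero `ℂ`-coordinate is reached. The group is uniquely
divisible because no `z ^ q` with `q ≠ 0` is a root of unity. The case `m > n` follows by inverting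
the equation.
-/

open Finset Function Multiplicative

namespace UniquelyDivisible

variable {G : Type*} [Group G]

theorem pow_left_injective (hG : UniquelyDivisible G) {k : ℕ} (hk : 0 < k) :
    Injective fun x : G ↦ x ^ k :=
  fun _ y hxy ↦ (hG (y ^ k) k hk).unique hxy rfl

theorem multiplicative (V : Type*) [AddCommGroup V] [Module ℚ V] :
    UniquelyDivisible (Multiplicative V) := by
  intro b k hk
  have hk' : (k : ℚ) ≠ 0 := by positivity
  refine ⟨ofAdd ((k : ℚ)⁻¹ • b.toAdd), ?_, ?_⟩
  · apply toAdd.injective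
    rw [toAdd_pow, toAdd_ofAdd, ← Nat.cast_smul_eq_nsmul ℚ, smul_inv_smul₀ hk']
  · rintro y rfl
    apply toAdd.injective
    rw [toAdd_pow, toAdd_ofAdd, ← Nat.cast_smul_eq_nsmul ℚ, inv_smul_smul₀ hk']

end UniquelyDivisible

section SemidirectProduct

variable {N H : Type*} [CommGroup N] [Group H] (φ : H →* MulAut N)

/-- The norm `u ↦ u * φ h u * ⋯ * φ (h ^ (k - 1)) u` of the action of `h`, which is the
`N`-coordinate of `(u, h) ^ k` in `N ⋊[φ] H`. -/
def actionNorm (h : H) (k : ℕ) (u : N) : N :=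
  ∏ i ∈ range k, φ (h ^ i) u

variable {φ}

theorem semidirectProduct_pow_right (x : N ⋊[φ] H) (k : ℕ) : (x ^ k).right = x.right ^ k :=
  map_pow SemidirectProduct.rightHom x k

theorem semidirectProduct_pow_left (x : N ⋊[φ] H) (k : ℕ) :
    (x ^ k).left = actionNorm φ x.right k x.left := by
  induction k with
  | zero => simp [actionNorm]
  | succ k ih =>
    rw [pow_succ, SemidirectProduct.mul_left, ih, semidirectProduct_pow_right, actionNorm,
      actionNorm, prod_range_succ]

theorem semidirectProduct_left_pow_mul_inr_mul_pow (x : N ⋊[φ] H) (c : H) (m n : ℕ) :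
    (x ^ m * SemidirectProduct.inr c * x ^ n).left =
      actionNorm φ x.right m x.left * φ (x.right ^ m * c) (actionNorm φ x.right n x.left) := by
  simp only [SemidirectProduct.mul_left, SemidirectProduct.mul_right, SemidirectProduct.left_inr,
    SemidirectProduct.right_inr, semidirectProduct_pow_left, semidirectProduct_pow_right, map_one,
    mul_one]

theorem UniquelyDivisible.semidirectProduct (hH : UniquelyDivisible H)
    (hφ : ∀ (h : H) (k : ℕ), 0 < k → Bijective (actionNorm φ h k)) :
    UniquelyDivisible (N ⋊[φ] H) := by
  intro b k hk
  obtain ⟨h, hh, h_unique⟩ := hH b.right k hk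
  obtain ⟨u, hu, u_unique⟩ := (hφ h k hk).existsUnique b.left
  refine ⟨⟨u, h⟩, ?_, fun y hy ↦ ?_⟩
  · ext
    · rw [semidirectProduct_pow_left, hu]
    · rw [semidirectProduct_pow_right, hh]
  · have y_right : y.right = h := by
      apply h_unique
      rw [← hy, semidirectProduct_pow_right]
    have y_left : y.left = u := by
      apply u_unique
      rw [← hy, semidirectProduct_pow_left, y_right]
    exact SemidirectProduct.ext y_left y_right

end SemidirectProduct

section Scaling

variable {R H : Type*} [Ring R] [Group H]

/-- The action of `H` on the additive group of `R` by multiplication through `χ : H →* Rˣ`, written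
multiplicatively so that `Multiplicative R ⋊[scaling χ] H` is the group of pairs `(u, h)` acting as
the affine maps `t ↦ u + χ h * t`. -/
def scaling (χ : H →* Rˣ) : H →* MulAut (Multiplicative R) :=
  (MulAutMultiplicative R).symm.toMonoidHom.comp (AddAut.mulLeft.comp χ)

theorem scaling_apply (χ : H →* Rˣ) (h : H) (u : Multiplicative R) :
    scaling χ h u = ofAdd (χ h * u.toAdd) :=
  rfl

theorem toAdd_actionNorm_scaling (χ : H →* Rˣ) (h : H) (k : ℕ) (u : Multiplicative R) :
    (actionNorm (scaling χ) h k u).toAdd = (∑ i ∈ range k, (χ h : R) ^ i) * u.toAdd := by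
  simp only [actionNorm, toAdd_prod, scaling_apply, toAdd_ofAdd, sum_mul]
  simp only [map_pow, Units.val_pow_eq_pow_val]

theorem geom_sum_ne_zero_of_pow_eq_one_imp [CharZero R] {t : R} {k : ℕ} (hk : k ≠ 0)
    (ht : t ^ k = 1 → t = 1) : ∑ i ∈ range k, t ^ i ≠ 0 := by
  intro hsum
  have t_eq_one : t = 1 := by
    apply ht
    rw [← sub_eq_zero, ← geom_sum_mul, hsum, zero_mul]
  simp [t_eq_one, hk] at hsum

theorem UniquelyDivisible.semidirectProduct_scaling {K : Type*} [DivisionRing K] [CharZero K]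
    (hH : UniquelyDivisible H) {χ : H →* Kˣ} (hχ : Injective χ) :
    UniquelyDivisible (Multiplicative K ⋊[scaling χ] H) := by
  refine hH.semidirectProduct fun h k hk ↦ ?_
  have eq_one_of_pow (hpow : (χ h : K) ^ k = 1) : (χ h : K) = 1 := by
    have h_pow : h ^ k = 1 := hχ (Units.ext (by simpa using hpow))
    have h_eq_one : h = 1 := hH.pow_left_injective hk (by simpa using h_pow)
    simp [h_eq_one]
  have hsum := geom_sum_ne_zero_of_pow_eq_one_imp hk.ne' eq_one_of_pow
  have norm_eq : actionNorm (scaling χ) h k =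
      ofAdd ∘ ((∑ i ∈ range k, (χ h : K) ^ i) * ·) ∘ toAdd :=
    funext fun u ↦ toAdd.injective (toAdd_actionNorm_scaling χ h k u)
  rw [norm_eq]
  exact ofAdd.bijective.comp ((mulLeft_bijective₀ _ hsum).comp toAdd.bijective)

theorem toAdd_left_pow_mul_inr_mul_pow {χ : H →* Rˣ} (x : Multiplicative R ⋊[scaling χ] H) (c : H)
    (m n : ℕ) :
    (x ^ m * SemidirectProduct.inr c * x ^ n).left.toAdd =
      (∑ i ∈ range m, (χ x.right : R) ^ i +
        χ (x.right ^ m * c) * ∑ i ∈ range n, (χ x.right : R) ^ i) * x.left.toAdd := by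
  rw [semidirectProduct_left_pow_mul_inr_mul_pow, toAdd_mul, scaling_apply, toAdd_ofAdd,
    toAdd_actionNorm_scaling, toAdd_actionNorm_scaling, add_mul, mul_assoc]

end Scaling

theorem pow_mul_inr_mul_pow_ne_of_sum_eq_zero {R H : Type*} [Ring R] [Nontrivial R] [CommGroup H]
    (hH : UniquelyDivisible H) {χ : H →* Rˣ} {h c : H} {m n : ℕ} (hmn : 0 < m + n)
    (hsum : ∑ i ∈ range m, (χ h : R) ^ i + χ (h ^ m * c) * ∑ i ∈ range n, (χ h : R) ^ i = 0)
    (x : Multiplicative R ⋊[scaling χ] H) :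
    x ^ m * SemidirectProduct.inr c * x ^ n ≠ ⟨ofAdd 1, h ^ m * c * h ^ n⟩ := by
  intro hx
  have x_right : x.right = h := by
    have hright := congrArg SemidirectProduct.right hx
    simp only [SemidirectProduct.mul_right, SemidirectProduct.right_inr,
      semidirectProduct_pow_right, mul_right_comm _ c, ← pow_add, mul_left_inj] at hright
    exact hH.pow_left_injective hmn hright
  have hleft := toAdd_left_pow_mul_inr_mul_pow x c m n
  rw [x_right, hsum, zero_mul, hx, toAdd_ofAdd] at hleft
  exact one_ne_zero hleft

section RatCpow

/-- The one-parameter group `q ↦ z ^ q` of rational powers, for the principal branch of the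
logarithm. -/
noncomputable def ratCpow (z : ℂ) (hz : z ≠ 0) : Multiplicative ℚ →* ℂˣ :=
  MonoidHom.toHomUnits
    { toFun q := z ^ (q.toAdd : ℂ)
      map_one' := by simp
      map_mul' p q := by rw [toAdd_mul, Rat.cast_add, Complex.cpow_add _ _ hz] }

theorem coe_ratCpow {z : ℂ} (hz : z ≠ 0) (q : Multiplicative ℚ) :
    (ratCpow z hz q : ℂ) = z ^ (q.toAdd : ℂ) :=
  rfl

theorem coe_ratCpow_ofAdd_one {z : ℂ} (hz : z ≠ 0) : (ratCpow z hz (ofAdd 1) : ℂ) = z := by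
  simp [coe_ratCpow]

theorem norm_ratCpow {z : ℂ} (hz : z ≠ 0) (q : Multiplicative ℚ) :
    ‖(ratCpow z hz q : ℂ)‖ = ‖z‖ ^ (q.toAdd : ℝ) := by
  rw [coe_ratCpow, ← Complex.ofReal_ratCast, Complex.norm_cpow_real]

theorem ratCpow_injective {z : ℂ} (hz : z ≠ 0) (hz_norm : ‖z‖ ≠ 1) :
    Injective (ratCpow z hz) := by
  intro p q hpq
  have hnorm : ‖z‖ ^ (p.toAdd : ℝ) = ‖z‖ ^ (q.toAdd : ℝ) := by
    rw [← norm_ratCpow hz, ← norm_ratCpow hz, hpq]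
  exact toAdd.injective <|
    Rat.cast_injective ((Real.rpow_right_inj (norm_pos_iff.mpr hz) hz_norm).mp hnorm)

end RatCpow

theorem exists_mem_Ioo_geom_sum_sq_add_eq_zero {m n : ℕ} (hm : 0 < m) (hmn : m < n) :
    ∃ z ∈ Set.Ioo (-1 : ℝ) 0,
      ∑ i ∈ range m, (z ^ 2) ^ i + z ^ (2 * m + 1) * ∑ i ∈ range n, (z ^ 2) ^ i = 0 := by
  set f : ℝ → ℝ := fun z ↦
    ∑ i ∈ range m, (z ^ 2) ^ i + z ^ (2 * m + 1) * ∑ i ∈ range n, (z ^ 2) ^ i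
  have hf : ContinuousOn f (Set.Icc (-1) 0) := by fun_prop
  have f_neg_one : f (-1) < 0 := by
    have : f (-1) = m - n := by simp [f, pow_succ, pow_mul, sub_eq_add_neg]
    rw [this, sub_neg]
    exact_mod_cast hmn
  have f_zero : 0 < f 0 := by simp [f, zero_geom_sum, hm.ne']
  exact intermediate_value_Ioo (by norm_num) hf ⟨f_neg_one, f_zero⟩

theorem pow_mul_inv_mul_pow_ne_inv {G : Type*} [Group G] {m n : ℕ} {a b : G}
    (h : ∀ x : G, x ^ m * a * x ^ n ≠ b) (x : G) : x ^ n * a⁻¹ * x ^ m ≠ b⁻¹ := by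
  intro hx
  apply h x⁻¹
  rw [← inv_inj, ← hx]
  group

theorem exists_uniquelyDivisible_forall_pow_mul_pow_ne {m n : ℕ} (hm : 0 < m) (hmn : m < n) :
    ∃ (G : Type) (_ : Group G), UniquelyDivisible G ∧
      ∃ a b : G, ∀ x : G, x ^ m * a * x ^ n ≠ b := by
  obtain ⟨z, ⟨hz_gt, hz_lt⟩, hroot⟩ := exists_mem_Ioo_geom_sum_sq_add_eq_zero hm hmn
  have hz : (z : ℂ) ≠ 0 := Complex.ofReal_ne_zero.mpr hz_lt.ne
  have hz_norm : ‖(z : ℂ)‖ ≠ 1 := by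
    rw [Complex.norm_real, Real.norm_of_nonpos hz_lt.le]
    linarith
  have hℚ := UniquelyDivisible.multiplicative ℚ
  set χ := ratCpow z hz
  set g : Multiplicative ℚ := ofAdd 1
  have χ_pow (k : ℕ) : (χ (g ^ k) : ℂ) = z ^ k := by
    rw [map_pow, Units.val_pow_eq_pow_val, coe_ratCpow_ofAdd_one]
  have hsum : ∑ i ∈ range m, (χ (g ^ 2) : ℂ) ^ i +
      χ ((g ^ 2) ^ m * g) * ∑ i ∈ range n, (χ (g ^ 2) : ℂ) ^ i = 0 := by
    rw [← pow_mul, ← pow_succ, χ_pow, χ_pow]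
    exact_mod_cast hroot
  exact ⟨_, inferInstance, hℚ.semidirectProduct_scaling (ratCpow_injective hz hz_norm), _, _,
    pow_mul_inr_mul_pow_ne_of_sum_eq_zero hℚ (by omega) hsum⟩

/-- For distinct positive integers `m ≠ n`, the word `Xᵐ A Xⁿ` is not universal:
there are a uniquely divisible group `G` and `a b : G` such that `xᵐ a xⁿ = b`
has no solution `x : G`. -/
theorem stmt7 (m n : ℕ) (hm : 0 < m) (hn : 0 < n) (hmn : m ≠ n) :
    ∃ (G : Type) (_ : Group G), UniquelyDivisible G ∧
      ∃ a b : G, ¬ ∃ x : G, x ^ m * a * x ^ n = b := by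
  simp only [not_exists]
  rcases hmn.lt_or_gt with hlt | hgt
  · exact exists_uniquelyDivisible_forall_pow_mul_pow_ne hm hlt
  · obtain ⟨G, hG, hdiv, a, b, hab⟩ := exists_uniquelyDivisible_forall_pow_mul_pow_ne hn hgt
    exact ⟨G, hG, hdiv, a⁻¹, b⁻¹, pow_mul_inv_mul_pow_ne_inv hab⟩
end

section
/- For integers m >= 0 and n >= 1, the word X A^{m+2n} X A^{m+n} X A^m X is not universal: there exist a uniquely divisible group G and elements a, b in G such that the equation x * a^{m+2n} * x * a^{m+n} * x * a^m * x = b has no solution x in G. -/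
/-! The semidirect product of a module `V` over a division ring `K` of characteristic zero with a
uniquely divisible group `Q` acting through a character `χ : Q → Kˣ` is uniquely divisible as soon
as `χ` takes no nontrivial root of unity as a value: the equation for the `V`-component of a
`k`-th root is linear with coefficient `∑ i < k, χ q ^ i ≠ 0`.

If the `Q`-component of `x` is `ξ`, the `V`-component of `x α₁ x α₂ x α₃ x` with `αᵢ ∈ Q` is that
of `x` multiplied by `1 + χ(ξα₁) + χ(ξα₁ξα₂) + χ(ξα₁ξα₂ξα₃)`. Hence the word is not universal once
some `ξ` makes this scalar vanish. Take `Q = ℝ`, `V = ℂ`, `χ t = exp (t log c)`, `a = 1 / n` and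
`ξ = -m / n`: then `ξ a^m`, `ξ a^(m+n)`, `ξ a^(m+2n)` are the reals `0`, `1`, `2`, and the scalar is
`1 + c² + c³ + c³ = (c + 1) (2 c² - c + 1)`. The roots of the quadratic factor have modulus `1/√2`,
so no nonzero real power of such a root has modulus one. -/

theorem geom_sum_ne_zero_of_isOfFinOrder_imp {R : Type*} [Ring R] [CharZero R] {z : R}
    (hz : IsOfFinOrder z → z = 1) {k : ℕ} (hk : k ≠ 0) :
    ∑ i ∈ Finset.range k, z ^ i ≠ 0 := by
  intro hsum
  have hpow : z ^ k = 1 := by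
    rw [← sub_eq_zero, ← geom_sum_mul, hsum, zero_mul]
  obtain rfl : z = 1 := hz (isOfFinOrder_iff_pow_eq_one.2 ⟨k, hk.bot_lt, hpow⟩)
  simp [hk] at hsum

theorem uniquelyDivisible_multiplicative (V : Type*) [AddCommGroup V] [Module ℚ V] :
    UniquelyDivisible (Multiplicative V) := by
  intro b k hk
  have hk' : (k : ℚ) ≠ 0 := Nat.cast_ne_zero.2 hk.ne'
  have pow_eq_iff (x : Multiplicative V) :
      x ^ k = b ↔ x = Multiplicative.ofAdd ((k : ℚ)⁻¹ • b.toAdd) := by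
    rw [← Multiplicative.toAdd.injective.eq_iff, toAdd_pow, ← Nat.cast_smul_eq_nsmul ℚ,
      ← eq_inv_smul_iff₀ hk', ← Multiplicative.toAdd.injective.eq_iff, toAdd_ofAdd]
  exact ⟨_, (pow_eq_iff _).2 rfl, fun x => (pow_eq_iff x).1⟩

section ScalarExtension

variable {K Q : Type*} [DivisionRing K] [Group Q]

/-- The action of `Q` by automorphisms on the additive group of a `K`-vector space `V`, written
multiplicatively, in which `q` multiplies vectors by the scalar `χ q`. -/
def scalarAction (V : Type*) [AddCommGroup V] [Module K V] (χ : Q →* Kˣ) :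
    Q →* MulAut (Multiplicative V) :=
  (MulAutMultiplicative V).symm.toMonoidHom.comp ((DistribMulAction.toAddAut Kˣ V).comp χ)

/-- The semidirect product `V ⋊ Q` in which `Q` acts on the vector space `V` through the
character `χ`. -/
abbrev ScalarExtension (V : Type*) [AddCommGroup V] [Module K V] (χ : Q →* Kˣ) : Type _ :=
  Multiplicative V ⋊[scalarAction V χ] Q

namespace ScalarExtension

open SemidirectProduct

variable {V : Type*} [AddCommGroup V] [Module K V] {χ : Q →* Kˣ}

theorem toAdd_left_mul (x y : ScalarExtension V χ) :
    (x * y).left.toAdd = x.left.toAdd + (χ x.right : K) • y.left.toAdd :=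
  rfl

theorem right_pow (x : ScalarExtension V χ) (k : ℕ) : (x ^ k).right = x.right ^ k :=
  map_pow rightHom x k

theorem toAdd_left_pow (x : ScalarExtension V χ) (k : ℕ) :
    (x ^ k).left.toAdd = (∑ i ∈ Finset.range k, (χ x.right : K) ^ i) • x.left.toAdd := by
  induction k with
  | zero => simp
  | succ k ih =>
    rw [pow_succ, toAdd_left_mul, ih, right_pow, map_pow, Units.val_pow_eq_pow_val,
      Finset.sum_range_succ, add_smul]

theorem uniquelyDivisible [CharZero K] (hQ : UniquelyDivisible Q)
    (hχ : ∀ q, IsOfFinOrder (χ q) → χ q = 1) :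
    UniquelyDivisible (ScalarExtension V χ) := by
  intro b k hk
  obtain ⟨q, hq, hq_unique⟩ := hQ b.right k hk
  set s : K := ∑ i ∈ Finset.range k, (χ q : K) ^ i with hs
  have hs_ne : s ≠ 0 := geom_sum_ne_zero_of_isOfFinOrder_imp
    (fun h => by simpa using hχ q (Units.isOfFinOrder_val.1 h)) hk.ne'
  refine ⟨⟨Multiplicative.ofAdd (s⁻¹ • b.left.toAdd), q⟩, ?_, fun y hy => ?_⟩
  · refine SemidirectProduct.ext (Multiplicative.toAdd.injective ?_) ((right_pow _ k).trans hq)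
    rw [toAdd_left_pow, ← hs, toAdd_ofAdd, smul_inv_smul₀ hs_ne]
  · have hy_right : y.right = q := hq_unique _ ((right_pow y k).symm.trans (congrArg right hy))
    refine SemidirectProduct.ext (Multiplicative.toAdd.injective ?_) hy_right
    rw [← hy, toAdd_left_pow, hy_right, ← hs, toAdd_ofAdd, inv_smul_smul₀ hs_ne]

theorem toAdd_left_word (x : ScalarExtension V χ) (α₁ α₂ α₃ : Q) :
    (x * inr α₁ * x * inr α₂ * x * inr α₃ * x).left.toAdd =
      (1 + χ (x.right * α₁) + χ (x.right * α₁ * x.right * α₂) +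
        χ (x.right * α₁ * x.right * α₂ * x.right * α₃) : K) • x.left.toAdd := by
  simp only [toAdd_left_mul, mul_right, left_inr, right_inr, toAdd_one, smul_zero, add_zero,
    add_smul, one_smul]

theorem exists_forall_word_ne {A : Type*} [CommGroup A] [IsMulTorsionFree A] [Nontrivial V]
    {χ : A →* Kˣ} {α₁ α₂ α₃ ξ : A}
    (hξ : (1 + χ (ξ * α₁) + χ (ξ * α₁ * ξ * α₂) + χ (ξ * α₁ * ξ * α₂ * ξ * α₃) : K) = 0) :
    ∃ b : ScalarExtension V χ, ∀ x, x * inr α₁ * x * inr α₂ * x * inr α₃ * x ≠ b := by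
  obtain ⟨v, hv⟩ := exists_ne (0 : V)
  refine ⟨⟨Multiplicative.ofAdd v, ξ * α₁ * ξ * α₂ * ξ * α₃ * ξ⟩, fun x hx => hv ?_⟩
  have hright : x.right * α₁ * x.right * α₂ * x.right * α₃ * x.right =
      ξ * α₁ * ξ * α₂ * ξ * α₃ * ξ := congrArg right hx
  have collect (η : A) : η * α₁ * η * α₂ * η * α₃ * η = η ^ 4 * (α₁ * α₂ * α₃) := by
    simp only [pow_succ, pow_zero, one_mul]
    ac_rfl
  have hx_right : x.right = ξ := by
    rw [collect, collect, mul_left_inj] at hright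
    exact pow_left_injective four_ne_zero hright
  calc v = (x * inr α₁ * x * inr α₂ * x * inr α₃ * x).left.toAdd := by rw [hx, toAdd_ofAdd]
    _ = 0 := by rw [toAdd_left_word, hx_right, hξ, zero_smul]

end ScalarExtension

end ScalarExtension

/-- The character `t ↦ exp (t ℓ)` of the additive group of real numbers. -/
noncomputable def expCharacter (ℓ : ℂ) : Multiplicative ℝ →* ℂˣ :=
  (Complex.expMonoidHom.comp
    (LinearMap.toSpanSingleton ℝ ℂ ℓ).toAddMonoidHom.toMultiplicative).toHomUnits

theorem expCharacter_apply (ℓ : ℂ) (t : Multiplicative ℝ) :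
    (expCharacter ℓ t : ℂ) = Complex.exp (t.toAdd * ℓ) :=
  rfl

theorem norm_expCharacter (ℓ : ℂ) (t : Multiplicative ℝ) :
    ‖(expCharacter ℓ t : ℂ)‖ = Real.exp (t.toAdd * ℓ.re) := by
  rw [expCharacter_apply, Complex.norm_exp, Complex.re_ofReal_mul]

theorem expCharacter_eq_one_of_isOfFinOrder {ℓ : ℂ} (hℓ : ℓ.re ≠ 0) {t : Multiplicative ℝ}
    (ht : IsOfFinOrder (expCharacter ℓ t)) : expCharacter ℓ t = 1 := by
  have hnorm : ‖(expCharacter ℓ t : ℂ)‖ = 1 := (Units.isOfFinOrder_val.2 ht).norm_eq_one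
  rw [norm_expCharacter, Real.exp_eq_one_iff, mul_eq_zero_iff_right hℓ] at hnorm
  rw [show t = 1 from hnorm, map_one]

theorem exists_re_ne_zero_two_mul_exp_sq_sub_exp_add_one_eq_zero :
    ∃ ℓ : ℂ, ℓ.re ≠ 0 ∧ 2 * Complex.exp ℓ ^ 2 - Complex.exp ℓ + 1 = 0 := by
  set c : ℂ := ⟨1 / 4, √7 / 4⟩ with hc
  have h7 : √7 ^ 2 = 7 := Real.sq_sqrt (by norm_num)
  have hroot : 2 * c ^ 2 - c + 1 = 0 := by
    apply Complex.ext <;> simp [hc, pow_two] <;> linarith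
  have hnorm : ‖c‖ ^ 2 = 1 / 2 := by
    rw [Complex.sq_norm, Complex.normSq_mk]
    linarith
  have hc_ne : c ≠ 0 := by
    intro h
    simp [h] at hroot
  refine ⟨Complex.log c, ?_, by rwa [Complex.exp_log hc_ne]⟩
  rw [Complex.log_re]
  refine Real.log_ne_zero_of_pos_of_ne_one (norm_pos_iff.2 hc_ne) fun h => ?_
  norm_num [h] at hnorm

theorem word_coefficient_expCharacter_eq_zero {ℓ : ℂ}
    (hℓ : 2 * Complex.exp ℓ ^ 2 - Complex.exp ℓ + 1 = 0) {ξ α₁ α₂ α₃ : Multiplicative ℝ}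
    (h₁ : ξ * α₁ = Multiplicative.ofAdd 2) (h₂ : ξ * α₂ = Multiplicative.ofAdd 1)
    (h₃ : ξ * α₃ = 1) :
    (1 + expCharacter ℓ (ξ * α₁) + expCharacter ℓ (ξ * α₁ * ξ * α₂) +
      expCharacter ℓ (ξ * α₁ * ξ * α₂ * ξ * α₃) : ℂ) = 0 := by
  have hone : (expCharacter ℓ (Multiplicative.ofAdd 1) : ℂ) = Complex.exp ℓ := by
    rw [expCharacter_apply, toAdd_ofAdd, Complex.ofReal_one, one_mul]
  have htwo : (expCharacter ℓ (Multiplicative.ofAdd 2) : ℂ) = Complex.exp ℓ ^ 2 := by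
    rw [expCharacter_apply, toAdd_ofAdd, Complex.ofReal_ofNat, ← Complex.exp_nat_mul,
      Nat.cast_ofNat]
  simp only [mul_assoc _ ξ, h₁, h₂, h₃, map_mul, Units.val_mul, hone, htwo, mul_one]
  linear_combination (Complex.exp ℓ + 1) * hℓ

/-- For integers `m ≥ 0` and `n ≥ 1`, the word `X A^{m+2n} X A^{m+n} X A^m X`
is not universal: there are a uniquely divisible group `G` and `a b : G` such that
`x a^{m+2n} x a^{m+n} x a^m x = b` has no solution `x : G`. -/
theorem stmt8 (m n : ℕ) (hn : 1 ≤ n) :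
    ∃ (G : Type) (_ : Group G), UniquelyDivisible G ∧
      ∃ a b : G, ¬ ∃ x : G,
        x * a ^ (m + 2 * n) * x * a ^ (m + n) * x * a ^ m * x = b := by
  obtain ⟨ℓ, hre, hroot⟩ := exists_re_ne_zero_two_mul_exp_sq_sub_exp_add_one_eq_zero
  have hn' : (n : ℝ) ≠ 0 := Nat.cast_ne_zero.2 (Nat.one_le_iff_ne_zero.1 hn)
  let α : Multiplicative ℝ := Multiplicative.ofAdd (1 / n : ℝ)
  let ξ : Multiplicative ℝ := Multiplicative.ofAdd (-m / n : ℝ)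
  have mul_pow_eq (j : ℕ) : ξ * α ^ (m + j * n) = Multiplicative.ofAdd (j : ℝ) := by
    rw [← ofAdd_nsmul, ← ofAdd_add, nsmul_eq_mul]
    congr 1
    push_cast
    field_simp
    ring
  have hcoeff := word_coefficient_expCharacter_eq_zero hroot
    (mul_pow_eq 2) (by simpa using mul_pow_eq 1) (by simpa using mul_pow_eq 0)
  obtain ⟨b, hb⟩ := ScalarExtension.exists_forall_word_ne (V := ℂ) hcoeff
  refine ⟨ScalarExtension ℂ (expCharacter ℓ), inferInstance,
    ScalarExtension.uniquelyDivisible (uniquelyDivisible_multiplicative ℝ)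
      fun _ => expCharacter_eq_one_of_isOfFinOrder hre,
    SemidirectProduct.inr α, b, ?_⟩
  simpa only [← map_pow, not_exists] using hb
end
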